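/- arXiv:2409.04629 — 2 statements merged into one kernel-verified Lean document; each statement's English description precedes it below -/
import Mathlib

section
/- Let p : X̃ → X be a harmonic Galois cover of finite connected graphs with abelian Galois group G of order N. Then the X-specialized Jacobian polynomial of X̃ factors as J_{X̃}(x_e) = (1/N) · ∏_{v ∈ V(X)} |D(v)|^{N/|D(v)|} · J_X(x_e) · ∏_{ρ ∈ Ĝ'} P_{X̃/X,ρ}(x_e), where Ĝ' is the set of nontrivial characters of G, J_X is the Jacobian polynomial of X, and P_{X̃/X,ρ} is the weight polynomial of the ρ-twisted matroid M*(X̃/X, ρ). -/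
/-!
All the polynomials involved are determinants of Laplacians. With conductances `y_e = 1 / x_e`, the
weighted matrix-tree theorem (`JacCover.eval_jacobianPoly`) writes `J_X(x)` as `∏ x_e` times a
reduced determinant of the Laplacian of `X`. In the same way, `P_{X̃/X,ρ}(x)` is `∏ x_e` times the
determinant of the `ρ`-twisted Laplacian restricted to the vertices `v` with `ρ(D(v)) = 1`
(`JacCover.eval_twistedWeightPoly`). Both follow from the Cauchy–Binet formula: a kernel vector of
the twisted incidence matrix is transported along walks by the voltage, so that the bases of the
matroid are the complements of the nonsingular square submatrices (`JacCover.nontriv_iff`,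
`JacCover.isBasis_iff`). The squared determinant of such a submatrix is the product of the component
weights (`JacCover.D_eq_prod`): in a component whose vertices all satisfy `ρ(D(v)) = 1`, exchanging
an edge of the cycle `C` for a vertex on it extracts `|1 - ρ(η(C))|²`, and what remains is a rooted
forest, of determinant `±1` up to units of modulus one.

Functions on `V(X̃)` decompose into `ρ`-isotypic parts. The basis `JacCover.phi`, indexed by the
pairs `(ρ, v)` with `ρ(D(v)) = 1`, is orthogonal for the weights `|D(p(w))|` and block-diagonalizes
the Laplacian of `X̃`, the block of `ρ` being `N` times the `ρ`-twisted Laplacian of `X`. The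
Laplacian of `X̃` is singular because of the block `ρ = 1`; adding the rank-one matrix of the vector
`w ↦ |D(p(w))|`, which only changes that block, removes the kernel of constant functions
(`JacCover.det_cover`); a rank-one perturbation of a Laplacian has determinant an explicit
multiple of the reduced one (`JacCover.det_add_rank_one`). This is where the factors `1 / N` and
`∏_v |D(v)|^{N/|D(v)|}` come from (`JacCover.det_factor`). Finally every edge of `X` has `N` lifts,
which accounts for one factor `∏ x_e` per character.
-/

set_option autoImplicit false
set_option maxHeartbeats 1000000

/-- A graph in the sense of Serre: a finite set of vertices, a finite set of
half-edges with a fixed-point-free involution, and a root map. -/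
structure SerreGraph where
  V : Type
  H : Type
  fintypeV : Fintype V
  fintypeH : Fintype H
  decEqV : DecidableEq V
  decEqH : DecidableEq H
  inv : H → H
  inv_inv : ∀ h, inv (inv h) = h
  inv_ne : ∀ h, inv h ≠ h
  root : H → V

attribute [instance] SerreGraph.fintypeV SerreGraph.fintypeH SerreGraph.decEqV SerreGraph.decEqH

namespace SerreGraph

/-- Edges are orbits `{h, inv h}` of the involution. -/
def Edge (X : SerreGraph) : Type := Quot (fun h h' : X.H => h' = X.inv h)

/-- The edge underlying a half-edge. -/
def edgeOf (X : SerreGraph) (h : X.H) : X.Edge := Quot.mk _ h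

lemma edgeOf_surjective (X : SerreGraph) : Function.Surjective X.edgeOf :=
  fun e => Quot.exists_rep e

lemma edgeOf_inv (X : SerreGraph) (h : X.H) : X.edgeOf (X.inv h) = X.edgeOf h :=
  Quot.sound (X.inv_inv h).symm

instance (X : SerreGraph) : Finite X.Edge := Quot.finite _
noncomputable instance (X : SerreGraph) : Fintype X.Edge := Fintype.ofFinite _
noncomputable instance (X : SerreGraph) : DecidableEq X.Edge := Classical.decEq _

/-- One step of adjacency in the graph obtained by deleting the edges in `F`. -/
def adjStep (X : SerreGraph) (F : Finset X.Edge) (u v : X.V) : Prop :=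
  ∃ h : X.H, X.root h = u ∧ X.root (X.inv h) = v ∧ X.edgeOf h ∉ F

/-- `u` and `v` lie in the same connected component of `X ∖ F`. -/
def compRel (X : SerreGraph) (F : Finset X.Edge) (u v : X.V) : Prop :=
  Relation.ReflTransGen (X.adjStep F) u v

/-- A graph is connected if it is nonempty and any two vertices are joined by a path. -/
def Connected (X : SerreGraph) : Prop :=
  Nonempty X.V ∧ ∀ u v : X.V, X.compRel ∅ u v

/-- The vertex set of the connected component of `v` in `X ∖ F`. -/
noncomputable def compVerts (X : SerreGraph) (F : Finset X.Edge) (v : X.V) : Finset X.V :=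
  (Set.toFinite {u | X.compRel F v u}).toFinset

/-- The set of connected components (as vertex sets) of `X ∖ F`. -/
noncomputable def components (X : SerreGraph) (F : Finset X.Edge) : Finset (Finset X.V) :=
  Finset.univ.image (X.compVerts F)

/-- The edges of `X ∖ F` belonging to a component with vertex set `C`. -/
noncomputable def edgesIn (X : SerreGraph) (F : Finset X.Edge) (C : Finset X.V) :
    Finset X.Edge :=
  (Set.toFinite {e | e ∉ F ∧ ∃ h, X.edgeOf h = e ∧ X.root h ∈ C}).toFinset

/-- A spanning tree: a spanning-connected set of edges of cardinality `|V| - 1`. -/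
def IsSpanningTree (X : SerreGraph) (T : Finset X.Edge) : Prop :=
  (∀ u v : X.V, Relation.ReflTransGen
      (fun a b => ∃ h, X.root h = a ∧ X.root (X.inv h) = b ∧ X.edgeOf h ∈ T) u v) ∧
  T.card + 1 = Fintype.card X.V

noncomputable def spanningTrees (X : SerreGraph) : Finset (Finset X.Edge) :=
  (Set.toFinite {T | X.IsSpanningTree T}).toFinset

/-- The number of spanning trees of `X`; by Kirchhoff's theorem this is `|Jac(X)|`. -/
noncomputable def numSpanningTrees (X : SerreGraph) : ℕ := X.spanningTrees.card

/-- The genus `g(X) = |E(X)| - |V(X)| + 1` of a (connected) graph. -/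
noncomputable def genus (X : SerreGraph) : ℕ :=
  Fintype.card X.Edge + 1 - Fintype.card X.V

/-- The Jacobian polynomial `J_X = ∑_T ∏_{e ∉ T} x_e`, summed over spanning trees. -/
noncomputable def jacobianPoly (X : SerreGraph) (R : Type) [CommRing R] :
    MvPolynomial X.Edge R :=
  ∑ T ∈ X.spanningTrees, ∏ e ∈ Tᶜ, MvPolynomial.X e

/-- A closed path: a nonempty list of half-edges, consecutively matched head-to-tail,
including from the last one back to the first. -/
def IsClosedPath (X : SerreGraph) (l : List X.H) : Prop :=
  l ≠ [] ∧ List.Chain' (fun a b => X.root (X.inv a) = X.root b) (l ++ l.take 1)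

/-- A cycle with pairwise distinct edges, all belonging to `S`. -/
def IsEdgeCycle (X : SerreGraph) (S : Finset X.Edge) (l : List X.H) : Prop :=
  X.IsClosedPath l ∧ (∀ h ∈ l, X.edgeOf h ∈ S) ∧ (l.map X.edgeOf).Nodup

/-- An edge is a loop if its two root vertices coincide. -/
def IsLoop (X : SerreGraph) (e : X.Edge) : Prop :=
  ∃ h, X.edgeOf h = e ∧ X.root h = X.root (X.inv h)

/-- An orientation: a choice of half-edge (source half) for every edge. -/
structure Orientation (X : SerreGraph) where
  pick : X.Edge → X.H
  pick_spec : ∀ e, X.edgeOf (pick e) = e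

/-- The voltage of a half-edge: `η(e)` if it is traversed in the chosen orientation,
`η(e)⁻¹` otherwise. -/
def halfVoltage {G : Type} [Group G] (X : SerreGraph) (o : X.Orientation)
    (η : X.Edge → G) (h : X.H) : G :=
  if h = o.pick (X.edgeOf h) then η (X.edgeOf h) else (η (X.edgeOf h))⁻¹

/-- The (Frobenius) voltage of a path of half-edges. -/
def pathVoltage {G : Type} [Group G] (X : SerreGraph) (o : X.Orientation)
    (η : X.Edge → G) (l : List X.H) : G :=
  (l.map (X.halfVoltage o η)).prod

/-- A morphism of Serre graphs. -/
structure Hom (X Y : SerreGraph) where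
  vMap : X.V → Y.V
  hMap : X.H → Y.H
  hMap_inv : ∀ h, hMap (X.inv h) = Y.inv (hMap h)
  root_hMap : ∀ h, Y.root (hMap h) = vMap (X.root h)

/-- The induced map on edges. -/
def Hom.edgeMap {X Y : SerreGraph} (f : Hom X Y) : X.Edge → Y.Edge :=
  Quot.map f.hMap (fun a b hab => by rw [hab, f.hMap_inv])

/-- A morphism is harmonic with local degree function `d` if for every vertex `v`
upstairs and every half-edge `h` rooted at its image, `d v` is the number of
half-edges at `v` mapping to `h`. -/
structure IsHarmonic {X Y : SerreGraph} (f : Hom X Y) (d : X.V → ℕ) : Prop where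
  pos : ∀ v, 0 < d v
  balanced : ∀ (v : X.V) (h : Y.H), Y.root h = f.vMap v →
    d v = Nat.card {h' : X.H // X.root h' = v ∧ f.hMap h' = h}

/-- A harmonic Galois cover with Galois group `G`: a harmonic morphism of degree `|G|`
together with an equivariant `G`-action that is transitive on vertex fibers and simply
transitive on edge fibers. -/
structure GCover (G : Type) [Group G] [Fintype G] (Xt X : SerreGraph)
    extends Hom Xt X where
  d : Xt.V → ℕ
  harm : IsHarmonic toHom d
  deg_eq : ∀ v : X.V,
    ∑ w ∈ Finset.univ.filter (fun w => toHom.vMap w = v), d w = Fintype.card G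
  smulV : G → Xt.V → Xt.V
  smulH : G → Xt.H → Xt.H
  one_smulV : ∀ w, smulV 1 w = w
  mul_smulV : ∀ g g' w, smulV (g * g') w = smulV g (smulV g' w)
  one_smulH : ∀ h, smulH 1 h = h
  mul_smulH : ∀ g g' h, smulH (g * g') h = smulH g (smulH g' h)
  smulH_inv : ∀ g h, smulH g (Xt.inv h) = Xt.inv (smulH g h)
  root_smulH : ∀ g h, Xt.root (smulH g h) = smulV g (Xt.root h)
  vMap_smulV : ∀ g w, toHom.vMap (smulV g w) = toHom.vMap w
  hMap_smulH : ∀ g h, toHom.hMap (smulH g h) = toHom.hMap h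
  d_smulV : ∀ g w, d (smulV g w) = d w
  vertex_trans : ∀ w w' : Xt.V, toHom.vMap w = toHom.vMap w' → ∃ g, smulV g w = w'
  edge_trans : ∀ ht ht' : Xt.H,
    (toHom.hMap ht' = toHom.hMap ht ∨ toHom.hMap ht' = X.inv (toHom.hMap ht)) →
    ∃ g, smulH g ht = ht' ∨ smulH g ht = Xt.inv ht'
  edge_free : ∀ (g : G) (ht : Xt.H),
    (smulH g ht = ht ∨ smulH g ht = Xt.inv ht) → g = 1

namespace GCover

variable {G : Type} [Group G] [Fintype G] {Xt X : SerreGraph}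

/-- The cover is free if all local degrees are one. -/
def IsFree (c : GCover G Xt X) : Prop := ∀ w, c.d w = 1

/-- The dilation subgroup of a vertex: the common stabilizer of the vertices in its fiber. -/
def dilation (c : GCover G Xt X) (v : X.V) : Set G :=
  {g | ∀ w : Xt.V, c.vMap w = v → c.smulV g w = w}

/-- One step of adjacency upstairs, through half-edges lying over `X ∖ F`. -/
def liftStep (c : GCover G Xt X) (F : Finset X.Edge) (a b : Xt.V) : Prop :=
  ∃ ht : Xt.H, Xt.root ht = a ∧ Xt.root (Xt.inv ht) = b ∧ X.edgeOf (c.hMap ht) ∉ F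

/-- The number of connected components of the preimage of the component of `v` in `X ∖ F`. -/
noncomputable def numLiftComponents (c : GCover G Xt X) (F : Finset X.Edge) (v : X.V) : ℕ :=
  Nat.card (Quot (fun a b : {w : Xt.V // X.compRel F v (c.vMap w)} => c.liftStep F a.1 b.1))

/-- The connected component of `v` in `X ∖ F` is `G`-nontrivial, i.e. the restriction of the
cover over it is not isomorphic to the trivial `G`-cover (equivalently, its preimage does
not have exactly `|G|` connected components). -/
def GNontrivialAt (c : GCover G Xt X) (F : Finset X.Edge) (v : X.V) : Prop :=
  c.numLiftComponents F v ≠ Fintype.card G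

/-- Independent sets of the matroid `M*(X̃/X)`. -/
def Indep (c : GCover G Xt X) (F : Finset X.Edge) : Prop :=
  ∀ v : X.V, c.GNontrivialAt F v

/-- Bases of the matroid `M*(X̃/X)`: maximal independent sets. -/
def IsBasisD (c : GCover G Xt X) (F : Finset X.Edge) : Prop :=
  c.Indep F ∧ ∀ F' : Finset X.Edge, F ⊆ F' → c.Indep F' → F' = F

/-- The dilated `G`-voltage assignment `η` (together with a section `σ` of the vertex map)
represents the cover: for each edge `e`, some lift of `e` runs from `σ(s(e))` to
`η(e) • σ(t(e))`. -/
structure IsVoltageRep (c : GCover G Xt X) (o : X.Orientation) (σ : X.V → Xt.V)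
    (η : X.Edge → G) : Prop where
  sec : ∀ v, c.vMap (σ v) = v
  lift : ∀ e : X.Edge, ∃ ht : Xt.H, c.hMap ht = o.pick e ∧
    Xt.root ht = σ (X.root (o.pick e)) ∧
    Xt.root (Xt.inv ht) = c.smulV (η e) (σ (X.root (X.inv (o.pick e))))

/-- The component of `v` in `X ∖ F` is nontrivial for the cover twisted by the character
`ρ`: it contains a vertex whose dilation group has nontrivial image under `ρ`, or a closed
path whose voltage has nontrivial image under `ρ`. -/
def RhoNontrivialAt (c : GCover G Xt X) (o : X.Orientation) (η : X.Edge → G)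
    (ρ : G →* ℂ) (F : Finset X.Edge) (v : X.V) : Prop :=
  (∃ u : X.V, X.compRel F v u ∧ ∃ g ∈ c.dilation u, ρ g ≠ 1) ∨
  (∃ l : List X.H, X.IsClosedPath l ∧
    (∀ h ∈ l, X.edgeOf h ∉ F ∧ X.compRel F v (X.root h)) ∧
    ρ (X.pathVoltage o η l) ≠ 1)

/-- Bases of the `ρ`-twisted matroid `M*(X̃/X, ρ)`: maximal subsets `F` such that every
connected component of `X ∖ F` is `ρ`-nontrivial. -/
def IsBasisRho (c : GCover G Xt X) (o : X.Orientation) (η : X.Edge → G)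
    (ρ : G →* ℂ) (F : Finset X.Edge) : Prop :=
  (∀ v : X.V, c.RhoNontrivialAt o η ρ F v) ∧
  ∀ F' : Finset X.Edge, F ⊆ F' → (∀ v : X.V, c.RhoNontrivialAt o η ρ F' v) → F' = F

end GCover

/-- The weight of a connected component with edge set `S`: `|1 - ρ(η(C))|²` where `η(C)` is
the voltage of its unique cycle, if it has one, and `1` otherwise (tree components). -/
noncomputable def cycleWeight {G : Type} [Group G] (X : SerreGraph) (o : X.Orientation)
    (η : X.Edge → G) (ρ : G →* ℂ) (S : Finset X.Edge) : ℝ := by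
  classical exact
  if hc : ∃ l, X.IsEdgeCycle S l then
    ‖(1 : ℂ) - ρ (X.pathVoltage o η hc.choose)‖ ^ 2
  else 1

/-- The weight `w_ρ(F)`: the product of the weights of the connected components of `X ∖ F`. -/
noncomputable def basisWeight {G : Type} [Group G] (X : SerreGraph) (o : X.Orientation)
    (η : X.Edge → G) (ρ : G →* ℂ) (F : Finset X.Edge) : ℝ :=
  ∏ C ∈ X.components F, cycleWeight X o η ρ (X.edgesIn F C)

/-- The weight `w(M*(X̃/X, ρ))` of the `ρ`-twisted matroid: the sum of the weights of its
bases. -/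
noncomputable def GCover.twistedWeight {G : Type} [Group G] [Fintype G] {Xt X : SerreGraph}
    (c : GCover G Xt X) (o : X.Orientation) (η : X.Edge → G) (ρ : G →* ℂ) : ℝ :=
  ∑ F ∈ (Set.toFinite {F : Finset X.Edge | c.IsBasisRho o η ρ F}).toFinset,
    basisWeight X o η ρ F

/-- The weight polynomial `P_{X̃/X,ρ} = ∑_F w_ρ(F) ∏_{e ∈ F} x_e` of the `ρ`-twisted
matroid, summed over its bases. -/
noncomputable def GCover.twistedWeightPoly {G : Type} [Group G] [Fintype G]
    {Xt X : SerreGraph} (c : GCover G Xt X) (o : X.Orientation) (η : X.Edge → G)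
    (ρ : G →* ℂ) : MvPolynomial X.Edge ℝ :=
  ∑ F ∈ (Set.toFinite {F : Finset X.Edge | c.IsBasisRho o η ρ F}).toFinset,
    MvPolynomial.C (basisWeight X o η ρ F) * ∏ e ∈ F, MvPolynomial.X e

end SerreGraph
namespace SerreGraph

/-- One contraction step: `a` and `b` are joined by an edge belonging to `F`. -/
def contractStep (X : SerreGraph) (F : Finset X.Edge) (a b : X.V) : Prop :=
  ∃ h, X.edgeOf h ∈ F ∧ X.root h = a ∧ X.root (X.inv h) = b

/-- Data exhibiting `Xc` as the contraction of `X` along the edge set `F`: the vertices of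
`Xc` are the connected components of the subgraph spanned by `F`, and the half-edges of `Xc`
are the half-edges of `X` not lying on `F`. -/
structure ContractionData (X Xc : SerreGraph) (F : Finset X.Edge) where
  vMap : X.V → Xc.V
  hMap : (h : X.H) → X.edgeOf h ∉ F → Xc.H
  hMap_injective : ∀ h₁ hh₁ h₂ hh₂, hMap h₁ hh₁ = hMap h₂ hh₂ → h₁ = h₂
  hMap_surjective : ∀ k : Xc.H, ∃ h hh, hMap h hh = k
  hMap_inv : ∀ h hh hh', hMap (X.inv h) hh' = Xc.inv (hMap h hh)
  root_hMap : ∀ h hh, Xc.root (hMap h hh) = vMap (X.root h)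
  vMap_surjective : Function.Surjective vMap
  vMap_eq_iff : ∀ u v, vMap u = vMap v ↔ Relation.ReflTransGen (X.contractStep F) u v

/-- The valency of a vertex (loops counted twice). -/
noncomputable def valency (X : SerreGraph) (v : X.V) : ℕ :=
  Nat.card {h : X.H // X.root h = v}

/-- The Laplacian matrix `L = Q - A` of a graph. -/
noncomputable def lapl (X : SerreGraph) : Matrix X.V X.V ℤ :=
  Matrix.of fun u v =>
    (if u = v then (X.valency u : ℤ) else 0) -
      (Nat.card {h : X.H // X.root h = u ∧ X.root (X.inv h) = v} : ℤ)

/-- The Laplacian as a homomorphism on divisors. -/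
noncomputable def laplHom (X : SerreGraph) : (X.V → ℤ) →+ (X.V → ℤ) where
  toFun := fun D u => ∑ v, X.lapl u v * D v
  map_zero' := by funext u; simp
  map_add' := by
    intro a b; funext u
    simp [mul_add, Finset.sum_add_distrib]

/-- Divisors of total degree zero. -/
noncomputable def div0 (X : SerreGraph) : AddSubgroup (X.V → ℤ) where
  carrier := {D | ∑ v, D v = 0}
  add_mem' := by
    intro a b ha hb
    simp only [Set.mem_setOf_eq, Pi.add_apply] at *
    simp [Finset.sum_add_distrib, ha, hb]
  zero_mem' := by simp
  neg_mem' := by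
    intro a ha
    simp only [Set.mem_setOf_eq, Pi.neg_apply] at *
    simp [ha]

/-- The subgroup of principal divisors: the image of the Laplacian. -/
noncomputable def principal (X : SerreGraph) : AddSubgroup (X.V → ℤ) :=
  (laplHom X).range

/-- The Jacobian (critical) group `Jac(X) = Div₀(X) / Im L`. -/
noncomputable def jac (X : SerreGraph) : Type :=
  X.div0 ⧸ ((X.principal).addSubgroupOf X.div0)

noncomputable instance (X : SerreGraph) : AddCommGroup X.jac :=
  inferInstanceAs (AddCommGroup (X.div0 ⧸ ((X.principal).addSubgroupOf X.div0)))

/-- The pushforward of divisors along a graph morphism. -/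
noncomputable def pushforward {Xt X : SerreGraph} (f : Hom Xt X) (D : Xt.V → ℤ) :
    X.V → ℤ :=
  fun v => ∑ w ∈ Finset.univ.filter (fun w => f.vMap w = v), D w

/-- The diagonal valency matrix `Q` (over `ℂ`). -/
noncomputable def qMatrix (X : SerreGraph) : Matrix X.V X.V ℂ :=
  Matrix.of fun u v => if u = v then (X.valency u : ℂ) else 0

/-- The `ρ`-twisted adjacency matrix `A_ρ`. -/
noncomputable def twistedAdj {G : Type} [Group G] (X : SerreGraph) (o : X.Orientation)
    (η : X.Edge → G) (ρ : G →* ℂ) : Matrix X.V X.V ℂ :=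
  Matrix.of fun u v =>
    (∑ e ∈ Finset.univ.filter
        (fun e => X.root (o.pick e) = u ∧ X.root (X.inv (o.pick e)) = v), ρ (η e)) +
    (∑ e ∈ Finset.univ.filter
        (fun e => X.root (o.pick e) = v ∧ X.root (X.inv (o.pick e)) = u),
          (starRingEnd ℂ) (ρ (η e)))

/-- The `ρ`-twisted Laplacian `L_ρ = Q - A_ρ`. -/
noncomputable def twistedLapl {G : Type} [Group G] (X : SerreGraph) (o : X.Orientation)
    (η : X.Edge → G) (ρ : G →* ℂ) : Matrix X.V X.V ℂ :=
  X.qMatrix - X.twistedAdj o η ρ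

/-- The reciprocal `ζ_M(s, x_e, X)⁻¹ = det(I - W)` of the metric zeta function, where `W`
is the edge matrix with entries `s^{x_e}` (two-term determinant formula). -/
noncomputable def zetaMInv (X : SerreGraph) (x : X.Edge → ℝ) (s : ℝ) : ℝ :=
  Matrix.det ((1 : Matrix X.H X.H ℝ) - Matrix.of fun a b : X.H =>
    if X.root (X.inv a) = X.root b ∧ b ≠ X.inv a then s ^ (x (X.edgeOf a)) else 0)

/-- The reciprocal of the Ihara zeta function: the metric zeta with all lengths one. -/
noncomputable def zetaInv (X : SerreGraph) (s : ℝ) : ℝ :=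
  X.zetaMInv (fun _ => 1) s

/-- The reciprocal `L_M(s, x_e, X̃/X, ρ)⁻¹ = det(I - W_ρ)` of the metric Artin `L`-function
of the cover defined by the voltage assignment `η` (two-term determinant formula). -/
noncomputable def LMInv {G : Type} [Group G] (X : SerreGraph) (o : X.Orientation)
    (η : X.Edge → G) (ρ : G →* ℂ) (x : X.Edge → ℝ) (s : ℝ) : ℂ :=
  Matrix.det ((1 : Matrix X.H X.H ℂ) - Matrix.of fun a b : X.H =>
    if X.root (X.inv a) = X.root b ∧ b ≠ X.inv a then
      ρ (X.halfVoltage o η a) * ((s ^ (x (X.edgeOf a)) : ℝ) : ℂ)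
    else 0)

/-- The weight polynomial of a free cover defined by the voltage assignment `η`, twisted by
`ρ`: the sum over all `(g-1)`-element edge sets `F` all of whose complementary components
have genus one of `∏ᵢ |1 - ρ(η(Xᵢ))|² ∏_{e ∈ F} x_e`. -/
noncomputable def freeWeightPoly {G : Type} [Group G] (X : SerreGraph)
    (o : X.Orientation) (η : X.Edge → G) (ρ : G →* ℂ) : MvPolynomial X.Edge ℝ :=
  ∑ F ∈ (Set.toFinite {F : Finset X.Edge |
      F.card + Fintype.card X.V = Fintype.card X.Edge ∧
      ∀ C ∈ X.components F, (X.edgesIn F C).card = C.card}).toFinset,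
    MvPolynomial.C (basisWeight X o η ρ F) * ∏ e ∈ F, MvPolynomial.X e

/-- The `j`-th vertex on the chain subdividing the edge `e` into `n e` parts. -/
noncomputable def subVertex (X : SerreGraph) (o : X.Orientation) (n : X.Edge → ℕ)
    (e : X.Edge) (j : ℕ) : X.V ⊕ ((e : X.Edge) × Fin (n e - 1)) :=
  if _h0 : j = 0 then Sum.inl (X.root (o.pick e))
  else if h : j < n e then Sum.inr ⟨e, ⟨j - 1, by omega⟩⟩
  else Sum.inl (X.root (X.inv (o.pick e)))

/-- The graph obtained from `X` by replacing each edge `e` by a chain of `n e` edges. -/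
noncomputable def subdivide (X : SerreGraph) (o : X.Orientation) (n : X.Edge → ℕ) :
    SerreGraph where
  V := X.V ⊕ ((e : X.Edge) × Fin (n e - 1))
  H := (e : X.Edge) × (Fin (n e) × Bool)
  fintypeV := inferInstance
  fintypeH := inferInstance
  decEqV := Classical.decEq _
  decEqH := Classical.decEq _
  inv := fun p => ⟨p.1, (p.2.1, !p.2.2)⟩
  inv_inv := by rintro ⟨e, i, b⟩; simp
  inv_ne := by rintro ⟨e, i, b⟩ hcon; simp at hcon
  root := fun p => X.subVertex o n p.1 (if p.2.2 then (p.2.1 : ℕ) + 1 else (p.2.1 : ℕ))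

end SerreGraph

/-- The cycle graph with `k` vertices, every pair of cyclically adjacent vertices joined by
`M` parallel edges. -/
def cycleGraph (k M : ℕ) : SerreGraph where
  V := Fin k
  H := Fin k × Fin M × Bool
  fintypeV := inferInstance
  fintypeH := inferInstance
  decEqV := inferInstance
  decEqH := inferInstance
  inv := fun p => (p.1, p.2.1, !p.2.2)
  inv_inv := by rintro ⟨i, j, b⟩; simp
  inv_ne := by rintro ⟨i, j, b⟩ hcon; simp at hcon
  root := fun p => if p.2.2 then finRotate k p.1 else p.1

namespace JacCover

/-! ### Gram determinants -/

section

open Matrix Finset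

/-- The matrix `∑_{x ∈ K} y_x b_x^* b_xᵀ`, for a family `b` of row vectors with weights `y`. -/
noncomputable def wgram {ι n : Type} (b : ι → n → ℂ) (y : ι → ℂ) (K : Finset ι) : Matrix n n ℂ :=
  Matrix.of fun u v => ∑ x ∈ K, y x * (star (b x u) * b x v)

/-- The Gram determinant of the rows `b_x`, `x ∈ K`; when `#K = #n` it is the squared modulus of
the determinant of the square matrix with these rows. -/
noncomputable def gram {ι n : Type} [Fintype n] [DecidableEq n] (b : ι → n → ℂ) (K : Finset ι) :
    ℂ := (wgram b 1 K).det

lemma det_sum_rows {ι n : Type} [Fintype n] [DecidableEq n] [DecidableEq ι]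
    (a b : ι → n → ℂ) (K : Finset ι) :
    (Matrix.of fun u v => ∑ x ∈ K, a x u * b x v).det =
      ∑ f ∈ Fintype.piFinset (fun _ : n => K),
        (∏ u, a (f u) u) * (Matrix.of fun u v => b (f u) v).det := by
  have h1 : (Matrix.of fun u v => ∑ x ∈ K, a x u * b x v) =
      (fun u => ∑ x ∈ K, a x u • b x) := by
    ext u v
    simp [Finset.sum_apply]
  have h2 := (Matrix.detRowAlternating (R := ℂ) (n := n)).toMultilinearMap.map_sum_finset
    (fun u x => a x u • b x) (fun _ => K)
  have h3 : (Matrix.of fun u v => ∑ x ∈ K, a x u * b x v).det =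
     (Matrix.detRowAlternating (R := ℂ) (n := n)).toMultilinearMap
      (fun u => ∑ x ∈ K, a x u • b x) := by
    rw [h1]; rfl
  rw [h3, h2]
  refine Finset.sum_congr rfl fun f _ => ?_
  rw [MultilinearMap.map_smul_univ]
  rfl

/-- The Cauchy–Binet formula for a weighted Gram matrix. -/
lemma cauchyBinet {ι n : Type} [Fintype ι] [DecidableEq ι] [Fintype n] [DecidableEq n]
    (b : ι → n → ℂ) (y : ι → ℂ) :
    (wgram b y univ).det =
      ∑ K ∈ powersetCard (Fintype.card n) univ, (∏ x ∈ K, y x) * gram b K := by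
  have hL : (wgram b y univ).det = ∑ f : n → ι, (∏ u, y (f u) * star (b (f u) u)) *
      (Matrix.of fun u v => b (f u) v).det := by
    have := det_sum_rows (fun x u => y x * star (b x u)) b univ
    simp only [mul_assoc] at this
    simpa [wgram] using this
  have hR : ∀ K ∈ powersetCard (Fintype.card n) (univ : Finset ι), (∏ x ∈ K, y x) * gram b K =
      ∑ f : n → ι, if (∀ u, f u ∈ K) then (∏ u, y (f u) * star (b (f u) u)) *
      (Matrix.of fun u v => b (f u) v).det else 0 := by
    intro K hK
    have hK' := (mem_powersetCard.1 hK).2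
    have := det_sum_rows (fun x u => star (b x u)) b K
    have e : gram b K = ∑ f ∈ Fintype.piFinset (fun _ : n => K),
        (∏ u, star (b (f u) u)) * (Matrix.of fun u v => b (f u) v).det := by
      rw [← this]; simp [gram, wgram]
    rw [e, Finset.mul_sum, ← Finset.sum_filter]
    refine Finset.sum_congr (by ext f; simp [Fintype.mem_piFinset]) fun f hf => ?_
    by_cases hi : Function.Injective f
    · have him : univ.image f = K := by
        apply Finset.eq_of_subset_of_card_le
        · intro x hx
          obtain ⟨u, -, rfl⟩ := Finset.mem_image.1 hx
          simpa using (Finset.mem_filter.1 hf).2 u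
        · rw [Finset.card_image_of_injective _ hi, hK', Finset.card_univ]
      rw [← him, Finset.prod_image (fun a _ b _ h => hi h), Finset.prod_mul_distrib, mul_assoc]
    · have : (Matrix.of fun u v => b (f u) v).det = 0 := by
        simp only [Function.Injective, not_forall] at hi
        obtain ⟨i, j, hij, hne⟩ := hi
        exact Matrix.det_zero_of_row_eq hne (by ext v; simp [hij])
      simp [this]
  rw [hL, Finset.sum_congr rfl hR, Finset.sum_comm]
  refine Finset.sum_congr rfl fun f _ => ?_
  by_cases hi : Function.Injective f
  · rw [Finset.sum_eq_single (univ.image f)]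
    · simp
    · intro K hK hne
      rw [if_neg]
      intro hf
      apply hne
      symm
      apply Finset.eq_of_subset_of_card_le
      · intro x hx
        obtain ⟨u, -, rfl⟩ := Finset.mem_image.1 hx
        exact hf u
      · rw [Finset.card_image_of_injective _ hi, (mem_powersetCard.1 hK).2, Finset.card_univ]
    · intro h
      exact absurd (mem_powersetCard.2 ⟨subset_univ _, by
        rw [Finset.card_image_of_injective _ hi, Finset.card_univ]⟩) h
  · have : (Matrix.of fun u v => b (f u) v).det = 0 := by
      simp only [Function.Injective, not_forall] at hi
      obtain ⟨i, j, hij, hne⟩ := hi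
      exact Matrix.det_zero_of_row_eq hne (by ext v; simp [hij])
    simp [this]

/-- For rows enumerated by `f`, the Gram determinant is the squared modulus of the determinant. -/
lemma gram_eq_det {ι n : Type} [Fintype n] [DecidableEq n] [DecidableEq ι]
    (b : ι → n → ℂ) (K : Finset ι) (f : n → ι) (hf : Function.Injective f)
    (hK : univ.image f = K) :
    gram b K = ((‖(Matrix.of fun u v => b (f u) v).det‖ ^ 2 : ℝ) : ℂ) := by
  have h : wgram b 1 K = (Matrix.of fun u v => b (f u) v)ᴴ * (Matrix.of fun u v => b (f u) v) := by
    ext u v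
    simp only [wgram, Matrix.of_apply, Matrix.mul_apply, Matrix.conjTranspose_apply, ← hK]
    rw [Finset.sum_image (fun a _ b _ h => hf h)]
    simp
  rw [gram, h, Matrix.det_mul, Matrix.det_conjTranspose]
  have := Complex.conj_mul' ((Matrix.of fun u v => b (f u) v).det)
  push_cast
  simpa using this

lemma exists_enum {ι n : Type} [Fintype n] [DecidableEq ι]
    (K : Finset ι) (hK : K.card = Fintype.card n) :
    ∃ f : n → ι, Function.Injective f ∧ univ.image f = K := by
  have e : n ≃ K := Fintype.equivOfCardEq (by simp [hK])
  refine ⟨fun u => (e u : ι), fun a b h => e.injective (Subtype.ext h), ?_⟩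
  ext x
  simp only [Finset.mem_image, Finset.mem_univ, true_and]
  constructor
  · rintro ⟨u, rfl⟩; exact (e u).2
  · intro hx; exact ⟨e.symm ⟨x, hx⟩, by simp⟩

/-- A full Gram determinant is nonzero exactly when the rows have no common nonzero kernel vector. -/
lemma gram_ne_zero_iff {ι n : Type} [Fintype n] [DecidableEq n] [DecidableEq ι]
    (b : ι → n → ℂ) (K : Finset ι) (hK : K.card = Fintype.card n) :
    gram b K ≠ 0 ↔ ∀ φ : n → ℂ, (∀ x ∈ K, ∑ v, b x v * φ v = 0) → φ = 0 := by
  obtain ⟨f, hf, hfK⟩ := exists_enum (n := n) K hK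
  rw [gram_eq_det b K f hf hfK]
  have h0 : ((‖(Matrix.of fun u v => b (f u) v).det‖ ^ 2 : ℝ) : ℂ) ≠ 0 ↔
      (Matrix.of fun u v => b (f u) v).det ≠ 0 := by simp
  rw [h0, ne_eq, ← Matrix.exists_mulVec_eq_zero_iff]
  constructor
  · intro h φ hφ
    by_contra hne
    refine h ⟨φ, hne, ?_⟩
    ext u
    have := hφ (f u) (by rw [← hfK]; simp)
    simpa [Matrix.mulVec, dotProduct] using this
  · rintro h ⟨φ, hne, hφ⟩
    refine hne (h φ fun x hx => ?_)
    rw [← hfK] at hx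
    obtain ⟨u, -, rfl⟩ := Finset.mem_image.1 hx
    have := congrFun hφ u
    simpa [Matrix.mulVec, dotProduct] using this

/-- Row replacement: if `∑_{k ∈ K} a_k b_k = c • b_j` with `j ∉ K` and `|a_i| = 1` for some `i ∈ K`,
then the Gram determinant is `|c|²` times the one obtained by exchanging the row `b_i` for `b_j`. -/
lemma gram_replace {ι n : Type} [Fintype n] [DecidableEq n] [DecidableEq ι]
    (b : ι → n → ℂ) (K : Finset ι) (hK : K.card = Fintype.card n)
    (i j : ι) (hi : i ∈ K) (hj : j ∉ K) (a : ι → ℂ) (ha : ‖a i‖ = 1) (c : ℂ)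
    (h : ∀ v, ∑ k ∈ K, a k * b k v = c * b j v) :
    gram b K = ((‖c‖ ^ 2 : ℝ) : ℂ) * gram b (insert j (K.erase i)) := by
  obtain ⟨f, hf, hfK⟩ := exists_enum (n := n) K hK
  obtain ⟨i', -, hi'⟩ : ∃ u ∈ (univ : Finset n), f u = i := by
    rw [← hfK] at hi; exact Finset.mem_image.1 hi
  have hjf : ∀ u, f u ≠ j := fun u hu => hj (by rw [← hfK, ← hu]; simp)
  set g := Function.update f i' j with hg
  have hginj : Function.Injective g := by
    intro u v huv
    by_cases hu : u = i' <;> by_cases hv : v = i'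
    · rw [hu, hv]
    · subst hu; simp [hg, Function.update_of_ne hv] at huv; exact absurd huv.symm (hjf v)
    · subst hv; simp [hg, Function.update_of_ne hu] at huv; exact absurd huv (hjf u)
    · simp [hg, Function.update_of_ne hu, Function.update_of_ne hv] at huv; exact hf huv
  have hgK : univ.image g = insert j (K.erase i) := by
    ext x
    simp only [Finset.mem_image, Finset.mem_univ, true_and, Finset.mem_insert, Finset.mem_erase]
    constructor
    · rintro ⟨u, rfl⟩
      by_cases hu : u = i'
      · left; simp [hg, hu]
      · right
        refine ⟨?_, ?_⟩
        · simp only [hg, Function.update_of_ne hu]; rw [← hi']; exact fun h => hu (hf h)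
        · simp only [hg, Function.update_of_ne hu]; rw [← hfK]; simp
    · rintro (rfl | ⟨hx, hxK⟩)
      · exact ⟨i', by simp [hg]⟩
      · rw [← hfK] at hxK
        obtain ⟨u, -, rfl⟩ := Finset.mem_image.1 hxK
        refine ⟨u, ?_⟩
        have : u ≠ i' := fun h => hx (by rw [h, hi'])
        simp [hg, Function.update_of_ne this]
  rw [gram_eq_det b K f hf hfK, gram_eq_det b _ g hginj hgK]
  set M : Matrix n n ℂ := Matrix.of fun u v => b (f u) v with hM
  have h1 : (M.updateRow i' (∑ k, a (f k) • M k)).det = a (f i') • M.det :=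
    Matrix.det_updateRow_sum M i' (fun k => a (f k))
  have h2 : (∑ k, a (f k) • M k) = c • b j := by
    ext v
    have := h v
    rw [← hfK, Finset.sum_image (fun a _ b _ h => hf h)] at this
    simpa [Finset.sum_apply, hM] using this
  have h3 : M.updateRow i' (b j) = Matrix.of fun u v => b (g u) v := by
    ext u v
    by_cases hu : u = i'
    · subst hu; simp [hg]
    · simp [Matrix.updateRow_ne hu, hg, Function.update_of_ne hu, hM]
  rw [h2, Matrix.det_updateRow_smul, h3, hi'] at h1
  have h4 := congrArg norm h1
  rw [norm_smul, ha, one_mul, norm_mul] at h4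
  rw [← h4]
  push_cast
  ring

end

/-! ### Rank-one perturbations and restricted rows -/

section

open Matrix Finset

/-- A matrix with zero row and column sums, perturbed by the rank-one matrix `c u uᵀ`,
has determinant `c (∑ u)²` times any principal minor of size one less. -/
lemma det_add_rank_one {n : Type} [Fintype n] [DecidableEq n] (L : Matrix n n ℂ)
    (hrow : ∀ i, ∑ j, L i j = 0) (hcol : ∀ j, ∑ i, L i j = 0) (u : n → ℂ) (c : ℂ)
    (hs : ∑ i, u i ≠ 0) (w : n) :
    (L + Matrix.of fun i j => c * (u i * u j)).det =
      c * (∑ i, u i) ^ 2 * (Matrix.of fun i j : {v // v ≠ w} => L i j).det := by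
  set s := ∑ i, u i with hsdef
  set M := L + Matrix.of fun i j => c * (u i * u j) with hM
  let P : Matrix n n ℂ := (1 : Matrix n n ℂ).updateCol w (fun _ => 1)
  let R : Matrix n n ℂ := (1 : Matrix n n ℂ).updateRow w (fun j => if j = w then 1 else - (u j / s))
  have hP : P.det = 1 := by
    rw [← Matrix.cramer_apply, Matrix.cramer_one]; simp
  have hR : R.det = 1 := by
    rw [← Matrix.cramer_transpose_apply, Matrix.transpose_one, Matrix.cramer_one]; simp
  have hMrow : ∀ i, ∑ k, M i k = c * s * u i := by
    intro i
    simp only [hM, Matrix.add_apply, Matrix.of_apply, Finset.sum_add_distrib, hrow, zero_add]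
    rw [← Finset.mul_sum, ← Finset.mul_sum]; ring
  have hMP : M * P = Matrix.of fun i j => if j = w then c * s * u i else M i j := by
    ext i j
    by_cases hj : j = w
    · subst hj
      simp [P, Matrix.mul_apply, hMrow]
    · simp [P, Matrix.mul_apply, hj, Matrix.one_apply]
  have hMT : M * P * R = Matrix.of fun i j => if j = w then c * s * u i else L i j := by
    ext i j
    rw [hMP, Matrix.mul_apply, ← Finset.add_sum_erase _ _ (Finset.mem_univ w)]
    have h1 : ∀ k ∈ univ.erase w, (Matrix.of fun i j => if j = w then c * s * u i else M i j) i k *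
        R k j = if k = j then M i j else 0 := by
      intro k hk
      have hk' := (Finset.mem_erase.1 hk).1
      simp only [R, Matrix.updateRow_ne hk', Matrix.of_apply, Matrix.one_apply, if_neg hk']
      split_ifs with h
      · subst h; simp
      · simp
    rw [Finset.sum_congr rfl h1, Finset.sum_ite_eq']
    by_cases hj : j = w
    · subst hj; simp [R]
    · simp only [R, hj, Matrix.of_apply, if_true, Matrix.updateRow_self, if_false, hM,
        Matrix.add_apply, Finset.mem_erase, ne_eq, not_false_eq_true, Finset.mem_univ, and_self]
      field_simp
      ring
  have hQ : Pᵀ * (M * P * R) = Matrix.of fun i j =>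
      if i = w then (if j = w then c * s ^ 2 else 0) else
        (if j = w then c * s * u i else L i j) := by
    rw [hMT]
    ext i j
    rw [Matrix.mul_apply]
    by_cases hi : i = w
    · subst hi
      by_cases hj : j = i
      · subst hj
        simp [P, ← Finset.mul_sum, ← hsdef]; ring
      · simp [P, hj, hcol]
    · simp [P, hi, Matrix.one_apply]
  have hdet : M.det = (Pᵀ * (M * P * R)).det := by
    simp [Matrix.det_mul, Matrix.det_transpose, hP, hR]
  rw [hdet, hQ, Matrix.twoBlockTriangular_det _ (fun i => i ≠ w), mul_comm]
  · congr 1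
    · have : Unique {a : n // ¬ (a ≠ w)} := ⟨⟨⟨w, by simp⟩⟩, fun a => Subtype.ext (by simpa using a.2)⟩
      rw [Matrix.det_unique]
      have h2 : ((default : {a : n // ¬ (a ≠ w)}) : n) = w := by
        simpa using (default : {a : n // ¬ (a ≠ w)}).2
      simp only [Matrix.toSquareBlockProp, Matrix.toBlock_apply, Matrix.of_apply, h2, if_true]
    · congr 1
      ext i j
      simp [Matrix.toSquareBlockProp, i.2, j.2]
  · intro i hi j hj
    have hi' : i = w := by simpa using hi
    simp [hi', hj]

/-- The rows `b_e` together with the standard basis vectors. -/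
noncomputable def extRows {E n : Type} [DecidableEq n] (b : E → n → ℂ) : E ⊕ n → n → ℂ
  | Sum.inl e => b e
  | Sum.inr v => Pi.single v 1

/-- A Gram determinant of restricted rows equals the full-size Gram determinant obtained by
adjoining the basis vectors at the deleted coordinates. -/
lemma gram_restrict {E n : Type} [Fintype n] [DecidableEq n] [DecidableEq E]
    (b : E → n → ℂ) (A : Finset n) (S : Finset E)
    (hS : S.card = A.card) :
    gram (fun e (a : {v // v ∈ A}) => b e a) S = gram (extRows b) (S.disjSum Aᶜ) := by
  obtain ⟨f, hf, hfS⟩ := exists_enum (n := {v // v ∈ A}) S (by simp [hS])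
  let g : n → E ⊕ n := fun v => if h : v ∈ A then Sum.inl (f ⟨v, h⟩) else Sum.inr v
  have hg : Function.Injective g := by
    intro u v huv
    by_cases hu : u ∈ A <;> by_cases hv : v ∈ A <;> simp [g, hu, hv] at huv
    · simpa using hf huv
    · exact huv
  have hgK : univ.image g = S.disjSum Aᶜ := by
    ext x
    simp only [Finset.mem_image, Finset.mem_univ, true_and, Finset.mem_disjSum, Finset.mem_compl]
    constructor
    · rintro ⟨v, rfl⟩
      by_cases hv : v ∈ A
      · left; exact ⟨f ⟨v, hv⟩, by rw [← hfS]; simp, by simp [g, hv]⟩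
      · right; exact ⟨v, hv, by simp [g, hv]⟩
    · rintro (⟨e, he, rfl⟩ | ⟨v, hv, rfl⟩)
      · rw [← hfS] at he
        obtain ⟨u, -, rfl⟩ := Finset.mem_image.1 he
        exact ⟨u, by simp [g]⟩
      · exact ⟨v, by simp [g, hv]⟩
  rw [gram_eq_det _ S f hf hfS, gram_eq_det _ _ g hg hgK,
    Matrix.twoBlockTriangular_det _ (fun v => v ∈ A)]
  · have h1 : (Matrix.toSquareBlockProp (Matrix.of fun u v => extRows b (g u) v)
        (fun i => ¬ i ∈ A)) = 1 := by
      ext i j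
      have hi := i.2
      simp [Matrix.toSquareBlockProp, g, i.2, extRows, Matrix.one_apply, Pi.single_apply,
        Subtype.ext_iff, eq_comm]
    have h2 : (Matrix.toSquareBlockProp (Matrix.of fun u v => extRows b (g u) v)
        (fun i => i ∈ A)) = Matrix.of fun u (v : {v // v ∈ A}) => b (f u) v := by
      ext i j
      simp [Matrix.toSquareBlockProp, g, i.2, extRows]
    rw [h1, h2, Matrix.det_one, mul_one]
    congr!
  · intro i hi j hj
    have : j ≠ i := fun h => hi (h ▸ hj)
    simp [g, hi, extRows, this]

end

/-! ### Twisted incidence matrices and walks -/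

section

open Matrix Finset SerreGraph

lemma edgeOf_eq_iff (X : SerreGraph) (h k : X.H) :
    X.edgeOf h = X.edgeOf k ↔ k = h ∨ k = X.inv h := by
  constructor
  · intro hk
    have := Quot.eqvGen_exact hk
    induction this with
    | rel x y hxy => exact Or.inr hxy
    | refl x => exact Or.inl rfl
    | symm x y _ ih =>
      rcases ih (Quot.eqvGen_sound (by assumption)) with h | h
      · exact Or.inl h.symm
      · right; rw [h, X.inv_inv]
    | trans x y w hxy hyw ih1 ih2 =>
      rcases ih1 (Quot.eqvGen_sound hxy) with h | h <;>
        rcases ih2 (Quot.eqvGen_sound hyw) with h' | h'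
      · left; rw [h', h]
      · right; rw [h', h]
      · right; rw [h', h]
      · left; rw [h', h, X.inv_inv]
  · rintro (rfl | rfl)
    · rfl
    · exact (X.edgeOf_inv h).symm

lemma eq_pick_or (X : SerreGraph) (o : X.Orientation) (h : X.H) :
    h = o.pick (X.edgeOf h) ∨ h = X.inv (o.pick (X.edgeOf h)) :=
  (edgeOf_eq_iff X _ _).1 (o.pick_spec _)

lemma inv_pick_ne (X : SerreGraph) (o : X.Orientation) (e : X.Edge) :
    X.inv (o.pick e) ≠ o.pick e := X.inv_ne _

/-- The value of a voltage `z` on a half-edge: `z_e` on the half-edge picked by the orientation and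
`z_e⁻¹` on its inverse. -/
noncomputable def hz (X : SerreGraph) (o : X.Orientation) (z : X.Edge → ℂ) (h : X.H) : ℂ :=
  if h = o.pick (X.edgeOf h) then z (X.edgeOf h) else (z (X.edgeOf h))⁻¹

lemma hz_pick (X : SerreGraph) (o : X.Orientation) (z : X.Edge → ℂ) (e : X.Edge) :
    hz X o z (o.pick e) = z e := by
  simp [hz, o.pick_spec]

lemma hz_inv_pick (X : SerreGraph) (o : X.Orientation) (z : X.Edge → ℂ) (e : X.Edge) :
    hz X o z (X.inv (o.pick e)) = (z e)⁻¹ := by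
  simp [hz, o.pick_spec, X.edgeOf_inv, inv_pick_ne]

lemma hz_inv (X : SerreGraph) (o : X.Orientation) (z : X.Edge → ℂ) (h : X.H) :
    hz X o z (X.inv h) = (hz X o z h)⁻¹ := by
  rcases eq_pick_or X o h with h' | h' <;> rw [h']
  · rw [hz_pick, hz_inv_pick]
  · rw [X.inv_inv, hz_pick, hz_inv_pick, _root_.inv_inv]

lemma hz_ne_zero (X : SerreGraph) (o : X.Orientation) (z : X.Edge → ℂ) (hz0 : ∀ e, z e ≠ 0)
    (h : X.H) : hz X o z h ≠ 0 := by
  unfold hz; split_ifs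
  · exact hz0 _
  · exact inv_ne_zero (hz0 _)

lemma norm_hz (X : SerreGraph) (o : X.Orientation) (z : X.Edge → ℂ) (hz1 : ∀ e, ‖z e‖ = 1)
    (h : X.H) : ‖hz X o z h‖ = 1 := by
  unfold hz; split_ifs
  · exact hz1 _
  · rw [norm_inv, hz1, inv_one]

/-- The row of the twisted incidence matrix at the edge `e`: `δ_{s(e)} - z_e δ_{t(e)}`. -/
noncomputable def row (X : SerreGraph) (o : X.Orientation) (z : X.Edge → ℂ) (e : X.Edge)
    (v : X.V) : ℂ :=
  (if X.root (o.pick e) = v then 1 else 0) - z e * (if X.root (X.inv (o.pick e)) = v then 1 else 0)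

lemma sum_row (X : SerreGraph) (o : X.Orientation) (z : X.Edge → ℂ) (e : X.Edge) (φ : X.V → ℂ) :
    ∑ v, row X o z e v * φ v =
      φ (X.root (o.pick e)) - z e * φ (X.root (X.inv (o.pick e))) := by
  simp [row, sub_mul, Finset.sum_sub_distrib]

/-- The row of a half-edge, `δ_{r(h)} - z_h δ_{r(h̄)}`, is a unit multiple of that of its edge. -/
lemma half_row (X : SerreGraph) (o : X.Orientation) (z : X.Edge → ℂ) (hz0 : ∀ e, z e ≠ 0)
    (h : X.H) : ∃ c : ℂ, (c = 1 ∨ c = - (z (X.edgeOf h))⁻¹) ∧ ∀ v,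
      c * row X o z (X.edgeOf h) v =
      (if X.root h = v then 1 else 0) - hz X o z h * (if X.root (X.inv h) = v then 1 else 0) := by
  rcases eq_pick_or X o h with h' | h'
  · refine ⟨1, Or.inl rfl, fun v => ?_⟩
    have : hz X o z h = z (X.edgeOf h) := by
      conv_lhs => rw [h', hz_pick]
    rw [this, row, ← h', one_mul]
  · refine ⟨- (z (X.edgeOf h))⁻¹, Or.inr rfl, fun v => ?_⟩
    have h1 : hz X o z h = (z (X.edgeOf h))⁻¹ := by
      conv_lhs => rw [h', hz_inv_pick]
    have h2 : X.inv h = o.pick (X.edgeOf h) := by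
      conv_lhs => rw [h', X.inv_inv]
    rw [h1, row, ← h2, X.inv_inv]
    have := hz0 (X.edgeOf h)
    field_simp
    ring

/-- A vector `φ` lies in the kernel of the twisted incidence matrix of `X ∖ F`, and vanishes
outside `A`. -/
def Kern (X : SerreGraph) (o : X.Orientation) (z : X.Edge → ℂ) (F : Finset X.Edge)
    (A : Finset X.V) (φ : X.V → ℂ) : Prop :=
  (∀ e ∉ F, φ (X.root (o.pick e)) = z e * φ (X.root (X.inv (o.pick e)))) ∧ ∀ v ∉ A, φ v = 0

lemma Kern.half {X : SerreGraph} {o : X.Orientation} {z : X.Edge → ℂ} (hz0 : ∀ e, z e ≠ 0)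
    {F : Finset X.Edge} {A : Finset X.V} {φ : X.V → ℂ} (hφ : Kern X o z F A φ) (h : X.H)
    (hh : X.edgeOf h ∉ F) : φ (X.root h) = hz X o z h * φ (X.root (X.inv h)) := by
  have := hφ.1 _ hh
  rcases eq_pick_or X o h with h' | h'
  · rw [← h'] at this
    rw [this]; congr 1
    conv_rhs => rw [h', hz_pick]
  · have h2 : X.inv h = o.pick (X.edgeOf h) := by
      conv_lhs => rw [h', X.inv_inv]
    have h1 : hz X o z h = (z (X.edgeOf h))⁻¹ := by
      conv_lhs => rw [h', hz_inv_pick]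
    rw [h1, h2, this, ← h', ← mul_assoc, inv_mul_cancel₀ (hz0 _), one_mul]

/-- The rows attached to `(F, A)`: edges outside `F` and basis vectors outside `A`. -/
noncomputable def rowSet (X : SerreGraph) (F : Finset X.Edge) (A : Finset X.V) :
    Finset (X.Edge ⊕ X.V) := Fᶜ.disjSum Aᶜ

/-- The squared determinant of the twisted incidence matrix with rows `E ∖ F` and columns `A`,
written as a full-size Gram determinant. -/
noncomputable def D (X : SerreGraph) (o : X.Orientation) (z : X.Edge → ℂ) (F : Finset X.Edge)
    (A : Finset X.V) : ℂ := gram (extRows (row X o z)) (rowSet X F A)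

lemma card_rowSet (X : SerreGraph) (F : Finset X.Edge) (A : Finset X.V) :
    (rowSet X F A).card = Fintype.card X.V ↔ Fᶜ.card = A.card := by
  rw [rowSet, Finset.card_disjSum, ← Finset.card_add_card_compl A]
  omega

lemma kern_iff (X : SerreGraph) (o : X.Orientation) (z : X.Edge → ℂ) (F : Finset X.Edge)
    (A : Finset X.V) (φ : X.V → ℂ) : Kern X o z F A φ ↔
      ∀ x ∈ rowSet X F A, ∑ v, extRows (row X o z) x v * φ v = 0 := by
  constructor
  · rintro ⟨h1, h2⟩ x hx
    rcases x with e | v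
    · simp only [rowSet, Finset.inl_mem_disjSum, Finset.mem_compl] at hx
      simp only [extRows, sum_row, h1 e hx, sub_self]
    · simp only [rowSet, Finset.inr_mem_disjSum, Finset.mem_compl] at hx
      simp [extRows, Pi.single_apply, h2 v hx]
  · intro h
    refine ⟨fun e he => ?_, fun v hv => ?_⟩
    · have := h (Sum.inl e) (by simpa [rowSet] using he)
      simp only [extRows, sum_row] at this
      exact sub_eq_zero.1 this
    · have := h (Sum.inr v) (by simpa [rowSet] using hv)
      simpa [extRows, Pi.single_apply] using this

lemma D_ne_zero_iff (X : SerreGraph) (o : X.Orientation) (z : X.Edge → ℂ) (F : Finset X.Edge)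
    (A : Finset X.V) (hc : Fᶜ.card = A.card) :
    D X o z F A ≠ 0 ↔ ∀ φ, Kern X o z F A φ → φ = 0 := by
  rw [D, gram_ne_zero_iff _ _ ((card_rowSet X F A).2 hc)]
  simp only [kern_iff]

/-- `l` is a walk from `u` to `v` in `X ∖ F`. -/
def IsWalk (X : SerreGraph) (F : Finset X.Edge) : X.V → List X.H → X.V → Prop
  | u, [], v => u = v
  | u, h :: l, v => X.root h = u ∧ X.edgeOf h ∉ F ∧ IsWalk X F (X.root (X.inv h)) l v

lemma isWalk_append (X : SerreGraph) (F : Finset X.Edge) (u v : X.V) (a b : List X.H) :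
    IsWalk X F u (a ++ b) v ↔ ∃ w, IsWalk X F u a w ∧ IsWalk X F w b v := by
  induction a generalizing u with
  | nil => simp [IsWalk]
  | cons h a ih =>
    simp only [List.cons_append, IsWalk, ih]
    constructor
    · rintro ⟨h1, h2, w, h3, h4⟩; exact ⟨w, ⟨h1, h2, h3⟩, h4⟩
    · rintro ⟨w, ⟨h1, h2, h3⟩, h4⟩; exact ⟨h1, h2, w, h3, h4⟩

lemma compRel_symm (X : SerreGraph) (F : Finset X.Edge) {u v : X.V} (h : X.compRel F u v) :
    X.compRel F v u := by
  induction h with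
  | refl => exact Relation.ReflTransGen.refl
  | tail _ hs ih =>
    obtain ⟨k, h1, h2, h3⟩ := hs
    exact Relation.ReflTransGen.head ⟨X.inv k, h2, by rw [X.inv_inv, h1], by rwa [X.edgeOf_inv]⟩ ih

lemma compRel_trans (X : SerreGraph) (F : Finset X.Edge) {u v w : X.V} (h : X.compRel F u v)
    (h' : X.compRel F v w) : X.compRel F u w := Relation.ReflTransGen.trans h h'

lemma compRel_step (X : SerreGraph) (F : Finset X.Edge) (h : X.H) (hF : X.edgeOf h ∉ F) :
    X.compRel F (X.root h) (X.root (X.inv h)) :=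
  Relation.ReflTransGen.single ⟨h, rfl, rfl, hF⟩

lemma IsWalk.compRel {X : SerreGraph} {F : Finset X.Edge} {u v : X.V} {l : List X.H}
    (h : IsWalk X F u l v) : X.compRel F u v := by
  induction l generalizing u with
  | nil => rw [show u = v from h]; exact Relation.ReflTransGen.refl
  | cons k l ih =>
    obtain ⟨rfl, h2, h3⟩ := h
    exact compRel_trans X F (compRel_step X F k h2) (ih h3)

lemma exists_walk {X : SerreGraph} {F : Finset X.Edge} {u v : X.V}
    (h : X.compRel F u v) : ∃ l, IsWalk X F u l v := by
  induction h using Relation.ReflTransGen.head_induction_on with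
  | refl => exact ⟨[], rfl⟩
  | head hs _ ih =>
    obtain ⟨k, h1, h2, h3⟩ := hs
    obtain ⟨l, hl⟩ := ih
    exact ⟨k :: l, h1, h3, by rwa [h2]⟩

lemma IsWalk.mem {X : SerreGraph} {F : Finset X.Edge} {u v : X.V} {l : List X.H}
    (h : IsWalk X F u l v) : ∀ k ∈ l, X.edgeOf k ∉ F ∧ X.compRel F u (X.root k) := by
  induction l generalizing u with
  | nil => simp
  | cons k l ih =>
    obtain ⟨rfl, h2, h3⟩ := h
    intro k' hk'
    rcases List.mem_cons.1 hk' with rfl | hk'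
    · exact ⟨h2, Relation.ReflTransGen.refl⟩
    · exact ⟨(ih h3 k' hk').1, compRel_trans X F (compRel_step X F k h2) (ih h3 k' hk').2⟩

lemma IsWalk.mono {X : SerreGraph} {F F' : Finset X.Edge} {u v : X.V} {l : List X.H}
    (h : IsWalk X F u l v) (h' : ∀ k ∈ l, X.edgeOf k ∉ F') : IsWalk X F' u l v := by
  induction l generalizing u with
  | nil => exact h
  | cons k l ih =>
    obtain ⟨rfl, h2, h3⟩ := h
    exact ⟨rfl, h' k (by simp), ih h3 fun k' hk' => h' k' (by simp [hk'])⟩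

lemma IsWalk.reverse {X : SerreGraph} {F : Finset X.Edge} {u v : X.V} {l : List X.H}
    (h : IsWalk X F u l v) : IsWalk X F v (l.map X.inv).reverse u := by
  induction l generalizing u with
  | nil => exact Eq.symm h
  | cons k l ih =>
    obtain ⟨rfl, h2, h3⟩ := h
    simp only [List.map_cons, List.reverse_cons]
    rw [isWalk_append]
    exact ⟨_, ih h3, rfl, by rwa [X.edgeOf_inv], by rw [X.inv_inv]; rfl⟩

/-- The total voltage of a list of half-edges. -/
noncomputable def zprod (X : SerreGraph) (o : X.Orientation) (z : X.Edge → ℂ) (l : List X.H) : ℂ :=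
  (l.map (hz X o z)).prod

lemma zprod_reverse (X : SerreGraph) (o : X.Orientation) (z : X.Edge → ℂ) (l : List X.H) :
    zprod X o z (l.map X.inv).reverse = (zprod X o z l)⁻¹ := by
  induction l with
  | nil => simp [zprod]
  | cons k l ih =>
    have h1 : zprod X o z ((k :: l).map X.inv).reverse =
        zprod X o z (l.map X.inv).reverse * hz X o z (X.inv k) := by
      simp [zprod]
    rw [h1, ih, hz_inv]
    simp [zprod, mul_comm]

lemma zprod_append (X : SerreGraph) (o : X.Orientation) (z : X.Edge → ℂ) (a b : List X.H) :
    zprod X o z (a ++ b) = zprod X o z a * zprod X o z b := by simp [zprod]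

lemma zprod_cons (X : SerreGraph) (o : X.Orientation) (z : X.Edge → ℂ) (h : X.H) (b : List X.H) :
    zprod X o z (h :: b) = hz X o z h * zprod X o z b := by simp [zprod]

lemma zprod_ne_zero (X : SerreGraph) (o : X.Orientation) (z : X.Edge → ℂ) (hz0 : ∀ e, z e ≠ 0)
    (l : List X.H) : zprod X o z l ≠ 0 := by
  rw [zprod]
  apply List.prod_ne_zero
  simp only [List.mem_map, not_exists, not_and]
  exact fun h _ => hz_ne_zero X o z hz0 h

/-- Kernel vectors are transported along walks by the voltage. -/
lemma Kern.walk {X : SerreGraph} {o : X.Orientation} {z : X.Edge → ℂ} (hz0 : ∀ e, z e ≠ 0)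
    {F : Finset X.Edge} {A : Finset X.V} {φ : X.V → ℂ} (hφ : Kern X o z F A φ) {u v : X.V}
    {l : List X.H} (hl : IsWalk X F u l v) : φ u = zprod X o z l * φ v := by
  induction l generalizing u with
  | nil => rw [show u = v from hl]; simp [zprod]
  | cons k l ih =>
    obtain ⟨rfl, h2, h3⟩ := hl
    rw [hφ.half hz0 k h2, ih h3, zprod_cons, mul_assoc]

/-- The component of `v` in `X ∖ F` contains a vertex outside `A` or a closed walk with
nontrivial voltage. -/
def Nontriv (X : SerreGraph) (o : X.Orientation) (z : X.Edge → ℂ) (F : Finset X.Edge)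
    (A : Finset X.V) (v : X.V) : Prop :=
  (∃ u, X.compRel F v u ∧ u ∉ A) ∨
    ∃ u l, X.compRel F v u ∧ IsWalk X F u l u ∧ zprod X o z l ≠ 1

/-- The twisted incidence matrix has trivial kernel exactly when all components are nontrivial:
a kernel vector is transported along walks by the voltage, so it is killed by a vertex outside `A`
and by a closed walk of nontrivial voltage, while on a trivial component transport is
path-independent and defines a nonzero kernel vector. -/
lemma nontriv_iff (X : SerreGraph) (o : X.Orientation) (z : X.Edge → ℂ) (hz0 : ∀ e, z e ≠ 0)
    (F : Finset X.Edge) (A : Finset X.V) :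
    (∀ v, Nontriv X o z F A v) ↔ ∀ φ, Kern X o z F A φ → φ = 0 := by
  constructor
  · intro h φ hφ
    ext v
    rcases h v with ⟨u, hu, huA⟩ | ⟨u, l, hu, hl, hne⟩
    · obtain ⟨l, hl⟩ := exists_walk hu
      rw [hφ.walk hz0 hl, hφ.2 u huA]; simp
    · obtain ⟨m, hm⟩ := exists_walk hu
      have h1 := hφ.walk hz0 hl
      have h2 : φ u = 0 := by
        by_contra h0
        exact hne (mul_right_cancel₀ h0 (by rw [← h1, one_mul]))
      rw [hφ.walk hz0 hm, h2]; simp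
  · intro h v
    by_contra hv
    simp only [Nontriv, not_or, not_exists, not_and, not_not] at hv
    obtain ⟨hv1, hv2⟩ := hv
    have uniq : ∀ u l l', IsWalk X F u l v → IsWalk X F u l' v →
        zprod X o z l = zprod X o z l' := by
      intro u l l' hl hl'
      have := hv2 u (l ++ (l'.map X.inv).reverse) (compRel_symm X F hl.compRel)
        ((isWalk_append X F _ _ _ _).2 ⟨v, hl, hl'.reverse⟩)
      rw [zprod_append, zprod_reverse] at this
      field_simp [zprod_ne_zero X o z hz0 l'] at this
      exact this
    classical
    let φ : X.V → ℂ := fun u => if h : ∃ l, IsWalk X F u l v then zprod X o z h.choose else 0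
    have hφ : ∀ u l, IsWalk X F u l v → φ u = zprod X o z l := by
      intro u l hl
      have hex : ∃ l, IsWalk X F u l v := ⟨l, hl⟩
      simp only [φ, dif_pos hex]
      exact uniq u _ _ hex.choose_spec hl
    have hφ0 : ∀ u, (¬ ∃ l, IsWalk X F u l v) → φ u = 0 := fun u hu => by simp only [φ, dif_neg hu]
    have hk : Kern X o z F A φ := by
      refine ⟨fun e he => ?_, fun u hu => ?_⟩
      · by_cases hex : ∃ l, IsWalk X F (X.root (X.inv (o.pick e))) l v
        · obtain ⟨l, hl⟩ := hex
          rw [hφ _ l hl, hφ _ (o.pick e :: l) ⟨rfl, by rwa [o.pick_spec], hl⟩, zprod_cons, hz_pick]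
        · rw [hφ0 _ hex, hφ0 _, mul_zero]
          rintro ⟨l, hl⟩
          exact hex ⟨X.inv (o.pick e) :: l, rfl, by rwa [X.edgeOf_inv, o.pick_spec], by
            rwa [X.inv_inv]⟩
      · apply hφ0
        rintro ⟨l, hl⟩
        exact hu (hv1 u (compRel_symm X F hl.compRel))
    have h1 := congrFun (h φ hk) v
    rw [hφ v [] rfl] at h1
    simp [zprod] at h1

/-- A closed walk of nontrivial voltage contains a nonempty closed walk with distinct edges. -/
lemma exists_simple {X : SerreGraph} {o : X.Orientation} {z : X.Edge → ℂ} (hz0 : ∀ e, z e ≠ 0)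
    {F : Finset X.Edge} : ∀ (n : ℕ) (u : X.V) (l : List X.H), l.length ≤ n → IsWalk X F u l u →
      zprod X o z l ≠ 1 → ∃ u' l', IsWalk X F u' l' u' ∧ l' ≠ [] ∧ (l'.map X.edgeOf).Nodup ∧
        ∀ h ∈ l', h ∈ l := by
  have dup : ∀ l : List X.H, ¬ (l.map X.edgeOf).Nodup → ∃ a b c h k, l = a ++ h :: (b ++ k :: c) ∧
      X.edgeOf h = X.edgeOf k := by
    intro l
    induction l with
    | nil => intro h; simp at h
    | cons h l ih =>
      intro hn
      rw [List.map_cons, List.nodup_cons, not_and_or, not_not] at hn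
      rcases hn with hn | hn
      · obtain ⟨k, hk, hk'⟩ := List.mem_map.1 hn
        obtain ⟨b, c, rfl⟩ := List.append_of_mem hk
        exact ⟨[], b, c, h, k, rfl, hk'.symm⟩
      · obtain ⟨a, b, c, h', k, rfl, he⟩ := ih hn
        exact ⟨h :: a, b, c, h', k, rfl, he⟩
  intro n
  induction n with
  | zero =>
    intro u l hl _ h1
    have : l = [] := List.length_eq_zero_iff.1 (by omega)
    subst this; simp [zprod] at h1
  | succ n ih =>
    intro u l hln hl h1
    by_cases hnd : (l.map X.edgeOf).Nodup
    · refine ⟨u, l, hl, ?_, hnd, fun h hh => hh⟩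
      rintro rfl; simp [zprod] at h1
    · obtain ⟨a, b, c, h, k, rfl, he⟩ := dup l hnd
      obtain ⟨w, ha, hw, hhF, hbc⟩ := (isWalk_append X F _ _ _ _).1 hl
      obtain ⟨w', hb, hk, hkF, hc⟩ := (isWalk_append X F _ _ _ _).1 hbc
      subst hw hk
      simp only [List.length_append, List.length_cons] at hln
      simp only [zprod_append, zprod_cons] at h1
      rcases (edgeOf_eq_iff X h k).1 he with rfl | rfl
      · -- the edge is traversed twice in the same direction: split off `k b`
        by_cases h2 : zprod X o z (k :: b) = 1
        · obtain ⟨u', l', q1, q2, q3, q4⟩ := ih u (a ++ k :: c) (by simp; omega)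
            ((isWalk_append X F _ _ _ _).2 ⟨_, ha, rfl, hhF, hc⟩) (by
              rw [zprod_cons] at h2
              rw [zprod_append, zprod_cons]
              intro h3; apply h1
              calc _ = (zprod X o z a * (hz X o z k * zprod X o z c)) *
                  (hz X o z k * zprod X o z b) := by ring
                _ = 1 := by rw [h3, h2, one_mul])
          refine ⟨u', l', q1, q2, q3, fun x hx => ?_⟩
          have := q4 x hx
          simp only [List.mem_append, List.mem_cons] at this ⊢
          tauto
        · obtain ⟨u', l', q1, q2, q3, q4⟩ := ih _ (k :: b) (by simp; omega)
            ⟨rfl, hhF, hb⟩ h2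
          refine ⟨u', l', q1, q2, q3, fun x hx => ?_⟩
          have := q4 x hx
          simp only [List.mem_append, List.mem_cons] at this ⊢
          tauto
      · -- the edge is traversed in opposite directions: split off `b`
        rw [X.inv_inv] at hc
        have h0 := hz_ne_zero X o z hz0 h
        by_cases h2 : zprod X o z b = 1
        · obtain ⟨u', l', q1, q2, q3, q4⟩ := ih u (a ++ c) (by simp; omega)
            ((isWalk_append X F _ _ _ _).2 ⟨_, ha, hc⟩) (by
              rw [zprod_append]
              intro h3; apply h1
              rw [h2, hz_inv, one_mul, ← mul_assoc (hz X o z h), mul_inv_cancel₀ h0, one_mul, h3])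
          refine ⟨u', l', q1, q2, q3, fun x hx => ?_⟩
          have := q4 x hx
          simp only [List.mem_append, List.mem_cons] at this ⊢
          tauto
        · obtain ⟨u', l', q1, q2, q3, q4⟩ := ih _ b (by omega) hb h2
          refine ⟨u', l', q1, q2, q3, fun x hx => ?_⟩
          have := q4 x hx
          simp only [List.mem_append, List.mem_cons] at this ⊢
          tauto

end

/-! ### Determinants of incidence submatrices -/

section

open Matrix Finset SerreGraph

lemma chain_walk (X : SerreGraph) (F : Finset X.Edge) (h : X.H) (t : List X.H) (k : X.H) :
    (List.IsChain (fun a b => X.root (X.inv a) = X.root b) (h :: t ++ [k]) ∧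
      ∀ x ∈ h :: t, X.edgeOf x ∉ F) ↔ IsWalk X F (X.root h) (h :: t) (X.root k) := by
  induction t generalizing h with
  | nil => simp [IsWalk, and_comm]
  | cons h' t ih =>
    rw [IsWalk]
    constructor
    · rintro ⟨h1, h2⟩
      rw [List.cons_append, List.cons_append, List.isChain_cons_cons] at h1
      refine ⟨rfl, h2 h (by simp), ?_⟩
      rw [h1.1]
      exact (ih h').1 ⟨h1.2, fun x hx => h2 x (List.mem_cons_of_mem _ hx)⟩
    · rintro ⟨-, h2, h3⟩
      have h4 : X.root h' = X.root (X.inv h) := h3.1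
      rw [← h4] at h3
      obtain ⟨h5, h6⟩ := (ih h').2 h3
      refine ⟨?_, ?_⟩
      · rw [List.cons_append, List.cons_append, List.isChain_cons_cons]
        exact ⟨h4.symm, h5⟩
      · intro x hx
        rcases List.mem_cons.1 hx with rfl | hx
        · exact h2
        · exact h6 x hx

lemma closedPath_iff (X : SerreGraph) (F : Finset X.Edge) (h : X.H) (t : List X.H) :
    (X.IsClosedPath (h :: t) ∧ ∀ x ∈ h :: t, X.edgeOf x ∉ F) ↔
      IsWalk X F (X.root h) (h :: t) (X.root h) := by
  rw [← chain_walk]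
  exact ⟨fun h => ⟨h.1.2, h.2⟩, fun h => ⟨⟨by simp, h.1⟩, h.2⟩⟩

lemma mem_edgesIn_comp (X : SerreGraph) (F : Finset X.Edge) (v : X.V) (h : X.H) :
    X.edgeOf h ∈ X.edgesIn F (X.compVerts F v) ↔ X.edgeOf h ∉ F ∧ X.compRel F v (X.root h) := by
  simp only [edgesIn, compVerts, Set.Finite.mem_toFinset, Set.mem_ofPred_eq]
  constructor
  · rintro ⟨h1, k, hk, hv⟩
    refine ⟨h1, ?_⟩
    rcases (edgeOf_eq_iff X k h).1 hk with rfl | rfl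
    · exact hv
    · exact compRel_trans X F hv (compRel_step X F k (by rwa [hk]))
  · rintro ⟨h1, h2⟩
    exact ⟨h1, h, rfl, h2⟩

lemma isEdgeCycle_walk {X : SerreGraph} {F : Finset X.Edge} {v : X.V} {l : List X.H}
    (hl : X.IsEdgeCycle (X.edgesIn F (X.compVerts F v)) l) :
    ∃ h t, l = h :: t ∧ IsWalk X F (X.root h) (h :: t) (X.root h) ∧
      ((h :: t).map X.edgeOf).Nodup ∧ X.compRel F v (X.root h) := by
  obtain ⟨h1, h2, h3⟩ := hl
  cases l with
  | nil => exact absurd rfl h1.1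
  | cons h t =>
    have h4 := fun x hx => (mem_edgesIn_comp X F v x).1 (h2 x hx)
    exact ⟨h, t, rfl, (closedPath_iff X F h t).1 ⟨h1, fun x hx => (h4 x hx).1⟩, h3,
      (h4 h (by simp)).2⟩

/-- A combination of the edge rows along a walk with distinct edges, the first coefficient
of modulus one, telescopes to the difference of the endpoints twisted by the total voltage. -/
lemma walk_comb {X : SerreGraph} {o : X.Orientation} {z : X.Edge → ℂ} (hz1 : ∀ e, ‖z e‖ = 1)
    {F : Finset X.Edge} {w : X.V} (l : List X.H) : ∀ u : X.V, IsWalk X F u l w →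
    (l.map X.edgeOf).Nodup →
    ∃ a : X.Edge → ℂ, (∀ e, e ∉ l.map X.edgeOf → a e = 0) ∧
      (∀ h t, l = h :: t → ‖a (X.edgeOf h)‖ = 1) ∧
      ∀ v, ∑ e, a e * row X o z e v =
        (if u = v then 1 else 0) - zprod X o z l * (if w = v then 1 else 0) := by
  have hz0 : ∀ e, z e ≠ 0 := fun e h => by have := hz1 e; rw [h] at this; simp at this
  induction l with
  | nil =>
    intro u hl _
    have : u = w := hl
    subst this
    exact ⟨0, by simp, by simp, by simp [zprod]⟩
  | cons h l ih =>
    rintro u ⟨rfl, hF, hl⟩ hnd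
    rw [List.map_cons, List.nodup_cons] at hnd
    obtain ⟨a, ha1, -, ha3⟩ := ih _ hl hnd.2
    obtain ⟨c, hc, hrow⟩ := half_row X o z hz0 h
    have hc1 : ‖c‖ = 1 := by
      rcases hc with rfl | rfl
      · simp
      · simp [hz1]
    have ha0 : a (X.edgeOf h) = 0 := ha1 _ hnd.1
    refine ⟨fun e => (if e = X.edgeOf h then c else 0) + hz X o z h * a e, ?_, ?_, ?_⟩
    · intro e he
      simp only [List.map_cons, List.mem_cons, not_or] at he
      simp [he.1, ha1 e he.2]
    · rintro h' t ht
      obtain ⟨rfl, rfl⟩ := List.cons.inj ht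
      simp [ha0, hc1]
    · intro v
      simp only [add_mul, Finset.sum_add_distrib, mul_assoc, ← Finset.mul_sum, ha3]
      simp only [ite_mul, zero_mul, Finset.sum_ite_eq', Finset.mem_univ, if_true, hrow, zprod_cons]
      ring

/-- Row replacement for `D`: if a combination of the rows equals `c` times the basis vector of `u ∈ A`,
then exchanging the row of `e` for that basis vector extracts the factor `|c|²`. -/
lemma D_replace {X : SerreGraph} {o : X.Orientation} {z : X.Edge → ℂ}
    {F : Finset X.Edge} {A : Finset X.V} (hc : Fᶜ.card = A.card) {e : X.Edge} (he : e ∉ F)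
    {u : X.V} (hu : u ∈ A) (a : X.Edge → ℂ) (b : X.V → ℂ) (ha : ∀ e ∈ F, a e = 0)
    (hb : ∀ v ∈ A, b v = 0) (hae : ‖a e‖ = 1) (c : ℂ)
    (h : ∀ v, ∑ e, a e * row X o z e v + b v = c * (if u = v then 1 else 0)) :
    D X o z F A = ((‖c‖ ^ 2 : ℝ) : ℂ) * D X o z (insert e F) (A.erase u) := by
  rw [D, gram_replace (extRows (row X o z)) (rowSet X F A) ((card_rowSet X F A).2 hc)
    (Sum.inl e) (Sum.inr u) (by simpa [rowSet] using he) (by simpa [rowSet] using hu)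
    (Sum.elim a b) hae c, D]
  · congr 2
    ext x
    rcases x with x | x
    · simp [rowSet]
    · by_cases hx : x = u <;> simp [rowSet, hx]
  · intro v
    rw [rowSet, Finset.sum_disjSum]
    simp only [Sum.elim_inl, Sum.elim_inr, extRows]
    have h1 : ∑ e ∈ Fᶜ, a e * row X o z e v = ∑ e, a e * row X o z e v := by
      apply Finset.sum_subset (Finset.subset_univ _)
      intro e _ he
      rw [ha e (by simpa using he), zero_mul]
    have h2 : ∑ w ∈ Aᶜ, b w * (Pi.single w 1 : X.V → ℂ) v = b v := by
      rw [Finset.sum_subset (Finset.subset_univ _)]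
      · simp [Pi.single_apply]
      · intro w _ hw
        rw [hb w (by simpa using hw), zero_mul]
    rw [h1, h2, h v]
    simp [Pi.single_apply, eq_comm]

/-- Exchanging an edge of a cycle through `u` for the basis vector of `u` extracts the factor
`|1 - z(C)|²`. -/
lemma cycle_reduce {X : SerreGraph} {o : X.Orientation} {z : X.Edge → ℂ} (hz1 : ∀ e, ‖z e‖ = 1)
    {F : Finset X.Edge} {A : Finset X.V} (hc : Fᶜ.card = A.card) {u : X.V} (hu : u ∈ A)
    {h : X.H} {l : List X.H} (hw : IsWalk X F u (h :: l) u)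
    (hnd : ((h :: l).map X.edgeOf).Nodup) :
    D X o z F A = ((‖1 - zprod X o z (h :: l)‖ ^ 2 : ℝ) : ℂ) *
      D X o z (insert (X.edgeOf h) F) (A.erase u) := by
  obtain ⟨a, h1, h2, h3⟩ := walk_comb (o := o) hz1 _ _ hw hnd
  refine D_replace hc hw.2.1 hu a 0 ?_ (by simp) (h2 h l rfl) _ ?_
  · intro e he
    apply h1
    intro hm
    obtain ⟨k, hk, rfl⟩ := List.mem_map.1 hm
    exact (hw.mem k hk).1 he
  · intro v
    simp only [h3, Pi.zero_apply]
    ring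

lemma compRel_anti {X : SerreGraph} {F F' : Finset X.Edge} (hF : F ⊆ F') {x y : X.V}
    (h : X.compRel F' x y) : X.compRel F x y :=
  Relation.ReflTransGen.mono
    (show X.adjStep F' ≤ X.adjStep F from
      fun _ _ ⟨k, h1, h2, h3⟩ => ⟨k, h1, h2, fun h4 => h3 (hF h4)⟩) _ _ h

/-- Deleting an edge of a cycle does not change the connected components. -/
lemma cycle_compRel {X : SerreGraph} {F : Finset X.Edge} {h : X.H} {l : List X.H}
    (hw : IsWalk X F (X.root h) (h :: l) (X.root h)) (hnd : ((h :: l).map X.edgeOf).Nodup)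
    (x y : X.V) : X.compRel (insert (X.edgeOf h) F) x y ↔ X.compRel F x y := by
  refine ⟨compRel_anti (Finset.subset_insert _ _), fun hxy => ?_⟩
  have hl : X.compRel (insert (X.edgeOf h) F) (X.root (X.inv h)) (X.root h) := by
    apply IsWalk.compRel
    apply hw.2.2.mono
    intro k hk hm
    rcases Finset.mem_insert.1 hm with hm | hm
    · rw [List.map_cons, List.nodup_cons] at hnd
      exact hnd.1 (hm ▸ List.mem_map_of_mem hk)
    · exact (hw.mem k (List.mem_cons_of_mem _ hk)).1 hm
  induction hxy with
  | refl => exact Relation.ReflTransGen.refl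
  | tail _ hs ih =>
    refine compRel_trans _ _ ih ?_
    obtain ⟨k, rfl, rfl, hk⟩ := hs
    by_cases hkh : X.edgeOf k = X.edgeOf h
    · rcases (edgeOf_eq_iff X h k).1 hkh.symm with rfl | rfl
      · exact compRel_symm _ _ hl
      · rwa [X.inv_inv]
    · exact compRel_step X _ k (by simp [hkh, hk])

/-- A trivial kernel forces at least as many rows as columns. -/
lemma card_le_of_kern {X : SerreGraph} {o : X.Orientation} {z : X.Edge → ℂ}
    {F : Finset X.Edge} {A : Finset X.V} (h : ∀ φ, Kern X o z F A φ → φ = 0) :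
    A.card ≤ Fᶜ.card := by
  classical
  let M : Matrix {e // e ∈ Fᶜ} {v // v ∈ A} ℂ := Matrix.of fun e v => row X o z e v
  have hinj : Function.Injective M.mulVecLin := by
    rw [← LinearMap.ker_eq_bot, LinearMap.ker_eq_bot']
    intro ψ hψ
    let φ : X.V → ℂ := fun v => if hv : v ∈ A then ψ ⟨v, hv⟩ else 0
    have hφ : Kern X o z F A φ := by
      refine ⟨fun e he => ?_, fun v hv => by simp [φ, hv]⟩
      rw [← sub_eq_zero, ← sum_row]
      have h1 := congrFun hψ ⟨e, by simpa using he⟩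
      rw [← Finset.sum_subset (Finset.subset_univ A), ← Finset.sum_coe_sort A]
      · rw [Matrix.mulVecLin_apply] at h1
        simpa [M, Matrix.mulVec, dotProduct, φ] using h1
      · intro v _ hv
        simp [φ, hv]
    have h0 := h φ hφ
    ext v
    have := congrFun h0 v
    simpa [φ] using this
  have := LinearMap.finrank_le_finrank_of_injective hinj
  simpa [Finset.card_compl] using this

/-- Deleting an edge of a cycle keeps every component nontrivial, provided the component of the
cycle contains a vertex outside the new column set `A'`. -/
lemma nontriv_insert {X : SerreGraph} {o : X.Orientation} {z : X.Edge → ℂ}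
    {F : Finset X.Edge} {A A' : Finset X.V} (hA : A' ⊆ A)
    (hn : ∀ v, Nontriv X o z F A v) {h : X.H} {l : List X.H}
    (hw : IsWalk X F (X.root h) (h :: l) (X.root h)) (hnd : ((h :: l).map X.edgeOf).Nodup)
    {r : X.V} (hr : X.compRel F (X.root h) r) (hrA : r ∉ A') (v : X.V) :
    Nontriv X o z (insert (X.edgeOf h) F) A' v := by
  by_cases hv : X.compRel F v (X.root h)
  · exact Or.inl ⟨r, (cycle_compRel hw hnd v r).2 (compRel_trans _ _ hv hr), hrA⟩
  · rcases hn v with ⟨u, hu, huA⟩ | ⟨u, m, hu, hm, hne⟩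
    · exact Or.inl ⟨u, (cycle_compRel hw hnd v u).2 hu, fun h => huA (hA h)⟩
    · refine Or.inr ⟨u, m, (cycle_compRel hw hnd v u).2 hu, hm.mono ?_, hne⟩
      intro k hk hmem
      obtain ⟨hkF, hku⟩ := hm.mem k hk
      rcases Finset.mem_insert.1 hmem with hmem | hmem
      · apply hv
        have h2 := compRel_trans _ _ hu hku
        rcases (edgeOf_eq_iff X h k).1 hmem.symm with rfl | rfl
        · exact h2
        · have := compRel_trans _ _ h2 (compRel_step X F _ hkF)
          rwa [X.inv_inv] at this
      · exact hkF hmem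

/-- By a dimension count, a component containing a vertex outside `A` has no cycle. -/
lemma no_cycle {X : SerreGraph} {o : X.Orientation} {z : X.Edge → ℂ} (hz0 : ∀ e, z e ≠ 0)
    {F : Finset X.Edge} {A : Finset X.V} (hc : Fᶜ.card = A.card)
    (hn : ∀ v, Nontriv X o z F A v) {v r : X.V} (hr : X.compRel F v r) (hrA : r ∉ A) :
    ¬ ∃ l, X.IsEdgeCycle (X.edgesIn F (X.compVerts F v)) l := by
  rintro ⟨l, hl⟩
  obtain ⟨h, t, rfl, hw, hnd, hv⟩ := isEdgeCycle_walk hl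
  have h1 := nontriv_insert (subset_refl A) hn hw hnd
    (compRel_trans _ _ (compRel_symm _ _ hv) hr) hrA
  have h2 := card_le_of_kern ((nontriv_iff X o z hz0 _ A).1 h1)
  rw [Finset.compl_insert, Finset.card_erase_of_mem (by simpa using hw.2.1)] at h2
  have h3 : 0 < Fᶜ.card := Finset.card_pos.2 ⟨X.edgeOf h, by simpa using hw.2.1⟩
  omega

/-- A spanning forest rooted at the complement of `A` contributes `1`. -/
lemma D_forest {X : SerreGraph} {o : X.Orientation} {z : X.Edge → ℂ} (hz1 : ∀ e, ‖z e‖ = 1) :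
    ∀ (n : ℕ) (F : Finset X.Edge) (A : Finset X.V), A.card = n → Fᶜ.card = A.card →
      (∀ v, ∃ u, X.compRel F v u ∧ u ∉ A) → D X o z F A = 1 := by
  have hz0 : ∀ e, z e ≠ 0 := fun e h => by have := hz1 e; rw [h] at this; simp at this
  intro n
  induction n with
  | zero =>
    intro F A hA hF _
    have hA' : A = ∅ := Finset.card_eq_zero.1 hA
    have hF' : Fᶜ = ∅ := Finset.card_eq_zero.1 (hF.trans hA)
    have : wgram (extRows (row X o z)) 1 (rowSet X F A) = 1 := by
      ext u v
      simp [wgram, rowSet, hF', hA', extRows, Pi.single_apply,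
        Matrix.one_apply]
    rw [D, gram, this, Matrix.det_one]
  | succ n ih =>
    intro F A hA hF hroot
    obtain ⟨v, hv⟩ : A.Nonempty := Finset.card_pos.1 (by omega)
    -- An edge leaving `A` lets its endpoint in `A` be exchanged into the set of roots.
    obtain ⟨h, h1, h2, h3⟩ : ∃ h, X.edgeOf h ∉ F ∧ X.root h ∈ A ∧ X.root (X.inv h) ∉ A := by
      obtain ⟨u, hvu, hu⟩ := hroot v
      induction hvu using Relation.ReflTransGen.head_induction_on with
      | refl => exact absurd hv hu
      | @head a c hs _ ih =>
        obtain ⟨k, rfl, rfl, hk⟩ := hs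
        by_cases hcA : X.root (X.inv k) ∈ A
        · exact ih hcA
        · exact ⟨k, hk, hv, hcA⟩
    obtain ⟨c, hc, hrow⟩ := half_row X o z hz0 h
    have hc1 : ‖c‖ = 1 := by
      rcases hc with rfl | rfl
      · simp
      · simp [hz1]
    have key := D_replace (o := o) (z := z) hF h1 h2 (fun e => if e = X.edgeOf h then c else 0)
      (fun v => hz X o z h * (if X.root (X.inv h) = v then 1 else 0)) ?_ ?_ (by simp [hc1]) 1 ?_
    · rw [key, ih]
      · simp
      · rw [Finset.card_erase_of_mem h2]; omega
      · rw [Finset.compl_insert, Finset.card_erase_of_mem (by simpa using h1),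
          Finset.card_erase_of_mem h2, hF]
      · intro w
        obtain ⟨u, hwu, hu⟩ := hroot w
        induction hwu using Relation.ReflTransGen.head_induction_on with
        | refl => exact ⟨u, Relation.ReflTransGen.refl, fun h => hu (Finset.mem_of_mem_erase h)⟩
        | @head a c hs _ ih =>
          obtain ⟨k, rfl, rfl, hk⟩ := hs
          by_cases hkh : X.edgeOf k = X.edgeOf h
          · refine ⟨X.root k, Relation.ReflTransGen.refl, ?_⟩
            rcases (edgeOf_eq_iff X h k).1 hkh.symm with rfl | rfl
            · simp
            · exact fun h => h3 (Finset.mem_of_mem_erase h)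
          · obtain ⟨u', hu', hu''⟩ := ih
            exact ⟨u', compRel_trans _ _ (compRel_step X _ k (by simp [hkh, hk])) hu', hu''⟩
    · intro e he
      rw [if_neg]
      rintro rfl; exact h1 he
    · intro v hv
      rw [if_neg, mul_zero]
      rintro rfl; exact h3 hv
    · intro v
      simp [hrow]

open Classical in
/-- The weight `|1 - z(C)|²` of a component with edge set `S` and unique cycle `C`, or `1` if
there is no cycle. -/
noncomputable def cwz (X : SerreGraph) (o : X.Orientation) (z : X.Edge → ℂ) (S : Finset X.Edge) :
    ℝ := if hc : ∃ l, X.IsEdgeCycle S l then ‖1 - zprod X o z hc.choose‖ ^ 2 else 1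

lemma compVerts_eq {X : SerreGraph} {F : Finset X.Edge} {u v : X.V} (h : X.compRel F u v) :
    X.compVerts F u = X.compVerts F v := by
  ext w
  simp only [compVerts, Set.Finite.mem_toFinset, Set.mem_ofPred_eq]
  exact ⟨fun hu => compRel_trans _ _ (compRel_symm _ _ h) hu, fun hv => compRel_trans _ _ h hv⟩

/-- The squared determinant `D` of a set of rows with trivial kernel is the product of the weights
of the components. Each component without a vertex outside `A` has a cycle; exchanging an edge of
the cycle for a vertex extracts the factor `|1 - z(C)|²` and opens up the component to a tree. -/
lemma D_eq_prod {X : SerreGraph} {o : X.Orientation} {z : X.Edge → ℂ} (hz1 : ∀ e, ‖z e‖ = 1) :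
    ∀ (n : ℕ) (F : Finset X.Edge) (A : Finset X.V), A.card = n → Fᶜ.card = A.card →
      (∀ v, Nontriv X o z F A v) →
      D X o z F A = ((∏ C ∈ X.components F, cwz X o z (X.edgesIn F C) : ℝ) : ℂ) := by
  have hz0 : ∀ e, z e ≠ 0 := fun e h => by have := hz1 e; rw [h] at this; simp at this
  intro n
  induction n with
  | zero =>
    intro F A hA hF hn
    have hA' : A = ∅ := Finset.card_eq_zero.1 hA
    have hr : ∀ v, ∃ u, X.compRel F v u ∧ u ∉ A :=
      fun v => ⟨v, Relation.ReflTransGen.refl, by simp [hA']⟩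
    rw [D_forest hz1 0 F A hA hF hr, Finset.prod_eq_one]
    · simp
    · intro C hC
      obtain ⟨v, -, rfl⟩ := Finset.mem_image.1 hC
      obtain ⟨u, hu, huA⟩ := hr v
      rw [cwz, dif_neg (no_cycle hz0 hF hn hu huA)]
  | succ n ih =>
    intro F A hA hF hn
    by_cases hr : ∀ v, ∃ u, X.compRel F v u ∧ u ∉ A
    · rw [D_forest hz1 _ F A hA hF hr, Finset.prod_eq_one]
      · simp
      · intro C hC
        obtain ⟨v, -, rfl⟩ := Finset.mem_image.1 hC
        obtain ⟨u, hu, huA⟩ := hr v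
        rw [cwz, dif_neg (no_cycle hz0 hF hn hu huA)]
    · push Not at hr
      obtain ⟨v, hv⟩ := hr
      have hex : ∃ l, X.IsEdgeCycle (X.edgesIn F (X.compVerts F v)) l := by
        rcases hn v with ⟨u, hu, huA⟩ | ⟨u, m, hu, hm, hne⟩
        · exact absurd (hv u hu) huA
        · obtain ⟨u', l', q1, q2, q3, q4⟩ := exists_simple hz0 _ u m le_rfl hm hne
          cases l' with
          | nil => exact absurd rfl q2
          | cons h t =>
            have hq : X.root h = u' := q1.1
            subst hq
            obtain ⟨h5, h6⟩ := (closedPath_iff X F h t).2 q1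
            refine ⟨h :: t, h5, fun x hx => ?_, q3⟩
            rw [mem_edgesIn_comp]
            exact ⟨h6 x hx, compRel_trans _ _ hu (hm.mem x (q4 x hx)).2⟩
      -- The cycle used here is the one chosen in `cwz`, so the factor it yields is that weight.
      obtain ⟨h, t, hL, hw, hnd, hvh⟩ := isEdgeCycle_walk hex.choose_spec
      have hhA := hv _ hvh
      have hcw : cwz X o z (X.edgesIn F (X.compVerts F v)) = ‖1 - zprod X o z (h :: t)‖ ^ 2 := by
        rw [cwz, dif_pos hex, hL]
      have hcard : (insert (X.edgeOf h) F)ᶜ.card = (A.erase (X.root h)).card := by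
        rw [Finset.compl_insert, Finset.card_erase_of_mem (by simpa using hw.2.1),
          Finset.card_erase_of_mem hhA, hF]
      have hn' := nontriv_insert (Finset.erase_subset (X.root h) A) hn hw hnd
        Relation.ReflTransGen.refl (by simp)
      have hcomp : ∀ w, X.compVerts (insert (X.edgeOf h) F) w = X.compVerts F w := by
        intro w; ext x
        simp only [compVerts, Set.Finite.mem_toFinset, Set.mem_ofPred_eq]
        exact cycle_compRel hw hnd w x
      rw [cycle_reduce hz1 hF hhA hw hnd, ih _ _ (by rw [Finset.card_erase_of_mem hhA]; omega)
        hcard hn', ← Complex.ofReal_mul]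
      congr 1
      have hcs : X.components (insert (X.edgeOf h) F) = X.components F := by
        simp only [components]
        congr 1
        exact funext hcomp
      have hvm : X.compVerts F v ∈ X.components F := Finset.mem_image_of_mem _ (Finset.mem_univ _)
      rw [hcs, ← Finset.mul_prod_erase _ _ hvm, ← Finset.mul_prod_erase _ _ hvm, hcw]
      congr 1
      have h1 : cwz X o z (X.edgesIn (insert (X.edgeOf h) F) (X.compVerts F v)) = 1 := by
        rw [cwz, dif_neg]
        rw [← hcomp]
        exact no_cycle hz0 hcard hn' ((cycle_compRel hw hnd _ _).2 hvh) (by simp)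
      rw [h1, one_mul]
      apply Finset.prod_congr rfl
      intro C hC
      obtain ⟨hCne, hC⟩ := Finset.mem_erase.1 hC
      obtain ⟨w, -, rfl⟩ := Finset.mem_image.1 hC
      congr 1
      ext e
      obtain ⟨k, rfl⟩ := X.edgeOf_surjective e
      rw [mem_edgesIn_comp, ← hcomp, mem_edgesIn_comp, cycle_compRel hw hnd, Finset.mem_insert,
        not_or]
      refine ⟨fun ⟨⟨_, p2⟩, p3⟩ => ⟨p2, p3⟩, fun ⟨p2, p3⟩ => ⟨⟨fun he => hCne ?_, p2⟩, p3⟩⟩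
      apply compVerts_eq
      refine compRel_trans _ _ ?_ (compRel_symm _ _ hvh)
      rcases (edgeOf_eq_iff X h k).1 he.symm with rfl | rfl
      · exact p3
      · exact compRel_trans _ _ p3 (by have := compRel_step X F _ p2; rwa [X.inv_inv] at this)

end

/-! ### Minors of the twisted Laplacian -/

section

open Matrix Finset SerreGraph

/-- The maximal `F` such that all components of `X ∖ F` are nontrivial are those whose complementary
rows form a nonsingular square submatrix of the twisted incidence matrix. -/
lemma isBasis_iff {X : SerreGraph} {o : X.Orientation} {z : X.Edge → ℂ} (hz0 : ∀ e, z e ≠ 0)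
    (F : Finset X.Edge) (A : Finset X.V) :
    ((∀ v, Nontriv X o z F A v) ∧
      ∀ F' : Finset X.Edge, F ⊆ F' → (∀ v, Nontriv X o z F' A v) → F' = F) ↔
    (Fᶜ.card = A.card ∧ D X o z F A ≠ 0) := by
  classical
  simp only [nontriv_iff X o z hz0]
  constructor
  · rintro ⟨h1, h2⟩
    have hle := card_le_of_kern h1
    have hc : Fᶜ.card = A.card := by
      by_contra hne
      have hlt : A.card < Fᶜ.card := lt_of_le_of_ne hle (Ne.symm hne)
      let M : Matrix {e // e ∈ Fᶜ} {v // v ∈ A} ℂ := Matrix.of fun e v => row X o z e v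
      have hker : LinearMap.ker M.vecMulLinear ≠ ⊥ :=
        LinearMap.ker_ne_bot_of_finrank_lt (by
          rw [Module.finrank_fintype_fun_eq_card, Module.finrank_fintype_fun_eq_card,
            Fintype.card_coe, Fintype.card_coe]
          exact hlt)
      obtain ⟨a, ha, ha0⟩ := (Submodule.ne_bot_iff _).1 hker
      obtain ⟨e₀, he₀⟩ := Function.ne_iff.1 ha0
      have he₀F : (e₀ : X.Edge) ∉ F := Finset.mem_compl.1 e₀.2
      -- The row of `e₀` depends on the other rows, so deleting `e₀` leaves the kernel trivial.
      have := h2 (insert e₀.1 F) (Finset.subset_insert _ _) (fun φ hφ => h1 φ ⟨?_, hφ.2⟩)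
      · exact he₀F (Finset.insert_eq_self.1 this)
      · intro e he
        by_cases hee : e = e₀
        · subst hee
          have hsum : ∑ e : {e // e ∈ Fᶜ}, a e * (∑ v, row X o z e v * φ v) = 0 := by
            have hA : ∀ e : X.Edge, ∑ v, row X o z e v * φ v =
                ∑ v : {v // v ∈ A}, row X o z e v * φ v := by
              intro e
              rw [Finset.sum_coe_sort A (fun v => row X o z e v * φ v)]
              refine (Finset.sum_subset (Finset.subset_univ A) ?_).symm
              intro v _ hv
              rw [hφ.2 v hv, mul_zero]
            simp only [hA, Finset.mul_sum]
            rw [Finset.sum_comm]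
            apply Finset.sum_eq_zero
            intro v _
            have := congrFun (LinearMap.mem_ker.1 ha) v
            simp only [Matrix.vecMulLinear_apply, Matrix.vecMul, dotProduct, M,
              Matrix.of_apply, Pi.zero_apply] at this
            simp only [← mul_assoc, ← Finset.sum_mul, this, zero_mul]
          rw [Finset.sum_eq_single e₀] at hsum
          · rw [sum_row] at hsum
            exact sub_eq_zero.1 ((mul_eq_zero.1 hsum).resolve_left he₀)
          · intro e' _ hne'
            have h3 : (e' : X.Edge) ∉ insert (e₀ : X.Edge) F := by
              rw [Finset.mem_insert, not_or]
              exact ⟨fun h => hne' (Subtype.ext h), Finset.mem_compl.1 e'.2⟩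
            rw [sum_row, hφ.1 _ h3, sub_self, mul_zero]
          · simp
        · exact hφ.1 e (by simp [hee, he])
    exact ⟨hc, (D_ne_zero_iff X o z F A hc).2 h1⟩
  · rintro ⟨hc, hD⟩
    refine ⟨(D_ne_zero_iff X o z F A hc).1 hD, fun F' hF hF' => ?_⟩
    have h1 := card_le_of_kern hF'
    have h2 : F'ᶜ ⊆ Fᶜ := Finset.compl_subset_compl.2 hF
    have h3 := Finset.eq_of_subset_of_card_le h2 (by omega)
    exact compl_injective h3

/-- The weighted twisted Laplacian `∑_e y_e b_e^* b_eᵀ`. -/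
noncomputable def Lap (X : SerreGraph) (o : X.Orientation) (z y : X.Edge → ℂ) :
    Matrix X.V X.V ℂ := wgram (row X o z) y univ

/-- Principal minors of the twisted Laplacian, expanded by the Cauchy–Binet formula. -/
lemma det_Lap (X : SerreGraph) (o : X.Orientation) (z y : X.Edge → ℂ) (A : Finset X.V) :
    ((Lap X o z y).submatrix (Subtype.val : {v // v ∈ A} → X.V) Subtype.val).det =
      ∑ F ∈ univ.filter (fun F : Finset X.Edge => Fᶜ.card = A.card),
        (∏ e ∈ Fᶜ, y e) * D X o z F A := by
  have h : (Lap X o z y).submatrix (Subtype.val : {v // v ∈ A} → X.V) Subtype.val =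
      wgram (fun e (a : {v // v ∈ A}) => row X o z e a) y univ := rfl
  rw [h, cauchyBinet]
  refine Finset.sum_bij' (fun S _ => Sᶜ) (fun F _ => Fᶜ) ?_ ?_ ?_ ?_ ?_
  · intro S hS
    simpa using hS
  · intro F hF
    simpa using hF
  · simp
  · simp
  · intro S hS
    have hS' : S.card = A.card := by simpa using hS
    rw [gram_restrict (row X o z) A S hS', D, rowSet, compl_compl]

lemma prod_mul_inv {E : Type} [Fintype E] [DecidableEq E] (x : E → ℂ) (hx : ∀ e, x e ≠ 0)
    (F : Finset E) : (∏ e, x e) * ∏ e ∈ Fᶜ, (x e)⁻¹ = ∏ e ∈ F, x e := by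
  rw [← Finset.prod_mul_prod_compl F, mul_assoc, ← Finset.prod_mul_distrib]
  rw [Finset.prod_eq_one (s := Fᶜ), mul_one]
  intro e _
  exact mul_inv_cancel₀ (hx e)

/-- The weighted matrix-tree theorem, with conductances `1 / x_e`. -/
lemma eval_jacobianPoly (X : SerreGraph) (o : X.Orientation) (x : X.Edge → ℝ)
    (hx : ∀ e, x e ≠ 0) (w : X.V) :
    ((MvPolynomial.eval x (X.jacobianPoly ℝ) : ℝ) : ℂ) = (∏ e, (x e : ℂ)) *
      (Matrix.of fun i j : {v // v ≠ w} => Lap X o 1 (fun e => (x e : ℂ)⁻¹) i j).det := by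
  classical
  have h1 : (Matrix.of fun i j : {v // v ≠ w} => Lap X o 1 (fun e => (x e : ℂ)⁻¹) i j).det =
      ((Lap X o 1 (fun e => (x e : ℂ)⁻¹)).submatrix
        (Subtype.val : {v // v ∈ univ.erase w} → X.V) Subtype.val).det := by
    let e : {v // v ∈ univ.erase w} ≃ {v // v ≠ w} := Equiv.subtypeEquivRight (by simp)
    rw [← Matrix.det_submatrix_equiv_self e]
    rfl
  rw [h1, det_Lap, Finset.mul_sum, jacobianPoly, map_sum]
  push_cast
  have hz1 : ∀ e : X.Edge, ‖(1 : X.Edge → ℂ) e‖ = 1 := by simp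
  have hz0 : ∀ e : X.Edge, (1 : X.Edge → ℂ) e ≠ 0 := by simp
  have hcA : (univ.erase w).card + 1 = Fintype.card X.V := by
    rw [Finset.card_erase_add_one (Finset.mem_univ w), Finset.card_univ]
  have hrel : ∀ T : Finset X.Edge, X.compRel Tᶜ = Relation.ReflTransGen
      (fun a b => ∃ h, X.root h = a ∧ X.root (X.inv h) = b ∧ X.edgeOf h ∈ T) := by
    intro T
    have : X.adjStep Tᶜ =
        (fun a b => ∃ h, X.root h = a ∧ X.root (X.inv h) = b ∧ X.edgeOf h ∈ T) := by
      funext a b; simp [adjStep]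
    rw [← this]; rfl
  have hst : ∀ T : Finset X.Edge, X.IsSpanningTree T ↔
      (T.card = (univ.erase w).card ∧ D X o 1 Tᶜ (univ.erase w) ≠ 0) := by
    intro T
    constructor
    · rintro ⟨p1, p2⟩
      have hc : T.card = (univ.erase w).card := by omega
      refine ⟨hc, ?_⟩
      rw [D_forest hz1 _ Tᶜ _ rfl (by rwa [compl_compl])]
      · simp
      · intro v
        refine ⟨w, ?_, by simp⟩
        rw [hrel]; exact p1 v w
    · rintro ⟨hc, hD⟩
      refine ⟨?_, by omega⟩
      rw [D_ne_zero_iff _ _ _ _ _ (by rwa [compl_compl]), ← nontriv_iff X o 1 hz0] at hD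
      have h2 : ∀ v, X.compRel Tᶜ v w := by
        intro v
        rcases hD v with ⟨u, hu, huA⟩ | ⟨u, l, _, _, hne⟩
        · have : u = w := by simpa using huA
          rwa [← this]
        · refine absurd ?_ hne
          rw [zprod]
          apply List.prod_eq_one
          intro a ha
          obtain ⟨h, -, rfl⟩ := List.mem_map.1 ha
          simp [hz]
      intro u v
      rw [← hrel]
      exact compRel_trans _ _ (h2 u) (compRel_symm _ _ (h2 v))
  refine Eq.trans ?_ (Finset.sum_subset (s₁ := univ.filter
      (fun F : Finset X.Edge => Fᶜ.card = (univ.erase w).card ∧ D X o 1 F (univ.erase w) ≠ 0))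
      ?_ ?_)
  · refine Finset.sum_bij' (fun T _ => Tᶜ) (fun F _ => Fᶜ) ?_ ?_ ?_ ?_ ?_
    · intro T hT
      have := (hst T).1 (by simpa [spanningTrees] using hT)
      rw [Finset.mem_filter, compl_compl]
      exact ⟨Finset.mem_univ _, this⟩
    · intro F hF
      simp only [Finset.mem_filter, Finset.mem_univ, true_and] at hF
      have := (hst Fᶜ).2 (by rwa [compl_compl])
      simpa [spanningTrees] using this
    · simp
    · simp
    · intro T hT
      have hT' : X.IsSpanningTree T := by simpa [spanningTrees] using hT
      rw [D_forest hz1 _ Tᶜ _ rfl, mul_one, prod_mul_inv (fun e => (x e : ℂ))]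
      · simp [map_prod]
      · simpa using hx
      · rw [compl_compl]; exact ((hst T).1 hT').1
      · intro v
        refine ⟨w, ?_, by simp⟩
        rw [hrel]; exact hT'.1 v w
  · intro F hF
    simp only [Finset.mem_filter, Finset.mem_univ, true_and] at hF ⊢
    exact hF.1
  · intro F hF hF'
    simp only [Finset.mem_filter, Finset.mem_univ, true_and, not_and, not_not] at hF hF'
    rw [hF' hF]; simp

section Twisted

variable {G : Type} [Group G] [Fintype G] {Xt X : SerreGraph}

lemma char_inv {G : Type} [Group G] (ρ : G →* ℂ) (g : G) : ρ g⁻¹ = (ρ g)⁻¹ := by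
  apply eq_inv_of_mul_eq_one_left
  rw [← map_mul, inv_mul_cancel, map_one]

lemma norm_char (ρ : G →* ℂ) (g : G) : ‖ρ g‖ = 1 := by
  apply Complex.norm_eq_one_of_pow_eq_one (n := Fintype.card G)
  · rw [← map_pow, pow_card_eq_one, map_one]
  · exact Fintype.card_ne_zero

lemma star_char (ρ : G →* ℂ) (g : G) : star (ρ g) = ρ g⁻¹ := by
  rw [char_inv, Complex.inv_def, Complex.normSq_eq_norm_sq, norm_char]
  simp

/-- The vertices whose dilation subgroup is killed by `ρ`. -/
noncomputable def unram (c : GCover G Xt X) (ρ : G →* ℂ) : Finset X.V := by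
  classical exact univ.filter fun v => ∀ g ∈ c.dilation v, ρ g = 1

lemma mem_unram (c : GCover G Xt X) (ρ : G →* ℂ) (v : X.V) :
    v ∈ unram c ρ ↔ ∀ g ∈ c.dilation v, ρ g = 1 := by
  simp [unram]

lemma char_pathVoltage {G : Type} [Group G] {X : SerreGraph} (o : X.Orientation) (η : X.Edge → G) (ρ : G →* ℂ) (l : List X.H) :
    ρ (X.pathVoltage o η l) = zprod X o (fun e => ρ (η e)) l := by
  rw [pathVoltage, zprod, map_list_prod, List.map_map]
  congr 2
  funext h
  simp only [Function.comp_apply, halfVoltage, hz]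
  split_ifs
  · rfl
  · exact char_inv ρ _

lemma rhoNontrivialAt_iff (c : GCover G Xt X) (o : X.Orientation) (η : X.Edge → G) (ρ : G →* ℂ)
    (F : Finset X.Edge) (v : X.V) :
    c.RhoNontrivialAt o η ρ F v ↔ Nontriv X o (fun e => ρ (η e)) F (unram c ρ) v := by
  rw [GCover.RhoNontrivialAt, Nontriv]
  refine or_congr ?_ ?_
  · simp [mem_unram]
  · simp only [char_pathVoltage]
    constructor
    · rintro ⟨l, h1, h2, h3⟩
      cases l with
      | nil => exact absurd rfl h1.1
      | cons h t =>
        exact ⟨X.root h, h :: t, (h2 h (by simp)).2,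
          (closedPath_iff X F h t).1 ⟨h1, fun x hx => (h2 x hx).1⟩, h3⟩
    · rintro ⟨u, l, h1, h2, h3⟩
      cases l with
      | nil => exact absurd (by simp [zprod]) h3
      | cons h t =>
        have hu : X.root h = u := h2.1
        subst hu
        exact ⟨h :: t, ((closedPath_iff X F h t).2 h2).1,
          fun x hx => ⟨(h2.mem x hx).1, compRel_trans _ _ h1 (h2.mem x hx).2⟩, h3⟩

lemma basisWeight_eq {G : Type} [Group G] {X : SerreGraph} (o : X.Orientation) (η : X.Edge → G) (ρ : G →* ℂ) (F : Finset X.Edge) :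
    basisWeight X o η ρ F =
      ∏ C ∈ X.components F, cwz X o (fun e => ρ (η e)) (X.edgesIn F C) := by
  rw [basisWeight]
  apply Finset.prod_congr rfl
  intro C _
  rw [cycleWeight, cwz]
  split_ifs
  · rw [char_pathVoltage]
  · rfl

/-- The weight polynomial is a principal minor of the twisted Laplacian. -/
lemma eval_twistedWeightPoly (c : GCover G Xt X) (o : X.Orientation) (η : X.Edge → G) (ρ : G →* ℂ)
    (x : X.Edge → ℝ) (hx : ∀ e, x e ≠ 0) :
    ((MvPolynomial.eval x (c.twistedWeightPoly o η ρ) : ℝ) : ℂ) = (∏ e, (x e : ℂ)) *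
      ((Lap X o (fun e => ρ (η e)) (fun e => (x e : ℂ)⁻¹)).submatrix
        (Subtype.val : {v // v ∈ unram c ρ} → X.V) Subtype.val).det := by
  classical
  set z : X.Edge → ℂ := fun e => ρ (η e) with hz
  have hz1 : ∀ e, ‖z e‖ = 1 := fun e => norm_char ρ _
  have hz0 : ∀ e, z e ≠ 0 := fun e h => by have := hz1 e; rw [h] at this; simp at this
  have hb : ∀ F, c.IsBasisRho o η ρ F ↔
      (Fᶜ.card = (unram c ρ).card ∧ D X o z F (unram c ρ) ≠ 0) := by
    intro F
    rw [← isBasis_iff hz0]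
    simp only [GCover.IsBasisRho, rhoNontrivialAt_iff, hz]
  rw [det_Lap, Finset.mul_sum, GCover.twistedWeightPoly, map_sum]
  push_cast
  refine Eq.trans ?_ (Finset.sum_subset (s₁ := (Set.toFinite {F : Finset X.Edge |
    c.IsBasisRho o η ρ F}).toFinset) ?_ ?_)
  · apply Finset.sum_congr rfl
    intro F hF
    have hF' : c.IsBasisRho o η ρ F := by simpa using hF
    rw [← mul_assoc, prod_mul_inv (fun e => (x e : ℂ)), D_eq_prod hz1 _ F _ rfl ((hb F).1 hF').1,
      ← basisWeight_eq, mul_comm]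
    · simp [map_prod]
    · intro v
      exact (rhoNontrivialAt_iff c o η ρ F v).1 (hF'.1 v)
    · simpa using hx
  · intro F hF
    have hF' : c.IsBasisRho o η ρ F := by simpa using hF
    rw [Finset.mem_filter]
    exact ⟨Finset.mem_univ _, ((hb F).1 hF').1⟩
  · intro F hF hF'
    have h1 : ¬ c.IsBasisRho o η ρ F := by simpa using hF'
    rw [hb] at h1
    simp only [Finset.mem_filter, Finset.mem_univ, true_and] at hF
    have h2 : D X o z F (unram c ρ) = 0 := by
      by_contra h; exact h1 ⟨hF, h⟩
    rw [h2]; simp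

end Twisted

end

/-! ### Equivariant functions on the cover -/

section

open Matrix Finset SerreGraph

/-- Multiplicative maps from a group to `ℂ` are the same as its homomorphisms to `ℂˣ`. -/
noncomputable def charEquiv (G : Type) [Group G] : (G →* ℂ) ≃ (G →* ℂˣ) where
  toFun ρ := ρ.toHomUnits
  invFun ρ := (Units.coeHom ℂ).comp ρ
  left_inv ρ := by ext; simp
  right_inv ρ := by ext; simp

noncomputable instance (G : Type) [CommGroup G] [Fintype G] : Fintype (G →* ℂ) :=
  haveI : Finite (G →* ℂ) := Finite.of_equiv _ (charEquiv G).symm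
  Fintype.ofFinite _

lemma card_char_trivial_on {G : Type} [CommGroup G] [Fintype G] (H : Subgroup G) :
    Nat.card {ρ : G →* ℂ // ∀ g ∈ H, ρ g = 1} = Nat.card (G ⧸ H) := by
  rw [← CommGroup.card_domRestrictHom_ker ℂ H]
  refine Nat.card_congr (Equiv.subtypeEquiv (charEquiv G) fun ρ => ?_)
  rw [MonoidHom.mem_ker, MonoidHom.ext_iff]
  simp [charEquiv, Units.ext_iff]

/-- Orthogonality of characters. -/
lemma char_orth {G : Type} [CommGroup G] [Fintype G] (ρ ρ' : G →* ℂ) [Decidable (ρ = ρ')] :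
    ∑ g, star (ρ g) * ρ' g = if ρ = ρ' then (Fintype.card G : ℂ) else 0 := by
  split_ifs with h
  · subst h
    have : ∀ g, star (ρ g) * ρ g = 1 := fun g => by
      rw [star_char, ← map_mul, inv_mul_cancel, map_one]
    simp only [this, Finset.sum_const, Finset.card_univ, nsmul_eq_mul, mul_one]
  · let ψ : G →* ℂ := ((starRingEnd ℂ : ℂ →+* ℂ) : ℂ →* ℂ).comp ρ * ρ'
    have hψ : ∀ g, ψ g = star (ρ g) * ρ' g := fun g => rfl
    simp only [← hψ]
    apply sum_hom_units_eq_zero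
    intro h1
    apply h
    ext g
    have h2 : ψ g = 1 := by rw [h1]; rfl
    rw [hψ, star_char, char_inv] at h2
    have h0 : ρ g ≠ 0 := fun h0 => by have := norm_char ρ g; rw [h0] at this; simp at this
    field_simp at h2
    exact h2.symm

lemma sum_char {G : Type} [CommGroup G] [Fintype G] (ρ : G →* ℂ) [Decidable (ρ = 1)] :
    ∑ g, ρ g = if ρ = 1 then (Fintype.card G : ℂ) else 0 := by
  split_ifs with h
  · subst h; simp
  · exact sum_hom_units_eq_zero ρ h

/-- The determinant of a block diagonal matrix with blocks of varying sizes. -/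
lemma det_blocks {α : Type} [Fintype α] [DecidableEq α] {n : α → Type} [∀ a, Fintype (n a)]
    [∀ a, DecidableEq (n a)] (M : Matrix (Σ a, n a) (Σ a, n a) ℂ)
    (h : ∀ i j, i.1 ≠ j.1 → M i j = 0) :
    M.det = ∏ a, (Matrix.of fun u v : n a => M ⟨a, u⟩ ⟨a, v⟩).det := by
  let f : α ≃ Fin (Fintype.card α) := Fintype.equivFin α
  let : LinearOrder α := LinearOrder.lift' f f.injective
  have hb : M.BlockTriangular Sigma.fst := fun i j hij => h i j (ne_of_gt hij)
  rw [hb.det_fintype]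
  apply Finset.prod_congr rfl
  intro a _
  let e : n a ≃ {x : Σ a, n a // x.1 = a} :=
    { toFun := fun u => ⟨⟨a, u⟩, rfl⟩
      invFun := fun x => x.2 ▸ x.1.2
      left_inv := fun u => rfl
      right_inv := by rintro ⟨⟨a', u⟩, rfl⟩; rfl }
  rw [← Matrix.det_submatrix_equiv_self e]
  congr 1

lemma wgram_mul {ι n m : Type} [Fintype ι] [DecidableEq ι] [Fintype n] (b : ι → n → ℂ)
    (y : ι → ℂ) (P : Matrix n m ℂ) :
    Pᴴ * wgram b y univ * P = wgram (fun x j => ∑ w, b x w * P w j) y univ := by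
  have h : ∀ {k : Type} (b : ι → k → ℂ), wgram b y univ =
      (Matrix.of b)ᴴ * Matrix.diagonal y * Matrix.of b := by
    intro k b
    ext u v
    rw [Matrix.mul_apply]
    simp only [wgram, Matrix.of_apply, Matrix.mul_diagonal, Matrix.conjTranspose_apply]
    exact Finset.sum_congr rfl fun _ _ => by ring
  have h2 : (Matrix.of fun x j => ∑ w, b x w * P w j) = Matrix.of b * P := by
    ext; simp [Matrix.mul_apply]
  rw [h, h, h2, Matrix.conjTranspose_mul]
  simp only [Matrix.mul_assoc]

section Cover

variable {G : Type} [CommGroup G] [Fintype G] {Xt X : SerreGraph}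

lemma smulV_eq_iff (c : GCover G Xt X) (g : G) (w : Xt.V) :
    c.smulV g w = w ↔ g ∈ c.dilation (c.vMap w) := by
  constructor
  · intro h w' hw'
    obtain ⟨k, rfl⟩ := c.vertex_trans w w' hw'.symm
    rw [← c.mul_smulV, mul_comm, c.mul_smulV, h]
  · intro h; exact h w rfl

/-- The dilation set of `v` as a subgroup. -/
def dil (c : GCover G Xt X) (v : X.V) : Subgroup G where
  carrier := c.dilation v
  one_mem' := fun w _ => c.one_smulV w
  mul_mem' := fun {a b} ha hb w hw => by rw [c.mul_smulV, hb w hw, ha w hw]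
  inv_mem' := fun {a} ha w hw => by
    conv_lhs => rw [← ha w hw, ← c.mul_smulV, inv_mul_cancel, c.one_smulV]

lemma mem_dil (c : GCover G Xt X) (v : X.V) (g : G) : g ∈ dil c v ↔ g ∈ c.dilation v := Iff.rfl

lemma smulV_eq_smulV (c : GCover G Xt X) (g k : G) (w : Xt.V) :
    c.smulV g w = c.smulV k w ↔ k⁻¹ * g ∈ dil c (c.vMap w) := by
  rw [mem_dil, ← smulV_eq_iff, c.mul_smulV]
  constructor
  · intro h; rw [h, ← c.mul_smulV, inv_mul_cancel, c.one_smulV]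
  · intro h
    conv_rhs => rw [← h, ← c.mul_smulV, mul_inv_cancel, c.one_smulV]

/-- Orbit–stabilizer: summing over the group counts each vertex of the fiber `|D(v)|` times. -/
lemma sum_orbit (c : GCover G Xt X) (σ : X.V → Xt.V) (hσ : ∀ v, c.vMap (σ v) = v) (v : X.V)
    (f : Xt.V → ℂ) :
    ∑ g, f (c.smulV g (σ v)) =
      ∑ w, (Nat.card (c.dilation v) : ℂ) * (if c.vMap w = v then f w else 0) := by
  classical
  rw [← Finset.sum_fiberwise (univ : Finset G) (fun g => c.smulV g (σ v))]
  apply Finset.sum_congr rfl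
  intro w _
  split_ifs with hw
  · rw [Finset.sum_congr rfl (g := fun _ => f w)
      (fun g hg => by rw [(Finset.mem_filter.1 hg).2]), Finset.sum_const, nsmul_eq_mul]
    congr 2
    obtain ⟨k, rfl⟩ := c.vertex_trans (σ v) w (by rw [hσ, hw])
    rw [← Fintype.card_subtype, ← Nat.card_eq_fintype_card]
    refine Nat.card_congr (Equiv.subtypeEquiv (Equiv.mulLeft k⁻¹) fun g => ?_)
    rw [smulV_eq_smulV, mem_dil, hσ]
    rfl
  · rw [mul_zero]
    apply Finset.sum_eq_zero
    intro g hg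
    exfalso
    apply hw
    rw [← (Finset.mem_filter.1 hg).2, c.vMap_smulV, hσ]

variable {c : GCover G Xt X} {o : X.Orientation} {σ : X.V → Xt.V} {η : X.Edge → G}

/-- The chosen lift of the positive half of `e`, starting at `σ(s(e))`. -/
noncomputable def lft (hrep : c.IsVoltageRep o σ η) (e : X.Edge) : Xt.H := (hrep.lift e).choose

lemma hMap_lft (hrep : c.IsVoltageRep o σ η) (e : X.Edge) : c.hMap (lft hrep e) = o.pick e :=
  (hrep.lift e).choose_spec.1

lemma root_lft (hrep : c.IsVoltageRep o σ η) (e : X.Edge) :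
    Xt.root (lft hrep e) = σ (X.root (o.pick e)) := (hrep.lift e).choose_spec.2.1

lemma root_inv_lft (hrep : c.IsVoltageRep o σ η) (e : X.Edge) :
    Xt.root (Xt.inv (lft hrep e)) = c.smulV (η e) (σ (X.root (X.inv (o.pick e)))) :=
  (hrep.lift e).choose_spec.2.2

/-- The edge fibers are torsors under `G`, so the translates of the chosen lifts enumerate the edges
of the cover. -/
lemma edge_bij (hrep : c.IsVoltageRep o σ η) :
    Function.Bijective (fun p : X.Edge × G => Xt.edgeOf (c.smulH p.2 (lft hrep p.1))) := by
  constructor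
  · rintro ⟨e, g⟩ ⟨e', g'⟩ h
    have h1 := (edgeOf_eq_iff Xt _ _).1 h
    have he : e = e' := by
      have h2 : o.pick e' = o.pick e ∨ o.pick e' = X.inv (o.pick e) := by
        rcases h1 with h1 | h1
        · left
          have := congrArg c.hMap h1
          simpa [c.hMap_smulH, hMap_lft] using this
        · right
          have := congrArg c.hMap h1
          simpa [c.hMap_smulH, hMap_lft, c.hMap_inv] using this
      have := (edgeOf_eq_iff X _ _).2 h2
      rwa [o.pick_spec, o.pick_spec] at this
    subst he
    have hg : g⁻¹ * g' = 1 := by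
      apply c.edge_free _ (lft hrep e)
      simp only at h1
      rw [c.mul_smulH]
      rcases h1 with h1 | h1
      · left; rw [h1, ← c.mul_smulH, inv_mul_cancel, c.one_smulH]
      · right; rw [h1, c.smulH_inv, ← c.mul_smulH, inv_mul_cancel, c.one_smulH]
    rw [inv_mul_eq_one] at hg
    rw [hg]
  · intro et
    obtain ⟨ht, rfl⟩ := Xt.edgeOf_surjective et
    obtain ⟨g, hg⟩ := c.edge_trans (lft hrep (X.edgeOf (c.hMap ht))) ht (by
      rw [hMap_lft]; exact eq_pick_or X o _)
    refine ⟨⟨X.edgeOf (c.hMap ht), g⟩, ?_⟩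
    simp only
    rcases hg with hg | hg
    · rw [hg]
    · rw [hg, Xt.edgeOf_inv]

/-- The edges of the cover are `E(X) × G`. -/
noncomputable def edgeEquiv (hrep : c.IsVoltageRep o σ η) : X.Edge × G ≃ Xt.Edge :=
  Equiv.ofBijective _ (edge_bij hrep)

/-- The orientation of the cover by the translates of the chosen lifts. -/
noncomputable def liftOrient (hrep : c.IsVoltageRep o σ η) : Xt.Orientation where
  pick et := c.smulH ((edgeEquiv hrep).symm et).2 (lft hrep ((edgeEquiv hrep).symm et).1)
  pick_spec et := (edgeEquiv hrep).apply_symm_apply et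

lemma pick_edgeEquiv (hrep : c.IsVoltageRep o σ η) (p : X.Edge × G) :
    (liftOrient hrep).pick (edgeEquiv hrep p) = c.smulH p.2 (lft hrep p.1) := by
  simp [liftOrient]

lemma edgeMap_edgeEquiv (hrep : c.IsVoltageRep o σ η) (p : X.Edge × G) :
    c.toHom.edgeMap (edgeEquiv hrep p) = p.1 := by
  change X.edgeOf (c.hMap (c.smulH p.2 (lft hrep p.1))) = p.1
  rw [c.hMap_smulH, hMap_lft, o.pick_spec]

/-- The index set of the isotypic decomposition of functions on `V(X̃)`: pairs of a character `ρ`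
and a vertex of `X` at which `ρ` is trivial on the dilation subgroup. -/
abbrev Idx (c : GCover G Xt X) : Type := Σ ρ : G →* ℂ, {v // v ∈ unram c ρ}

open Classical in
/-- The `ρ`-equivariant function supported on the fiber over `v`, normalized to `1` at `σ(v)`;
`γ w` is a group element carrying `σ(p(w))` to `w`. -/
noncomputable def phi (c : GCover G Xt X) (γ : Xt.V → G) : Matrix Xt.V (Idx c) ℂ :=
  Matrix.of fun w i => if c.vMap w = i.2 then i.1 (γ w) else 0

lemma phi_smul (hrep : c.IsVoltageRep o σ η) {γ : Xt.V → G}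
    (hγ : ∀ w, c.smulV (γ w) (σ (c.vMap w)) = w) (g : G) (v : X.V) (i : Idx c) :
    phi c γ (c.smulV g (σ v)) i = if v = i.2 then i.1 g else 0 := by
  have hv : c.vMap (c.smulV g (σ v)) = v := by rw [c.vMap_smulV, hrep.sec]
  simp only [phi, Matrix.of_apply, hv]
  split_ifs with h
  · have h1 := hγ (c.smulV g (σ v))
    rw [hv, smulV_eq_smulV, hrep.sec] at h1
    have h2 := (mem_unram c i.1 v).1 (h ▸ i.2.2) _ h1
    rw [map_mul, char_inv] at h2
    have h0 : i.1 g ≠ 0 := fun h0 => by have := norm_char i.1 g; rw [h0] at this; simp at this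
    field_simp at h2
    exact h2
  · rfl

/-- Applied to `phi`, the incidence row at the edge `(e, g)` of the cover is `ρ(g)` times the
`ρ`-twisted incidence row at `e`. -/
lemma phi_row (hrep : c.IsVoltageRep o σ η) {γ : Xt.V → G}
    (hγ : ∀ w, c.smulV (γ w) (σ (c.vMap w)) = w) (p : X.Edge × G) (i : Idx c) :
    ∑ w, row Xt (liftOrient hrep) 1 (edgeEquiv hrep p) w * phi c γ w i =
      i.1 p.2 * row X o (fun e => i.1 (η e)) p.1 i.2 := by
  rw [sum_row, pick_edgeEquiv, ← c.smulH_inv, c.root_smulH, c.root_smulH, root_lft, root_inv_lft,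
    ← c.mul_smulV, phi_smul hrep hγ, phi_smul hrep hγ, row, map_mul]
  simp only [Pi.one_apply]
  split_ifs <;> ring

open Classical in
/-- The functions `phi` block-diagonalize the Laplacian of the cover, with blocks `|G|` times the
twisted Laplacians of the base. -/
lemma phi_lap (hrep : c.IsVoltageRep o σ η) {γ : Xt.V → G}
    (hγ : ∀ w, c.smulV (γ w) (σ (c.vMap w)) = w) (y : X.Edge → ℂ) (i j : Idx c) :
    ((phi c γ)ᴴ * Lap Xt (liftOrient hrep) 1 (fun e => y (c.toHom.edgeMap e)) * phi c γ) i j =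
      if i.1 = j.1 then (Fintype.card G : ℂ) * Lap X o (fun e => i.1 (η e)) y i.2 j.2 else 0 := by
  rw [Lap, wgram_mul]
  simp only [wgram, Matrix.of_apply]
  rw [← Equiv.sum_comp (edgeEquiv hrep), Fintype.sum_prod_type]
  simp only [phi_row hrep hγ, edgeMap_edgeEquiv]
  have h : ∀ e g, y e * (star (i.1 g * row X o (fun e => i.1 (η e)) e i.2) *
      (j.1 g * row X o (fun e => j.1 (η e)) e j.2)) =
      (y e * (star (row X o (fun e => i.1 (η e)) e i.2) * row X o (fun e => j.1 (η e)) e j.2)) *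
        (star (i.1 g) * j.1 g) := by
    intro e g; rw [star_mul']; ring
  simp only [h, ← Finset.mul_sum, char_orth]
  split_ifs with hij
  · have hrw : row X o (fun e => j.1 (η e)) = row X o (fun e => i.1 (η e)) := by
      simp only [hij]
    rw [← Finset.sum_mul, mul_comm, Lap, wgram, Matrix.of_apply, hrw]
  · simp

open Classical in
/-- The functions `phi` are orthogonal for the inner product weighted by `|D(p(w))|`. -/
lemma phi_diag (hrep : c.IsVoltageRep o σ η) {γ : Xt.V → G}
    (hγ : ∀ w, c.smulV (γ w) (σ (c.vMap w)) = w) :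
    (phi c γ)ᴴ * Matrix.diagonal (fun w => (Nat.card (c.dilation (c.vMap w)) : ℂ)) * phi c γ =
      (Fintype.card G : ℂ) • (1 : Matrix (Idx c) (Idx c) ℂ) := by
  ext i j
  rw [Matrix.mul_apply]
  simp only [Matrix.mul_diagonal, Matrix.conjTranspose_apply]
  have h := sum_orbit c σ hrep.sec i.2 (fun w => star (phi c γ w i) * phi c γ w j)
  simp only [phi_smul hrep hγ, if_true] at h
  have h2 : ∀ w, star (phi c γ w i) * (Nat.card (c.dilation (c.vMap w)) : ℂ) * phi c γ w j =
      (Nat.card (c.dilation i.2.1) : ℂ) *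
        (if c.vMap w = i.2 then star (phi c γ w i) * phi c γ w j else 0) := by
    intro w
    split_ifs with hw
    · rw [hw]; ring
    · simp [phi, hw]
  simp only [h2, ← h]
  by_cases hv : (i.2 : X.V) = j.2
  · simp only [hv, if_true, char_orth, Matrix.smul_apply, Matrix.one_apply, smul_eq_mul]
    have : i = j ↔ i.1 = j.1 := by
      obtain ⟨ρ, u, hu⟩ := i
      obtain ⟨ρ', u', hu'⟩ := j
      simp only at hv
      subst hv
      constructor
      · rintro h; rw [h]
      · rintro h; simp only at h; subst h; rfl
    simp [this]
  · have hne : i ≠ j := fun h => hv (by rw [h])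
    simp [hv, hne]

open Classical in
/-- The linear form with coefficients `|D(p(w))|` only sees the invariant functions. -/
lemma phi_delta (hrep : c.IsVoltageRep o σ η) {γ : Xt.V → G}
    (hγ : ∀ w, c.smulV (γ w) (σ (c.vMap w)) = w) (i : Idx c) :
    ∑ w, (Nat.card (c.dilation (c.vMap w)) : ℂ) * phi c γ w i =
      if i.1 = 1 then (Fintype.card G : ℂ) else 0 := by
  have h := sum_orbit c σ hrep.sec i.2 (fun w => phi c γ w i)
  simp only [phi_smul hrep hγ, if_true, sum_char] at h
  rw [h]
  apply Finset.sum_congr rfl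
  intro w _
  by_cases hw : c.vMap w = i.2
  · simp [hw]
  · simp [phi, hw]

lemma card_fiber_mul (hrep : c.IsVoltageRep o σ η) (v : X.V) :
    Nat.card (c.dilation v) * (univ.filter fun w => c.vMap w = v).card = Fintype.card G := by
  have h := sum_orbit c σ hrep.sec v (fun _ => 1)
  rw [← Finset.mul_sum, Finset.sum_boole] at h
  simp only [Finset.sum_const, Finset.card_univ, nsmul_eq_mul, mul_one] at h
  exact_mod_cast h.symm

lemma card_dil_pos (c : GCover G Xt X) (v : X.V) : 0 < Nat.card (c.dilation v) :=
  (Nat.card_pos (α := dil c v))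

lemma card_fiber (hrep : c.IsVoltageRep o σ η) (v : X.V) :
    (univ.filter fun w => c.vMap w = v).card = Fintype.card G / Nat.card (c.dilation v) := by
  rw [← card_fiber_mul hrep v, Nat.mul_div_cancel_left _ (card_dil_pos c v)]

open Classical in
/-- The matrix `phi` is square: the fiber over `v` has `|G| / |D(v)|` elements, which is also the
number of characters trivial on `D(v)`. -/
lemma card_Idx (hrep : c.IsVoltageRep o σ η) : Fintype.card Xt.V = Fintype.card (Idx c) := by
  have h1 : Fintype.card Xt.V = ∑ v, (univ.filter fun w => c.vMap w = v).card := by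
    rw [← Finset.card_univ]
    exact Finset.card_eq_sum_card_fiberwise fun _ _ => Finset.mem_univ _
  have h2 : ∀ v, (univ.filter fun w => c.vMap w = v).card =
      (univ.filter fun ρ : G →* ℂ => v ∈ unram c ρ).card := by
    intro v
    rw [card_fiber hrep, ← Fintype.card_subtype, ← Nat.card_eq_fintype_card,
      ← Nat.card_eq_fintype_card]
    simp only [mem_unram]
    have h3 := card_char_trivial_on (dil c v)
    have h4 := Subgroup.card_eq_card_quotient_mul_card_subgroup (dil c v)
    rw [← h3] at h4
    rw [h4]
    exact Nat.mul_div_cancel _ (card_dil_pos c v)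
  rw [h1, Fintype.card_sigma]
  simp only [h2, Fintype.card_coe, Finset.card_eq_sum_ones, Finset.sum_filter]
  rw [Finset.sum_comm]
  apply Finset.sum_congr rfl
  intro ρ _
  rw [← Finset.sum_filter]
  simp

end Cover

end

/-! ### Block diagonalization of the Laplacian of the cover -/

section

open Matrix Finset SerreGraph

/-- Change of basis `P` between two index types of the same size. -/
lemma det_conj_mul {n m : Type} [Fintype n] [DecidableEq n] [Fintype m] [DecidableEq m]
    (e : n ≃ m) (P : Matrix n m ℂ) (M : Matrix n n ℂ) :
    (Pᴴ * M * P).det = ((P.submatrix id e)ᴴ.det * (P.submatrix id e).det) * M.det := by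
  rw [← Matrix.det_submatrix_equiv_self e]
  have : (Pᴴ * M * P).submatrix e e = (P.submatrix id e)ᴴ * M * P.submatrix id e := by
    ext; simp [Matrix.mul_apply]
  rw [this, Matrix.det_mul, Matrix.det_mul]
  ring

lemma Lap_one_row_sum (X : SerreGraph) (o : X.Orientation) (y : X.Edge → ℂ) (i : X.V) :
    ∑ j, Lap X o 1 y i j = 0 := by
  simp only [Lap, wgram, Matrix.of_apply]
  rw [Finset.sum_comm]
  apply Finset.sum_eq_zero
  intro e _
  have := sum_row X o 1 e 1
  simp only [Pi.one_apply, mul_one, sub_self] at this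
  simp only [← mul_assoc, ← Finset.mul_sum, this, mul_zero]

lemma Lap_one_col_sum (X : SerreGraph) (o : X.Orientation) (y : X.Edge → ℂ) (j : X.V) :
    ∑ i, Lap X o 1 y i j = 0 := by
  simp only [Lap, wgram, Matrix.of_apply]
  rw [Finset.sum_comm]
  apply Finset.sum_eq_zero
  intro e _
  have := sum_row X o 1 e 1
  simp only [Pi.one_apply, mul_one, sub_self] at this
  simp only [← Finset.mul_sum, ← Finset.sum_mul, ← star_sum, this, star_zero, zero_mul, mul_zero]

section Cover

variable {G : Type} [CommGroup G] [Fintype G] {Xt X : SerreGraph}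
variable {c : GCover G Xt X} {o : X.Orientation} {σ : X.V → Xt.V} {η : X.Edge → G}

open Classical in
/-- The diagonal block, indexed by a character `ρ`, of the Laplacian of the cover perturbed by
the rank-one matrix of the vector `w ↦ |D(p(w))|`, up to the factor `|G|`. -/
noncomputable def blk (c : GCover G Xt X) (o : X.Orientation) (η : X.Edge → G) (y : X.Edge → ℂ)
    (ρ : G →* ℂ) : Matrix {v // v ∈ unram c ρ} {v // v ∈ unram c ρ} ℂ :=
  Matrix.of fun u v => Lap X o (fun e => ρ (η e)) y u v +
    if ρ = 1 then (Fintype.card G : ℂ) else 0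

open Classical in
/-- Laplacian of the cover plus the rank-one matrix of `w ↦ |D(p(w))|`, in the basis `phi`. -/
lemma phi_total (hrep : c.IsVoltageRep o σ η) {γ : Xt.V → G}
    (hγ : ∀ w, c.smulV (γ w) (σ (c.vMap w)) = w) (y : X.Edge → ℂ) (i j : Idx c) :
    ((phi c γ)ᴴ * (Lap Xt (liftOrient hrep) 1 (fun e => y (c.toHom.edgeMap e)) +
      Matrix.of fun w w' => 1 * ((Nat.card (c.dilation (c.vMap w)) : ℂ) *
        (Nat.card (c.dilation (c.vMap w')) : ℂ))) * phi c γ) i j =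
      if i.1 = j.1 then (Fintype.card G : ℂ) * (Lap X o (fun e => i.1 (η e)) y i.2 j.2 +
        if i.1 = 1 then (Fintype.card G : ℂ) else 0) else 0 := by
  rw [Matrix.mul_add, Matrix.add_mul, Matrix.add_apply, phi_lap hrep hγ]
  have h : ((phi c γ)ᴴ * (Matrix.of fun w w' => 1 * ((Nat.card (c.dilation (c.vMap w)) : ℂ) *
        (Nat.card (c.dilation (c.vMap w')) : ℂ))) * phi c γ) i j =
      star (∑ w, (Nat.card (c.dilation (c.vMap w)) : ℂ) * phi c γ w i) *
        ∑ w, (Nat.card (c.dilation (c.vMap w)) : ℂ) * phi c γ w j := by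
    rw [star_sum, Finset.sum_mul_sum, Matrix.mul_apply, Finset.sum_comm]
    apply Finset.sum_congr rfl
    intro w' _
    rw [Matrix.mul_apply, Finset.sum_mul]
    apply Finset.sum_congr rfl
    intro w _
    simp only [Matrix.conjTranspose_apply, Matrix.of_apply, star_mul', star_natCast]
    ring
  rw [h, phi_delta hrep hγ, phi_delta hrep hγ]
  by_cases hij : i.1 = j.1
  · rw [if_pos hij, if_pos hij]
    have hj : (j.1 = 1) = (i.1 = 1) := by rw [hij]
    simp only [hj]
    split_ifs
    · rw [star_natCast]; ring
    · simp
  · rw [if_neg hij, if_neg hij]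
    by_cases hi : i.1 = 1
    · have hj : ¬ j.1 = 1 := fun hj => hij (hi.trans hj.symm)
      simp [hj]
    · simp [hi]

open Classical in
/-- Block diagonalization of the perturbed Laplacian of the cover over the characters. -/
lemma det_cover (hrep : c.IsVoltageRep o σ η) (y : X.Edge → ℂ) :
    (Lap Xt (liftOrient hrep) 1 (fun e => y (c.toHom.edgeMap e)) +
      Matrix.of fun w w' => 1 * ((Nat.card (c.dilation (c.vMap w)) : ℂ) *
        (Nat.card (c.dilation (c.vMap w')) : ℂ))).det =
      (∏ w : Xt.V, (Nat.card (c.dilation (c.vMap w)) : ℂ)) * ∏ ρ, (blk c o η y ρ).det := by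
  choose γ hγ using fun w => c.vertex_trans (σ (c.vMap w)) w (hrep.sec _)
  let e : Xt.V ≃ Idx c := Fintype.equivOfCardEq (card_Idx hrep)
  have hN : (Fintype.card G : ℂ) ≠ 0 := Nat.cast_ne_zero.2 Fintype.card_ne_zero
  have h1 := congrArg Matrix.det (phi_diag hrep hγ)
  rw [det_conj_mul e, Matrix.det_diagonal, Matrix.det_smul, Matrix.det_one, mul_one] at h1
  have h2 := det_blocks ((phi c γ)ᴴ * (Lap Xt (liftOrient hrep) 1
      (fun e => y (c.toHom.edgeMap e)) +
      Matrix.of fun w w' => 1 * ((Nat.card (c.dilation (c.vMap w)) : ℂ) *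
        (Nat.card (c.dilation (c.vMap w')) : ℂ))) * phi c γ)
      (fun i j hij => by rw [phi_total hrep hγ, if_neg hij])
  have h3 : ∀ ρ : G →* ℂ, (Matrix.of fun u v : {v // v ∈ unram c ρ} =>
      ((phi c γ)ᴴ * (Lap Xt (liftOrient hrep) 1
      (fun e => y (c.toHom.edgeMap e)) +
      Matrix.of fun w w' => 1 * ((Nat.card (c.dilation (c.vMap w)) : ℂ) *
        (Nat.card (c.dilation (c.vMap w')) : ℂ))) * phi c γ) ⟨ρ, u⟩ ⟨ρ, v⟩).det =
      (Fintype.card G : ℂ) ^ Fintype.card {v // v ∈ unram c ρ} * (blk c o η y ρ).det := by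
    intro ρ
    rw [← Matrix.det_smul]
    congr 1
    ext u v
    rw [Matrix.of_apply, phi_total hrep hγ, if_pos rfl]
    rfl
  simp only [h3] at h2
  rw [Finset.prod_mul_distrib, Finset.prod_pow_eq_pow_sum, ← Fintype.card_sigma] at h2
  have h4 := h2
  rw [det_conj_mul e, ← h1] at h4
  -- The weighted orthogonality `phi_diag` makes `phi` invertible.
  have h5 : ((phi c γ).submatrix id e)ᴴ.det * ((phi c γ).submatrix id e).det ≠ 0 := by
    intro h0
    rw [h0, zero_mul] at h1
    exact pow_ne_zero _ hN h1.symm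
  rw [mul_assoc _ (∏ w, _)] at h4
  exact mul_left_cancel₀ h5 h4

lemma unram_one (c : GCover G Xt X) : unram c 1 = univ := by
  ext v; simp [mem_unram]

lemma det_blk_one (hX : X.Connected) (y : X.Edge → ℂ) (w : X.V) :
    (blk c o η y 1).det = (Fintype.card G : ℂ) * (Fintype.card X.V : ℂ) ^ 2 *
      (Matrix.of fun i j : {v // v ≠ w} => Lap X o 1 y i j).det := by
  have h := det_add_rank_one (Lap X o 1 y) (Lap_one_row_sum X o y) (Lap_one_col_sum X o y)
    (fun _ => 1) (Fintype.card G : ℂ) (by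
      have := hX.1
      simp) w
  simp only [Finset.sum_const, Finset.card_univ, nsmul_eq_mul, mul_one] at h
  rw [← h]
  let e : X.V ≃ {v // v ∈ unram c 1} :=
    (Equiv.subtypeUnivEquiv (fun v => by rw [unram_one]; exact Finset.mem_univ v)).symm
  rw [← Matrix.det_submatrix_equiv_self e]
  congr 1
  ext u v
  simp [blk, e]
  rfl

lemma det_blk_ne {ρ : G →* ℂ} (hρ : ρ ≠ 1) (y : X.Edge → ℂ) :
    (blk c o η y ρ).det = ((Lap X o (fun e => ρ (η e)) y).submatrix
        (Subtype.val : {v // v ∈ unram c ρ} → X.V) Subtype.val).det := by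
  congr 1
  ext u v
  simp [blk, hρ]

/-- The fiber over `v` has `|G| / |D(v)|` elements, each with dilation subgroup `D(v)`. -/
lemma prod_dil (hrep : c.IsVoltageRep o σ η) :
    (∏ w : Xt.V, (Nat.card (c.dilation (c.vMap w)) : ℂ)) =
      ∏ v : X.V, (Nat.card (c.dilation v) : ℂ) ^
        (Fintype.card G / Nat.card (c.dilation v)) := by
  rw [← Finset.prod_fiberwise univ c.vMap]
  apply Finset.prod_congr rfl
  intro v _
  rw [Finset.prod_congr rfl (g := fun _ => (Nat.card (c.dilation v) : ℂ))
    (fun w hw => by rw [(Finset.mem_filter.1 hw).2]), Finset.prod_const, card_fiber hrep]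

lemma sum_dil (hrep : c.IsVoltageRep o σ η) :
    (∑ w : Xt.V, (Nat.card (c.dilation (c.vMap w)) : ℂ)) =
      (Fintype.card G : ℂ) * (Fintype.card X.V : ℂ) := by
  rw [← Finset.sum_fiberwise univ c.vMap, Finset.sum_congr rfl
    (g := fun _ => (Fintype.card G : ℂ))]
  · simp [mul_comm]
  · intro v _
    rw [Finset.sum_congr rfl (g := fun _ => (Nat.card (c.dilation v) : ℂ))
      (fun w hw => by rw [(Finset.mem_filter.1 hw).2]), Finset.sum_const, nsmul_eq_mul,
      ← card_fiber_mul hrep v]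
    push_cast; ring

open Classical in
/-- The factorization of the reduced Laplacian determinant of the cover. -/
lemma det_factor (hX : X.Connected) (hrep : c.IsVoltageRep o σ η) (y : X.Edge → ℂ) (w : X.V)
    (wt : Xt.V) :
    (Matrix.of fun i j : {v // v ≠ wt} =>
      Lap Xt (liftOrient hrep) 1 (fun e => y (c.toHom.edgeMap e)) i j).det =
      (1 / (Fintype.card G : ℂ)) * (∏ v : X.V, (Nat.card (c.dilation v) : ℂ) ^
        (Fintype.card G / Nat.card (c.dilation v))) *
      (Matrix.of fun i j : {v // v ≠ w} => Lap X o 1 y i j).det *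
      ∏ ρ ∈ univ.erase (1 : G →* ℂ), ((Lap X o (fun e => ρ (η e)) y).submatrix
        (Subtype.val : {v // v ∈ unram c ρ} → X.V) Subtype.val).det := by
  have hN : (Fintype.card G : ℂ) ≠ 0 := Nat.cast_ne_zero.2 Fintype.card_ne_zero
  have hV : (Fintype.card X.V : ℂ) ≠ 0 := by have := hX.1; simp
  have h1 := det_cover hrep y
  rw [det_add_rank_one _ (Lap_one_row_sum Xt _ _) (Lap_one_col_sum Xt _ _) _ 1
    (by rw [sum_dil hrep]; exact mul_ne_zero hN hV) wt, sum_dil hrep, prod_dil hrep,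
    ← Finset.mul_prod_erase univ _ (Finset.mem_univ (1 : G →* ℂ)), det_blk_one hX y w,
    Finset.prod_congr rfl (fun ρ hρ => det_blk_ne (Finset.ne_of_mem_erase hρ) y)] at h1
  have h2 : (Fintype.card G : ℂ) ^ 2 * (Fintype.card X.V : ℂ) ^ 2 ≠ 0 := by positivity
  apply mul_left_cancel₀ h2
  rw [one_mul, mul_pow] at h1
  rw [h1]
  field_simp

lemma card_char (G : Type) [CommGroup G] [Fintype G] :
    Fintype.card (G →* ℂ) = Fintype.card G := by
  rw [← Nat.card_eq_fintype_card, ← Nat.card_eq_fintype_card,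
    ← CommGroup.card_monoidHom_of_hasEnoughRootsOfUnity G ℂ]
  exact Nat.card_congr (charEquiv G)

end Cover

end

end JacCover

open SerreGraph in
/-- **Theorem (polynomial form of the main theorem).** For a harmonic Galois cover
`p : X̃ → X` with abelian Galois group `G` of order `N`, the `X`-specialized Jacobian
polynomial of `X̃` factors as
`J_X̃(x_e) = (1/N) · ∏_v |D(v)|^{N/|D(v)|} · J_X(x_e) · ∏_{ρ ≠ 1} P_{X̃/X,ρ}(x_e)`. -/
theorem jacobianPoly_of_abelian_harmonic_cover
    (G : Type) [CommGroup G] [Fintype G] (X Xt : SerreGraph)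
    (hX : X.Connected) (hXt : Xt.Connected)
    (c : GCover G Xt X) (o : X.Orientation) (σ : X.V → Xt.V) (η : X.Edge → G)
    (hrep : c.IsVoltageRep o σ η) :
    MvPolynomial.rename c.toHom.edgeMap (Xt.jacobianPoly ℝ) =
      MvPolynomial.C ((1 / (Fintype.card G : ℝ)) *
          ∏ v : X.V, (Nat.card (c.dilation v) : ℝ) ^
            (Fintype.card G / Nat.card (c.dilation v))) *
        X.jacobianPoly ℝ *
        ∏ᶠ (ρ : G →* ℂ) (_ : ρ ≠ 1), c.twistedWeightPoly o η ρ := by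
  classical
  have hfin : ∏ᶠ (ρ : G →* ℂ) (_ : ρ ≠ 1), c.twistedWeightPoly o η ρ =
      ∏ ρ ∈ Finset.univ.erase (1 : G →* ℂ), c.twistedWeightPoly o η ρ := by
    rw [← finprod_mem_finset_eq_prod]
    simp
  rw [hfin]
  -- It suffices to compare values at positive reals `x`, where the conductances `1 / x_e` make sense.
  refine MvPolynomial.funext_set (fun _ => Set.Ioi (0 : ℝ)) (fun _ => Set.Ioi_infinite 0) ?_
  intro x hx
  have hx0 : ∀ e, x e ≠ 0 := fun e => ne_of_gt (hx e (Set.mem_univ e))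
  obtain ⟨w⟩ := hX.1
  obtain ⟨wt⟩ := hXt.1
  apply Complex.ofReal_injective
  rw [MvPolynomial.eval_rename, JacCover.eval_jacobianPoly Xt (JacCover.liftOrient hrep) (x ∘ c.toHom.edgeMap)
    (fun e => hx0 (c.toHom.edgeMap e)) wt]
  have hdet := JacCover.det_factor hX hrep (fun e => (x e : ℂ)⁻¹) w wt
  simp only [Function.comp_apply]
  rw [hdet, map_mul, map_mul, MvPolynomial.eval_C, map_prod, Complex.ofReal_mul,
    Complex.ofReal_mul, Complex.ofReal_prod, JacCover.eval_jacobianPoly X o x hx0 w]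
  simp only [JacCover.eval_twistedWeightPoly c o η _ x hx0]
  rw [Finset.prod_mul_distrib, Finset.prod_const, Finset.card_erase_of_mem (Finset.mem_univ _),
    Finset.card_univ, JacCover.card_char]
  -- Every edge of `X` has `|G|` lifts: one factor `∏ x_e` goes to `J_X`, and one to each of the
  -- `|G| - 1` nontrivial characters.
  have hprod : ∏ e : Xt.Edge, (x (c.toHom.edgeMap e) : ℂ) =
      (∏ e, (x e : ℂ)) * (∏ e, (x e : ℂ)) ^ (Fintype.card G - 1) := by
    rw [← pow_succ', Nat.sub_add_cancel Fintype.card_pos, ← Equiv.prod_comp (JacCover.edgeEquiv hrep),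
      Fintype.prod_prod_type]
    simp only [JacCover.edgeMap_edgeEquiv, Finset.prod_const, Finset.card_univ]
    rw [Finset.prod_pow]
  rw [hprod]
  push_cast
  ring
end

section
/- Let X be a finite connected graph of genus g. The reciprocal of the metric zeta function of X has Taylor expansion at s = 1 given by ζ_M(s, x_e, X)^{-1} = 2^g · (−1)^{g+1} · (g−1) · J_X(x_e) · (s−1)^g + O((s−1)^{g+1}); that is, the derivatives in s of ζ_M(s, x_e, X)^{-1} at s = 1 vanish to order g−1, and the g-th derivative at s = 1 equals g! · 2^g · (−1)^{g+1} · (g−1) · J_X(x_e) identically in the variables x_e. -/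
/-!
The reciprocal zeta function is the determinant `det (1 - W)` of an edge matrix indexed by
half-edges, with `w e = s ^ x e`. Writing `W = K (S Sᵀ) - K`, where `K` is the weighted involution
matrix and `S` the incidence of half-edges with their roots, the identity
`det (1 - A B) = det (1 - B A)` gives Bass's formula (`bass`):
`det (1 - W) = ∏ e, (1 - w e ^ 2) * det (diag d + L)`.
Here `L` is the weighted Laplacian with edge weights `w e / (1 - w e ^ 2)` and
`d v = 1 - ∑ w / (1 + w)`, the sum running over the half-edges at `v`.

As `s → 1`, each factor `1 - w e ^ 2` is `-2 x e (s - 1)` to first order, while `L` has a simple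
pole. Adding all rows and all columns of `diag d + L` to those of a base vertex `v₀` kills `L` in
that row and column, so that multiplying the remaining `|V| - 1` columns by `s - 1` removes the
pole (`normMat`). Hence `det (1 - W) = (s - 1) ^ g * cofactor s` with `g = |E| - |V| + 1` and
`cofactor` analytic at `1`. At `s = 1` the normalized matrix is block triangular
(`det_normMat_zero`): one block is the sum `∑ v, d v = |V| - |E| = 1 - g`, the other the reduced
Laplacian with weights `-1 / (2 x e)`. The determinant of the latter is a sum over spanning trees
by the matrix-tree theorem (`matrix_tree`), which follows from a Cauchy–Binet expansion
(`det_gram_eq_sum`) and the unimodularity of the reduced incidence matrix of a tree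
(`det_indicator`). Multiplied by `∏ e, (-2 x e)` it becomes `(-2) ^ g * J_X(x)`, and the Leibniz
rule reads off the derivatives (`iteratedDeriv_of_factor`).
-/

set_option autoImplicit false
set_option maxHeartbeats 1000000

/-! ### Cauchy–Binet and the matrix-tree theorem -/

namespace SerreGraph

/-- The Gram-type matrix `B diag(y) Bᵀ`; for an incidence matrix `B` it is the Laplacian with edge
weights `y`. -/
def gram {n E R : Type*} [Fintype E] [CommRing R] (B : Matrix n E R) (y : E → R) : Matrix n n R :=
  Matrix.of fun i j => ∑ e, y e * (B i e * B j e)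

section CauchyBinet

variable {n E R : Type*} [Fintype n] [DecidableEq n] [CommRing R]

/-- The coefficient of `∏ i, y (f i)` in the expansion of `det (B diag(y) Bᵀ)` by multilinearity
in the rows. -/
def rowCoeff (B : Matrix n E R) (f : n → E) : R :=
  (∏ i, B i (f i)) * (Matrix.of fun i j => B j (f i)).det

lemma rowCoeff_eq_zero (B : Matrix n E R) (f : n → E) (hf : ¬ Function.Injective f) :
    rowCoeff B f = 0 := by
  simp only [Function.Injective, not_forall] at hf
  obtain ⟨a, b, hab, hne⟩ := hf
  rw [rowCoeff, Matrix.det_zero_of_row_eq hne (by ext j; simp [hab]), mul_zero]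

lemma det_gram_eq_sum_fun [Fintype E] (B : Matrix n E R) (y : E → R) :
    (gram B y).det = ∑ f : n → E, (∏ i, y (f i)) * rowCoeff B f := by
  have h1 : (gram B y).det = Matrix.detRowAlternating.toMultilinearMap
      (fun i => ∑ e, (y e * B i e) • (fun j => B j e)) := by
    change Matrix.det _ = Matrix.det _
    congr 1
    ext i j
    simp [gram, Finset.sum_apply, mul_assoc]
  rw [h1, MultilinearMap.map_sum]
  refine Finset.sum_congr rfl fun f _ => ?_
  rw [MultilinearMap.map_smul_univ, Finset.prod_mul_distrib, smul_eq_mul, rowCoeff, mul_assoc]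
  rfl

/-- A form of the Cauchy–Binet formula: `det (B diag(y) Bᵀ)` is a combination of squarefree
monomials of degree `|n|` in `y`, the coefficient of `∏ e ∈ F, y e` being the value at the
indicator vector of `F`. -/
lemma det_gram_eq_sum [Fintype E] [DecidableEq E] (B : Matrix n E R) (y : E → R) :
    (gram B y).det = ∑ F ∈ Finset.univ.powersetCard (Fintype.card n),
      (∏ e ∈ F, y e) * (gram B (fun e => if e ∈ F then 1 else 0)).det := by
  have h1 : ∀ F ∈ Finset.univ.powersetCard (Fintype.card n),
      (∏ e ∈ F, y e) * (gram B (fun e => if e ∈ F then 1 else 0)).det =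
      ∑ f : n → E, if F = Finset.univ.image f then (∏ i, y (f i)) * rowCoeff B f else 0 := by
    intro F hF
    rw [Finset.mem_powersetCard_univ] at hF
    rw [det_gram_eq_sum_fun, Finset.mul_sum]
    refine Finset.sum_congr rfl fun f _ => ?_
    by_cases hf : Function.Injective f
    · split_ifs with h
      · subst h
        rw [Finset.prod_image (fun a _ b _ hab => hf hab)]
        simp
      · have : ∃ i, f i ∉ F := by
          by_contra! hc
          refine h (Finset.eq_of_subset_of_card_le ?_ ?_).symm
          · intro e he
            obtain ⟨i, _, rfl⟩ := Finset.mem_image.1 he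
            exact hc i
          · rw [hF, Finset.card_image_of_injective _ hf, Finset.card_univ]
        obtain ⟨i, hi⟩ := this
        rw [Finset.prod_eq_zero (Finset.mem_univ i) (if_neg hi), zero_mul, mul_zero]
    · rw [rowCoeff_eq_zero B f hf]; simp
  rw [Finset.sum_congr rfl h1, Finset.sum_comm, det_gram_eq_sum_fun]
  refine Finset.sum_congr rfl fun f _ => ?_
  by_cases hf : Function.Injective f
  · rw [Finset.sum_ite_eq', if_pos]
    rw [Finset.mem_powersetCard_univ, Finset.card_image_of_injective _ hf, Finset.card_univ]
  · rw [rowCoeff_eq_zero B f hf]; simp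

end CauchyBinet

/-- A chosen half-edge of each edge, orienting it from `root` to `root ∘ inv`. -/
noncomputable def halfOf (X : SerreGraph) (e : X.Edge) : X.H := Quot.out e

lemma edgeOf_halfOf (X : SerreGraph) (e : X.Edge) : X.edgeOf (X.halfOf e) = e := Quot.out_eq e

lemma edgeOf_eq_iff (X : SerreGraph) (a b : X.H) :
    X.edgeOf a = X.edgeOf b ↔ a = b ∨ a = X.inv b := by
  constructor
  · intro h
    let f : X.Edge → Set X.H := Quot.lift (fun h => ({h, X.inv h} : Set X.H)) (by
      rintro a b rfl
      rw [X.inv_inv, Set.pair_comm])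
    have h2 : f (X.edgeOf a) = f (X.edgeOf b) := by rw [h]
    have h3 : a ∈ f (X.edgeOf b) := by
      rw [← h2]; exact Set.mem_insert _ _
    exact h3
  · rintro (rfl | rfl)
    · rfl
    · exact X.edgeOf_inv b

/-- Half-edges are edges together with a direction. -/
noncomputable def halfEquiv (X : SerreGraph) : X.Edge × Bool ≃ X.H :=
  Equiv.ofBijective (fun p => if p.2 then X.halfOf p.1 else X.inv (X.halfOf p.1)) (by
    constructor
    · rintro ⟨e, b⟩ ⟨e', b'⟩ h
      have h1 : e = e' := by
        have := congrArg X.edgeOf h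
        simpa [apply_ite X.edgeOf, edgeOf_inv, edgeOf_halfOf] using this
      subst h1
      have := X.inv_ne (X.halfOf e)
      cases b <;> cases b'
      · rfl
      · exact absurd h this
      · exact absurd h.symm this
      · rfl
    · intro h
      rcases (X.edgeOf_eq_iff h (X.halfOf (X.edgeOf h))).1 (X.edgeOf_halfOf _).symm with h1 | h1
      · exact ⟨(X.edgeOf h, true), h1.symm⟩
      · exact ⟨(X.edgeOf h, false), h1.symm⟩)

lemma halfEquiv_true (X : SerreGraph) (e : X.Edge) : X.halfEquiv (e, true) = X.halfOf e := rfl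

lemma halfEquiv_false (X : SerreGraph) (e : X.Edge) :
    X.halfEquiv (e, false) = X.inv (X.halfOf e) := rfl

lemma sum_half {M : Type*} [AddCommMonoid M] (X : SerreGraph) (f : X.H → M) :
    ∑ h, f h = ∑ e, (f (X.halfOf e) + f (X.inv (X.halfOf e))) := by
  rw [← X.halfEquiv.sum_comp, Fintype.sum_prod_type]
  simp [halfEquiv_true, halfEquiv_false]

/-- The signed incidence matrix for the orientation `halfOf`; loops give zero columns. -/
noncomputable def inc (X : SerreGraph) : Matrix X.V X.Edge ℤ := Matrix.of fun v e =>
  (if X.root (X.halfOf e) = v then 1 else 0) - (if X.root (X.inv (X.halfOf e)) = v then 1 else 0)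

/-- The adjacency relation along edges of `F`, as in `IsSpanningTree`. -/
def stepIn (X : SerreGraph) (F : Finset X.Edge) (a b : X.V) : Prop :=
  ∃ h, X.root h = a ∧ X.root (X.inv h) = b ∧ X.edgeOf h ∈ F

/-- A path in `F` gives an integral `1`-chain supported on `F` whose boundary is the difference
of the endpoints. -/
lemma exists_chain (X : SerreGraph) (F : Finset X.Edge) {u v : X.V}
    (h : Relation.ReflTransGen (X.stepIn F) u v) :
    ∃ z : X.Edge → ℤ, (∀ e ∉ F, z e = 0) ∧ ∀ w, ∑ e, X.inc w e * z e =
      (if v = w then 1 else 0) - (if u = w then 1 else 0) := by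
  induction h with
  | refl => exact ⟨0, by simp, by simp⟩
  | @tail b c _ hbc ih =>
    obtain ⟨z, hz, hw⟩ := ih
    obtain ⟨k, rfl, rfl, hk⟩ := hbc
    -- the sign with which `k` traverses its edge
    have key : ∃ t : ℤ, ∀ w, X.inc w (X.edgeOf k) * t =
        (if X.root (X.inv k) = w then 1 else 0) - (if X.root k = w then 1 else 0) := by
      rcases (X.edgeOf_eq_iff k (X.halfOf (X.edgeOf k))).1 (X.edgeOf_halfOf _).symm with h1 | h1
      · refine ⟨-1, fun w => ?_⟩
        simp only [inc, Matrix.of_apply, ← h1]; ring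
      · refine ⟨1, fun w => ?_⟩
        have h2 : X.halfOf (X.edgeOf k) = X.inv k := by
          rw [h1, X.inv_inv, ← h1]
        simp only [inc, Matrix.of_apply, h2, X.inv_inv]; ring
    obtain ⟨t, ht⟩ := key
    refine ⟨z + Pi.single (X.edgeOf k) t, fun e he => ?_, fun w => ?_⟩
    · have : e ≠ X.edgeOf k := fun h => he (h ▸ hk)
      simp [hz e he, this]
    · simp only [Pi.add_apply, mul_add, Finset.sum_add_distrib, hw]
      rw [Finset.sum_eq_single (X.edgeOf k) (by intro b _ hb; simp [hb]) (by simp)]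
      rw [Pi.single_eq_same, ht]; ring

/-- Both ends of an edge of `F` lie in the same `F`-component; hence the indicator of an
`F`-component is annihilated by the columns of `inc` in `F`. -/
lemma component_closed (X : SerreGraph) (F : Finset X.Edge) (u : X.V) (e : X.Edge) (he : e ∈ F) :
    Relation.ReflTransGen (X.stepIn F) u (X.root (X.halfOf e)) ↔
      Relation.ReflTransGen (X.stepIn F) u (X.root (X.inv (X.halfOf e))) := by
  constructor
  · intro h
    exact h.tail ⟨X.halfOf e, rfl, rfl, by rwa [edgeOf_halfOf]⟩
  · intro h
    exact h.tail ⟨X.inv (X.halfOf e), rfl, by rw [X.inv_inv], by rwa [edgeOf_inv, edgeOf_halfOf]⟩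

/-- The incidence matrix with the row of the base vertex `v₀` removed. -/
noncomputable def redInc (X : SerreGraph) (v₀ : X.V) : Matrix {v : X.V // v ≠ v₀} X.Edge ℤ :=
  X.inc.submatrix Subtype.val id

lemma card_ne (X : SerreGraph) (v₀ : X.V) :
    Fintype.card {v : X.V // v ≠ v₀} + 1 = Fintype.card X.V := by
  have h1 := Fintype.card_subtype_compl (fun v : X.V => v = v₀)
  have h2 : 0 < Fintype.card X.V := Fintype.card_pos_iff.2 ⟨v₀⟩
  simp only [Fintype.card_subtype_eq] at h1
  have h3 : Fintype.card {v : X.V // v ≠ v₀} = Fintype.card {v : X.V // ¬ v = v₀} := by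
    congr!
  omega

open Matrix in
/-- The reduced Laplacian of `(V, F)` with `|F| = |V| - 1` detects spanning trees: it has the form
`A Aᵀ` with `A` square, unimodular when `F` connects `V` and singular otherwise. -/
lemma det_indicator (X : SerreGraph) (v₀ : X.V) (F : Finset X.Edge)
    (hF : F.card = Fintype.card {v : X.V // v ≠ v₀}) [Decidable (X.IsSpanningTree F)] :
    (gram (X.redInc v₀) (fun e => if e ∈ F then 1 else 0)).det
      = if X.IsSpanningTree F then 1 else 0 := by
  classical
  have hcardV := X.card_ne v₀
  let σ : {v : X.V // v ≠ v₀} ≃ F := Fintype.equivOfCardEq (by simpa using hF.symm)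
  let A : Matrix {v : X.V // v ≠ v₀} {v : X.V // v ≠ v₀} ℤ :=
    (X.redInc v₀).submatrix id (fun i => (σ i : X.Edge))
  have hsum : ∀ f : X.Edge → ℤ, ∑ i, f (σ i) = ∑ e, if e ∈ F then f e else 0 := by
    intro f
    rw [σ.sum_comp (fun e : F => f e), Finset.sum_coe_sort F f]
    simp
  have hA : gram (X.redInc v₀) (fun e => if e ∈ F then 1 else 0) = A * Aᵀ := by
    ext i j
    simp only [A, gram, of_apply, Matrix.mul_apply, transpose_apply, submatrix_apply, id]
    rw [hsum (fun e => X.redInc v₀ i e * X.redInc v₀ j e)]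
    refine Finset.sum_congr rfl fun e _ => ?_
    split_ifs <;> simp
  rw [hA, det_mul, det_transpose]
  split_ifs with hT
  · have h := fun v : {v : X.V // v ≠ v₀} => X.exists_chain F (hT.1 v₀ v)
    choose z hz hw using h
    let Q : Matrix {v : X.V // v ≠ v₀} {v : X.V // v ≠ v₀} ℤ := Matrix.of fun i v => z v (σ i)
    have hQ : A * Q = 1 := by
      ext i j
      simp only [A, Q, Matrix.mul_apply, submatrix_apply, id, of_apply]
      rw [hsum (fun e => X.redInc v₀ i e * z j e)]
      have h1 : ∀ e, (if e ∈ F then X.redInc v₀ i e * z j e else 0) = X.inc i e * z j e := by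
        intro e
        split_ifs with he
        · rfl
        · simp [hz j e he]
      simp only [h1, hw, Matrix.one_apply]
      have h2 : v₀ ≠ (i : X.V) := i.2.symm
      simp [h2, Subtype.ext_iff, eq_comm]
    have := Int.isUnit_mul_self (isUnit_det_of_right_inverse hQ)
    exact this
  · have hnc : ∃ v, ¬ Relation.ReflTransGen (X.stepIn F) v₀ v := by
      by_contra! hc
      have hsymm : ∀ a b, Relation.ReflTransGen (X.stepIn F) a b →
          Relation.ReflTransGen (X.stepIn F) b a := by
        intro a b hab
        induction hab with
        | refl => exact Relation.ReflTransGen.refl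
        | tail _ hbc ih =>
          obtain ⟨h, h1, h2, h3⟩ := hbc
          exact Relation.ReflTransGen.head
            ⟨X.inv h, h2, by rw [X.inv_inv, h1], by rwa [edgeOf_inv]⟩ ih
      exact hT ⟨fun u v => (hsymm _ _ (hc u)).trans (hc v), by rw [hF, hcardV]⟩
    obtain ⟨v, hv⟩ := hnc
    have : A.det = 0 := by
      rw [← exists_vecMul_eq_zero_iff]
      -- the indicator of the complement of the component of `v₀`
      let g : X.V → ℤ := fun w => if Relation.ReflTransGen (X.stepIn F) v₀ w then 0 else 1
      refine ⟨fun i => g i, ?_, ?_⟩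
      · intro h0
        have hne : v ≠ v₀ := by
          rintro rfl
          exact hv Relation.ReflTransGen.refl
        have := congrFun h0 ⟨v, hne⟩
        simp [g, hv] at this
      · ext i
        simp only [vecMul, dotProduct, A, submatrix_apply, id, Pi.zero_apply]
        have h1 : ∑ w : {w : X.V // w ≠ v₀}, g w * X.redInc v₀ w (σ i)
            = ∑ w, g w * X.inc w (σ i) := by
          rw [Fintype.sum_eq_add_sum_subtype_ne _ v₀]
          have h3 : g v₀ = 0 := if_pos Relation.ReflTransGen.refl
          rw [h3, zero_mul, zero_add]
          rfl
        rw [h1]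
        have h2 := X.component_closed F v₀ (σ i) (σ i).2
        simp only [inc, of_apply, mul_sub, Finset.sum_sub_distrib, mul_ite, mul_one, mul_zero,
          Finset.sum_ite_eq, Finset.mem_univ, if_true]
        simp only [g, h2, sub_self]
    rw [this, zero_mul]

/-- The weighted matrix-tree theorem, for the Laplacian reduced at `v₀`. -/
lemma matrix_tree (X : SerreGraph) (v₀ : X.V) (y : X.Edge → ℝ) :
    (gram ((X.redInc v₀).map (Int.cast : ℤ → ℝ)) y).det = ∑ T ∈ X.spanningTrees, ∏ e ∈ T, y e := by
  classical
  rw [det_gram_eq_sum]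
  have h1 : ∀ F ∈ Finset.univ.powersetCard (Fintype.card {v : X.V // v ≠ v₀}),
      (∏ e ∈ F, y e) * (gram ((X.redInc v₀).map (Int.cast : ℤ → ℝ))
        (fun e => if e ∈ F then 1 else 0)).det =
      if X.IsSpanningTree F then ∏ e ∈ F, y e else 0 := by
    intro F hF
    rw [Finset.mem_powersetCard_univ] at hF
    have h2 : gram ((X.redInc v₀).map (Int.cast : ℤ → ℝ)) (fun e => if e ∈ F then 1 else 0) =
        (Int.castRingHom ℝ).mapMatrix (gram (X.redInc v₀) (fun e => if e ∈ F then 1 else 0)) := by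
      ext i j
      simp [gram]
    rw [h2, ← RingHom.map_det, X.det_indicator v₀ F hF]
    split_ifs <;> simp
  rw [Finset.sum_congr rfl h1, ← Finset.sum_filter]
  refine Finset.sum_congr ?_ fun _ _ => rfl
  ext T
  have := X.card_ne v₀
  simp only [spanningTrees, Finset.mem_filter, Finset.mem_powersetCard_univ, Set.Finite.mem_toFinset]
  change _ ↔ X.IsSpanningTree T
  refine ⟨fun h => h.2, fun h => ⟨?_, h⟩⟩
  have := h.2
  omega

end SerreGraph

/-! ### Bass's determinant formula -/

namespace SerreGraph

lemma halfOf_inj (X : SerreGraph) {e e' : X.Edge} : X.halfOf e = X.halfOf e' ↔ e = e' :=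
  ⟨fun h => by rw [← X.edgeOf_halfOf e, h, X.edgeOf_halfOf], fun h => by rw [h]⟩

lemma inv_inj (X : SerreGraph) {a b : X.H} : X.inv a = X.inv b ↔ a = b :=
  ⟨fun h => by rw [← X.inv_inv a, h, X.inv_inv], fun h => by rw [h]⟩

lemma halfOf_ne_inv (X : SerreGraph) (e e' : X.Edge) : X.halfOf e ≠ X.inv (X.halfOf e') := by
  intro h
  have h1 : e = e' := by
    rw [← X.edgeOf_halfOf e, h, X.edgeOf_inv, X.edgeOf_halfOf]
  subst h1
  exact X.inv_ne _ h.symm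

open Matrix

/-- The weighted matrix of the involution: `K a b = w a` for `b = inv a`. -/
noncomputable def flipMat (X : SerreGraph) (w : X.Edge → ℝ) : Matrix X.H X.H ℝ :=
  Matrix.of fun a b => if b = X.inv a then w (X.edgeOf a) else 0

lemma det_one_add_flip (X : SerreGraph) (w : X.Edge → ℝ) :
    (1 + X.flipMat w).det = ∏ e, (1 - w e ^ 2) := by
  have h1 : (1 + X.flipMat w).submatrix ((Equiv.prodComm Bool X.Edge).trans X.halfEquiv)
      ((Equiv.prodComm Bool X.Edge).trans X.halfEquiv) =
      blockDiagonal (fun e : X.Edge => (Matrix.of fun b b' => if b = b' then 1 else w e :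
        Matrix Bool Bool ℝ)) := by
    ext ⟨b, e⟩ ⟨b', e'⟩
    have hne := X.halfOf_ne_inv e e'
    have hne' := (X.halfOf_ne_inv e' e).symm
    by_cases h : e = e'
    · subst h
      cases b <;> cases b' <;>
      simp [flipMat, blockDiagonal_apply, halfEquiv_true, halfEquiv_false, Matrix.one_apply, X.inv_inv,
        X.inv_inj, X.halfOf_inj, hne, hne', edgeOf_inv, edgeOf_halfOf]
    · have h' : ¬ e' = e := fun h1 => h h1.symm
      cases b <;> cases b' <;>
      simp [flipMat, blockDiagonal_apply, halfEquiv_true, halfEquiv_false, Matrix.one_apply, X.inv_inv,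
        X.inv_inj, X.halfOf_inj, hne, hne', h, h', hne.symm, hne'.symm]
  rw [← det_submatrix_equiv_self ((Equiv.prodComm Bool X.Edge).trans X.halfEquiv), h1,
    det_blockDiagonal]
  refine Finset.prod_congr rfl fun e _ => ?_
  rw [← det_submatrix_equiv_self finTwoEquiv, det_fin_two]
  simp [finTwoEquiv]
  ring

lemma flip_mul_flip (X : SerreGraph) (w : X.Edge → ℝ) :
    X.flipMat w * X.flipMat w = diagonal fun a => w (X.edgeOf a) ^ 2 := by
  ext a b
  rw [Matrix.mul_apply, Finset.sum_eq_single (X.inv a)]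
  · by_cases h : a = b
    · subst h
      simp [flipMat, X.inv_inv, edgeOf_inv, sq]
    · simp [flipMat, X.inv_inv, h, Ne.symm h]
  · intro c _ hc
    simp [flipMat, hc]
  · simp

/-- The diagonal part at a vertex of the vertex matrix of the determinant formula. -/
noncomputable def diagPart (X : SerreGraph) (w : X.Edge → ℝ) (v : X.V) : ℝ :=
  1 - ∑ a : X.H, if X.root a = v then w (X.edgeOf a) / (1 + w (X.edgeOf a)) else 0

/-- The real incidence matrix. -/
noncomputable def incR (X : SerreGraph) : Matrix X.V X.Edge ℝ := X.inc.map (Int.cast : ℤ → ℝ)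

/-- Bass's determinant formula, with the vertex matrix split as diagonal plus Laplacian. -/
lemma bass (X : SerreGraph) (w : X.Edge → ℝ) (hw : ∀ e, 1 - w e ^ 2 ≠ 0) :
    Matrix.det ((1 : Matrix X.H X.H ℝ) - Matrix.of fun a b : X.H =>
      if X.root (X.inv a) = X.root b ∧ b ≠ X.inv a then w (X.edgeOf a) else 0) =
    (∏ e, (1 - w e ^ 2)) *
      (diagonal (X.diagPart w) + gram X.incR (fun e => w e / (1 - w e ^ 2))).det := by
  let K := X.flipMat w
  -- the incidence of half-edges with their roots
  let S : Matrix X.H X.V ℝ := Matrix.of fun a v => if X.root a = v then 1 else 0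
  have hKS : ∀ a v, (K * S) a v = if X.root (X.inv a) = v then w (X.edgeOf a) else 0 := by
    intro a v
    rw [Matrix.mul_apply, Finset.sum_eq_single (X.inv a)]
    · simp [K, S, flipMat]
    · intro c _ hc
      simp [K, flipMat, hc]
    · simp
  have h1 : ((1 : Matrix X.H X.H ℝ) - Matrix.of fun a b : X.H =>
      if X.root (X.inv a) = X.root b ∧ b ≠ X.inv a then w (X.edgeOf a) else 0) =
      1 + K - K * S * Sᵀ := by
    ext a b
    have : (K * S * Sᵀ) a b = if X.root (X.inv a) = X.root b then w (X.edgeOf a) else 0 := by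
      rw [Matrix.mul_apply, Finset.sum_eq_single (X.root b)]
      · rw [hKS]; simp [S]
      · intro c _ hc
        simp [S, hc.symm]
      · simp
    rw [Matrix.sub_apply, Matrix.sub_apply, this, Matrix.add_apply]
    simp only [K, flipMat, of_apply]
    by_cases hb : b = X.inv a
    · subst hb; simp
    · simp [hb]
  let I : Matrix X.H X.H ℝ := diagonal fun a => (1 - w (X.edgeOf a) ^ 2)⁻¹
  have hR : I * (1 - K) * (1 + K) = 1 := by
    rw [Matrix.mul_assoc, show (1 - K) * (1 + K) = 1 - K * K by noncomm_ring,
      show K * K = diagonal _ from X.flip_mul_flip w, ← diagonal_one, diagonal_sub,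
      diagonal_mul_diagonal]
    congr 1
    ext a
    exact inv_mul_cancel₀ (hw _)
  have hR' := mul_eq_one_comm.1 hR
  obtain ⟨Z, hZ⟩ : ∃ Z : Matrix X.H X.V ℝ, Z = I * (1 - K) * (K * S) := ⟨_, rfl⟩
  have h2 : 1 + K - K * S * Sᵀ = (1 + K) * (1 - Z * Sᵀ) := by
    have h3 : (1 + K) * (Z * Sᵀ) = K * S * Sᵀ := by
      rw [hZ, ← Matrix.mul_assoc (1 + K), ← Matrix.mul_assoc (1 + K), hR', Matrix.one_mul]
    rw [Matrix.mul_sub, h3, Matrix.mul_one]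
  rw [h1, h2, det_mul, det_one_sub_mul_comm, show (1 + K).det = _ from X.det_one_add_flip w]
  congr 2
  have hIKS : ∀ a v, Z a v = (1 - w (X.edgeOf a) ^ 2)⁻¹ *
      ((if X.root (X.inv a) = v then w (X.edgeOf a) else 0) -
        (if X.root a = v then w (X.edgeOf a) ^ 2 else 0)) := by
    intro a v
    rw [hZ, Matrix.mul_assoc, Matrix.sub_mul, Matrix.one_mul, ← Matrix.mul_assoc K K S,
      show K * K = diagonal _ from X.flip_mul_flip w, diagonal_mul, Matrix.sub_apply, hKS,
      diagonal_mul]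
    simp [S]
  ext v v'
  rw [Matrix.sub_apply, Matrix.mul_apply, Matrix.add_apply]
  simp only [hIKS, diagonal_apply, diagPart, gram, of_apply, sum_half, incR, inc, map_apply,
    edgeOf_inv, edgeOf_halfOf, X.inv_inv, S, transpose_apply]
  rw [Matrix.one_apply]
  have key : ∀ e, w e / (1 + w e) = (w e - w e ^ 2) / (1 - w e ^ 2) := by
    intro e
    have h0 := hw e
    have h3 : 1 + w e ≠ 0 := fun h => h0 (by linear_combination (1 - w e) * h)
    rw [div_eq_div_iff h3 h0]; ring
  simp only [key]
  by_cases hv : v = v'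
  · subst hv
    simp only [if_true, sub_add, ← Finset.sum_sub_distrib]
    congr 1
    refine Finset.sum_congr rfl fun e _ => ?_
    push_cast
    split_ifs <;> ring
  · simp only [hv, if_false, zero_sub, zero_add, ← Finset.sum_neg_distrib]
    refine Finset.sum_congr rfl fun e _ => ?_
    push_cast
    by_cases ha : X.root (X.halfOf e) = v <;> by_cases hb : X.root (X.inv (X.halfOf e)) = v <;>
    simp only [ha, hb, hv, if_true, if_false] <;> (try split_ifs) <;> ring

end SerreGraph

/-! ### Normalization of the vertex matrix; Taylor coefficients of a factored function -/

namespace SerreGraph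

open Matrix Filter Topology

/-- The unipotent matrix that adds all columns (rows) to the one of `v₀`. -/
noncomputable def colSum (X : SerreGraph) (v₀ : X.V) : Matrix X.V X.V ℝ :=
  Matrix.of fun v w => if w = v₀ then 1 else if v = w then 1 else 0

lemma det_colSum (X : SerreGraph) (v₀ : X.V) : (X.colSum v₀).det = 1 := by
  have h : X.colSum v₀ = (1 : Matrix X.V X.V ℝ).updateCol v₀ 1 := by
    ext v w
    simp [colSum, updateCol_apply, Matrix.one_apply]
  rw [h, ← cramer_apply, cramer_one]
  rfl

lemma gram_eq {n E : Type*} [Fintype E] [DecidableEq E] (B : Matrix n E ℝ) (y : E → ℝ) :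
    gram B y = B * diagonal y * Bᵀ := by
  ext i j
  rw [Matrix.mul_apply]
  simp only [gram, of_apply, mul_diagonal, transpose_apply]
  exact Finset.sum_congr rfl fun e _ => by ring

/-- The incidence matrix with the row of `v₀` set to zero. -/
noncomputable def incZ (X : SerreGraph) (v₀ : X.V) : Matrix X.V X.Edge ℝ :=
  Matrix.of fun v e => if v = v₀ then 0 else X.incR v e

lemma colSum_mul_inc (X : SerreGraph) (v₀ : X.V) : (X.colSum v₀)ᵀ * X.incR = X.incZ v₀ := by
  ext v e
  rw [Matrix.mul_apply]
  by_cases h : v = v₀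
  · simp [colSum, incZ, h, incR, inc]
  · simp [colSum, incZ, h]

/-- For `t ≠ 0`, the matrix `diag d + Laplacian` with edge weights `c / t`, after adding all rows
and columns to those of `v₀` and multiplying the columns other than `v₀` by `t`. Written without
division by `t`, so that it also makes sense at `t = 0`. -/
noncomputable def normMat (X : SerreGraph) (v₀ : X.V) (d : X.V → ℝ) (c : X.Edge → ℝ) (t : ℝ) :
    Matrix X.V X.V ℝ :=
  Matrix.of fun v w => ((X.colSum v₀)ᵀ * diagonal d * X.colSum v₀) v w *
    (if w = v₀ then 1 else t) + gram (X.incZ v₀) c v w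

lemma det_normMat (X : SerreGraph) (v₀ : X.V) (d : X.V → ℝ) (c : X.Edge → ℝ) (t : ℝ) :
    (X.normMat v₀ d (fun e => t * c e) t).det =
      (diagonal d + gram X.incR c).det * t ^ Fintype.card {v : X.V // v ≠ v₀} := by
  have h : X.normMat v₀ d (fun e => t * c e) t =
      (X.colSum v₀)ᵀ * (diagonal d + gram X.incR c) * X.colSum v₀ *
        diagonal (fun w => if w = v₀ then 1 else t) := by
    have h1 : (X.colSum v₀)ᵀ * gram X.incR c * X.colSum v₀ = gram (X.incZ v₀) c := by
      rw [gram_eq, gram_eq, ← colSum_mul_inc, transpose_mul, transpose_transpose]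
      simp only [Matrix.mul_assoc]
    rw [Matrix.mul_add, Matrix.add_mul, h1]
    ext v w
    rw [mul_diagonal, Matrix.add_apply, normMat, of_apply, add_mul]
    congr 1
    simp only [gram, of_apply, Finset.sum_mul]
    refine Finset.sum_congr rfl fun e _ => ?_
    by_cases hw : w = v₀
    · simp [incZ, hw]
    · simp only [hw, if_false]; ring
  rw [h, det_mul, det_mul, det_mul, det_transpose, det_colSum, det_diagonal,
    Fintype.prod_eq_mul_prod_subtype_ne _ v₀]
  have h2 : ∀ i : {v : X.V // v ≠ v₀}, (if (i : X.V) = v₀ then (1 : ℝ) else t) = t :=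
    fun i => if_neg i.2
  simp [h2]

/-- At `t = 0` the matrix `normMat` is block triangular, with the `1 × 1` block `∑ v, d v` and
the reduced Laplacian on the diagonal. -/
lemma det_normMat_zero (X : SerreGraph) (v₀ : X.V) (d : X.V → ℝ) (c : X.Edge → ℝ) :
    (X.normMat v₀ d c 0).det = (∑ v, d v) * ∑ T ∈ X.spanningTrees, ∏ e ∈ T, c e := by
  rw [← X.matrix_tree v₀, twoBlockTriangular_det _ (fun v => v ≠ v₀), mul_comm]
  · congr 1
    · have : Unique {v : X.V // ¬ v ≠ v₀} :=
        ⟨⟨⟨v₀, by simp⟩⟩, fun v => Subtype.ext (not_not.1 v.2)⟩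
      have hd : ((default : {v : X.V // ¬ v ≠ v₀}) : X.V) = v₀ :=
        not_not.1 (default : {v : X.V // ¬ v ≠ v₀}).2
      rw [det_unique]
      simp [toSquareBlockProp, normMat, gram, incZ, hd, Matrix.mul_apply, diagonal_apply, colSum]
    · congr 1
      ext i j
      have hi := i.2
      have hj := j.2
      simp [toSquareBlockProp, normMat, gram, incZ, incR, redInc, hi, hj]
  · intro i hi j hj
    have hi' : i = v₀ := not_not.1 hi
    subst hi'
    simp [normMat, hj, gram, incZ]

/-- A connected graph has at least `|V| - 1` edges: its reduced incidence matrix has a right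
inverse. Hence the subtraction defining `genus` is not truncated. -/
lemma card_le (X : SerreGraph) (hX : X.Connected) :
    Fintype.card X.V ≤ Fintype.card X.Edge + 1 := by
  obtain ⟨v₀⟩ := hX.1
  have hmono : ∀ v, Relation.ReflTransGen (X.stepIn Finset.univ) v₀ v := by
    intro v
    refine Relation.ReflTransGen.mono ?_ _ _ (hX.2 v₀ v)
    rintro a b ⟨h, h1, h2, _⟩
    exact ⟨h, h1, h2, Finset.mem_univ _⟩
  choose z _ hz using fun v => X.exists_chain _ (hmono v)
  have h1 : X.redInc v₀ * (Matrix.of fun e (v : {v : X.V // v ≠ v₀}) => z v e) = 1 := by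
    ext i j
    simp only [redInc, Matrix.mul_apply, submatrix_apply, id, of_apply, hz, Matrix.one_apply]
    have h2 : v₀ ≠ (i : X.V) := i.2.symm
    simp [h2, Subtype.ext_iff, eq_comm]
  have h2 := rank_mul_le_left (X.redInc v₀) (Matrix.of fun e (v : {v : X.V // v ≠ v₀}) => z v e)
  rw [h1, rank_one] at h2
  have h3 := rank_le_card_width (X.redInc v₀)
  have := X.card_ne v₀
  omega

/-- Taylor coefficients of `(s - 1) ^ g * h s` up to order `g`. -/
lemma iteratedDeriv_of_factor (g : ℕ) (f h : ℝ → ℝ) (hh : AnalyticAt ℝ h 1)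
    (hf : f =ᶠ[𝓝 1] fun s => (s - 1) ^ g * h s) :
    (∀ k < g, iteratedDeriv k f 1 = 0) ∧ iteratedDeriv g f 1 = g.factorial * h 1 := by
  have h0 : ∀ i, iteratedDeriv i (fun s : ℝ => (s - 1) ^ g) 1 =
      if i = g then (g.factorial : ℝ) else 0 := by
    intro i
    have := congrFun (iteratedDeriv_comp_sub_const (𝕜 := ℝ) i (fun s : ℝ => s ^ g) 1) 1
    rw [this]
    simp only [sub_self]
    simpa using iteratedDeriv_fun_pow_zero (𝕜 := ℝ) (n := i) (m := g)
  have h1 : ∀ k, iteratedDeriv k f 1 = ∑ i ∈ Finset.range (k + 1), (k.choose i : ℝ) *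
      (if i = g then (g.factorial : ℝ) else 0) * iteratedDeriv (k - i) h 1 := by
    intro k
    rw [hf.iteratedDeriv_eq, iteratedDeriv_fun_mul (by fun_prop) hh.contDiffAt]
    simp only [h0]
  refine ⟨fun k hk => ?_, ?_⟩
  · rw [h1]
    refine Finset.sum_eq_zero fun i hi => ?_
    have : i ≠ g := by
      have := Finset.mem_range.1 hi
      omega
    simp [this]
  · rw [h1, Finset.sum_eq_single g]
    · simp
    · intro i _ hi
      simp [hi]
    · simp

lemma analyticAt_det {n : Type*} [Fintype n] [DecidableEq n] (A : ℝ → Matrix n n ℝ) (a : ℝ)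
    (h : ∀ i j, AnalyticAt ℝ (fun s => A s i j) a) : AnalyticAt ℝ (fun s => (A s).det) a := by
  simp only [det_apply']
  refine Finset.analyticAt_fun_sum _ fun σ _ => ?_
  exact analyticAt_const.mul (Finset.analyticAt_fun_prod _ fun i _ => h _ _)

lemma analyticAt_rpow_one (p : ℝ) : AnalyticAt ℝ (fun s : ℝ => s ^ p) 1 :=
  (Real.contDiffAt_rpow_const_of_ne one_ne_zero).analyticAt

lemma analyticAt_dslope {f : ℝ → ℝ} {a : ℝ} (hf : AnalyticAt ℝ f a) :
    AnalyticAt ℝ (dslope f a) a := by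
  obtain ⟨p, hp⟩ := hf
  exact ⟨_, hp.has_fpower_series_dslope_fslope⟩

end SerreGraph

/-! ### The order of vanishing and the leading coefficient -/

namespace SerreGraph

open Matrix Filter Topology

/-- The difference quotient between `1` and `s` of `s ↦ (s ^ p) ^ 2`. -/
noncomputable def quot (p : ℝ) : ℝ → ℝ := dslope (fun s : ℝ => (s ^ p) ^ 2) 1

lemma analyticAt_quot (p : ℝ) : AnalyticAt ℝ (quot p) 1 :=
  analyticAt_dslope ((analyticAt_rpow_one p).fun_pow 2)

lemma quot_one (p : ℝ) : quot p 1 = 2 * p := by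
  rw [quot, dslope_same]
  have h := ((Real.hasDerivAt_rpow_const (x := 1) (p := p) (Or.inl one_ne_zero)).fun_pow 2).deriv
  rw [h]
  simp

lemma quot_mul (p s : ℝ) : (s - 1) * quot p s = (s ^ p) ^ 2 - 1 := by
  have := sub_smul_dslope (fun s : ℝ => (s ^ p) ^ 2) 1 s
  simpa [quot] using this

/-- The cofactor of `(s - 1) ^ g` in the reciprocal zeta function. Here `-quot (x e) s` is
`(1 - s ^ (2 * x e)) / (s - 1)`, and the weights of `normMat` are `s - 1` times the weights
`s ^ x e / (1 - s ^ (2 * x e))` of `bass`, so that the pole at `s = 1` cancels. -/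
noncomputable def cofactor (X : SerreGraph) (x : X.Edge → ℝ) (v₀ : X.V) (s : ℝ) : ℝ :=
  (∏ e, -quot (x e) s) * (X.normMat v₀ (X.diagPart fun e => s ^ x e)
    (fun e => -(s ^ x e / quot (x e) s)) (s - 1)).det

lemma analyticAt_cofactor (X : SerreGraph) (x : X.Edge → ℝ) (hx : ∀ e, 0 < x e) (v₀ : X.V) :
    AnalyticAt ℝ (X.cofactor x v₀) 1 := by
  refine AnalyticAt.mul (Finset.analyticAt_fun_prod _ fun e _ => (analyticAt_quot _).neg) ?_
  refine analyticAt_det _ _ fun v w => ?_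
  have hu := fun e => analyticAt_rpow_one (x e)
  have hq := fun e => analyticAt_quot (x e)
  have hd : ∀ v, AnalyticAt ℝ (fun s => X.diagPart (fun e => s ^ x e) v) 1 := by
    intro v
    refine analyticAt_const.sub (Finset.analyticAt_fun_sum _ fun a _ => ?_)
    split_ifs
    · exact (hu _).div (analyticAt_const.add (hu _)) (by simp)
    · exact analyticAt_const
  have hT : ∀ (d : X.V → ℝ) v w, ((X.colSum v₀)ᵀ * diagonal d * X.colSum v₀) v w =
      ∑ i, (X.colSum v₀)ᵀ v i * d i * X.colSum v₀ i w := by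
    intro d v w
    rw [Matrix.mul_apply]
    simp only [mul_diagonal]
  simp only [normMat, of_apply, gram, hT]
  refine AnalyticAt.add (AnalyticAt.mul ?_ ?_) ?_
  · exact Finset.analyticAt_fun_sum _ fun i _ =>
      (analyticAt_const.mul (hd _)).mul analyticAt_const
  · split_ifs
    · exact analyticAt_const
    · exact analyticAt_id.sub analyticAt_const
  · refine Finset.analyticAt_fun_sum _ fun e _ => AnalyticAt.mul ?_ analyticAt_const
    refine ((hu e).div (hq e) ?_).neg
    rw [quot_one]
    have := hx e
    positivity

lemma analyticAt_zetaMInv (X : SerreGraph) (x : X.Edge → ℝ) :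
    AnalyticAt ℝ (fun s => X.zetaMInv x s) 1 := by
  refine analyticAt_det _ _ fun a b => ?_
  simp only [Matrix.sub_apply, of_apply]
  refine analyticAt_const.sub ?_
  split_ifs
  · exact analyticAt_rpow_one _
  · exact analyticAt_const

lemma genus_add (X : SerreGraph) (hX : X.Connected) (v₀ : X.V) :
    X.genus + Fintype.card {v : X.V // v ≠ v₀} = Fintype.card X.Edge := by
  have h1 := X.card_le hX
  have h2 := X.card_ne v₀
  rw [genus]
  omega

/-- The factor `s - 1` occurs once for each edge in the product of `bass`, and is lost once for
each vertex other than `v₀` in the determinant; this leaves the exponent `|E| - |V| + 1 = g`. -/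
lemma zetaMInv_eventuallyEq (X : SerreGraph) (hX : X.Connected) (x : X.Edge → ℝ)
    (hx : ∀ e, 0 < x e) (v₀ : X.V) :
    (fun s => X.zetaMInv x s) =ᶠ[𝓝 1] fun s => (s - 1) ^ X.genus * X.cofactor x v₀ s := by
  have hcof := X.analyticAt_cofactor x hx v₀
  have hR : ContinuousAt (fun s => (s - 1) ^ X.genus * X.cofactor x v₀ s) 1 :=
    ((continuousAt_id.sub continuousAt_const).pow _).mul hcof.continuousAt
  -- both sides are continuous at `1`, so the points `s ≠ 1`, where one may divide, suffice
  refine (ContinuousAt.eventuallyEq_nhds_iff_eventuallyEq_nhdsNE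
    (X.analyticAt_zetaMInv x).continuousAt hR).1 ?_
  have hq : ∀ᶠ s in 𝓝[≠] (1 : ℝ), ∀ e, quot (x e) s ≠ 0 := by
    refine eventually_nhdsWithin_of_eventually_nhds (eventually_all.2 fun e => ?_)
    refine (analyticAt_quot (x e)).continuousAt.eventually_ne ?_
    rw [quot_one]
    have := hx e
    positivity
  filter_upwards [hq, self_mem_nhdsWithin] with s hs hs1
  have hs0 : s - 1 ≠ 0 := sub_ne_zero.2 hs1
  have h1 : ∀ e, 1 - (s ^ x e) ^ 2 = (s - 1) * -quot (x e) s := by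
    intro e
    linear_combination quot_mul (x e) s
  have hne : ∀ e, 1 - (s ^ x e) ^ 2 ≠ 0 := by
    intro e
    rw [h1]
    exact mul_ne_zero hs0 (neg_ne_zero.2 (hs e))
  have h2 : (fun e => -(s ^ x e / quot (x e) s)) =
      fun e => (s - 1) * (s ^ x e / (1 - (s ^ x e) ^ 2)) := by
    ext e
    have := hs e
    rw [h1]
    field_simp
  have h3 := X.bass (fun e => s ^ x e) hne
  rw [zetaMInv, h3, cofactor, h2, det_normMat]
  simp only [h1, Finset.prod_mul_distrib, Finset.prod_const, Finset.card_univ]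
  rw [← X.genus_add hX v₀, pow_add]
  ring

/-- At `s = 1` the diagonal entry at a vertex of valency `n` is `1 - n / 2`. -/
lemma sum_diagPart_one (X : SerreGraph) (hX : X.Connected) :
    ∑ v, X.diagPart (fun _ => 1) v = 1 - (X.genus : ℝ) := by
  obtain ⟨v₀⟩ := hX.1
  have h1 : (X.genus : ℝ) + Fintype.card {v : X.V // v ≠ v₀} = Fintype.card X.Edge := by
    exact_mod_cast X.genus_add hX v₀
  have h2 : (Fintype.card {v : X.V // v ≠ v₀} : ℝ) + 1 = Fintype.card X.V := by
    exact_mod_cast X.card_ne v₀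
  simp only [diagPart, Finset.sum_sub_distrib]
  rw [Finset.sum_comm]
  simp only [Finset.sum_ite_eq, Finset.mem_univ, if_true, sum_half]
  norm_num
  linarith

lemma cofactor_one (X : SerreGraph) (hX : X.Connected) (x : X.Edge → ℝ)
    (hx : ∀ e, 0 < x e) (v₀ : X.V) :
    X.cofactor x v₀ 1 = 2 ^ X.genus * (-1 : ℝ) ^ (X.genus + 1) *
        ((X.genus : ℝ) - 1) * MvPolynomial.eval x (X.jacobianPoly ℝ) := by
  have h1 : MvPolynomial.eval x (X.jacobianPoly ℝ) =
      ∑ T ∈ X.spanningTrees, ∏ e ∈ Tᶜ, x e := by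
    simp [jacobianPoly]
  have h2 : ∀ T ∈ X.spanningTrees, (∏ e, -(2 * x e)) * ∏ e ∈ T, -(1 / (2 * x e)) =
      (-2) ^ X.genus * ∏ e ∈ Tᶜ, x e := by
    intro T hT
    have hT' : X.IsSpanningTree T := by simpa [spanningTrees] using hT
    have hcard : Tᶜ.card = X.genus := by
      rw [Finset.card_compl, genus, ← hT'.2]
      omega
    rw [← Finset.prod_mul_prod_compl T, mul_right_comm, ← Finset.prod_mul_distrib,
      Finset.prod_eq_one, one_mul, ← hcard, ← Finset.prod_const, ← Finset.prod_mul_distrib]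
    · exact Finset.prod_congr rfl fun e _ => by ring
    · intro e _
      have := (hx e).ne'
      field_simp
  rw [cofactor, sub_self, det_normMat_zero]
  simp only [Real.one_rpow, quot_one]
  rw [X.sum_diagPart_one hX, mul_left_comm, Finset.mul_sum, Finset.sum_congr rfl h2,
    ← Finset.mul_sum, h1, neg_pow (2 : ℝ)]
  ring

end SerreGraph

open SerreGraph in
/-- **Proposition.** For a finite connected graph `X` of genus `g`, the reciprocal of the
metric zeta function has Taylor expansion
`ζ_M(s, x_e, X)⁻¹ = 2^g (-1)^{g+1} (g-1) J_X(x_e) (s-1)^g + O((s-1)^{g+1})` at `s = 1`: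
its derivatives in `s` at `s = 1` vanish to order `g - 1`, and its `g`-th derivative equals
`g! · 2^g · (-1)^{g+1} · (g-1) · J_X(x_e)`, identically in the edge lengths `x_e`. -/
theorem zetaMInv_taylor_at_one (X : SerreGraph) (hX : X.Connected)
    (x : X.Edge → ℝ) (hx : ∀ e, 0 < x e) :
    (∀ k < X.genus, iteratedDeriv k (fun s => X.zetaMInv x s) 1 = 0) ∧
    iteratedDeriv X.genus (fun s => X.zetaMInv x s) 1 =
      (Nat.factorial X.genus : ℝ) * 2 ^ X.genus * (-1 : ℝ) ^ (X.genus + 1) *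
        ((X.genus : ℝ) - 1) * MvPolynomial.eval x (X.jacobianPoly ℝ) := by
  obtain ⟨v₀⟩ := hX.1
  obtain ⟨h1, h2⟩ := iteratedDeriv_of_factor X.genus _ _ (X.analyticAt_cofactor x hx v₀)
    (X.zetaMInv_eventuallyEq hX x hx v₀)
  refine ⟨h1, ?_⟩
  rw [h2, X.cofactor_one hX x hx v₀]
  ring
end
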